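/- Assume the stated hypotheses on Ω and u, and let a ∈ ∂Ω be a GBU point. Then liminf_{r→0⁺} r^β |u_ν(a + r ν_a, T)| ≥ d_p, where u_ν(x,T) = ∇u(x,T)·ν(x) is defined for x ∈ Ω_{δ₀} since u is C² in space on Ω up to time T. -/

import Mathlib

open Set Metric Filter RealInnerProductSpace

noncomputable section

/-- A set `Ω ⊆ ℝⁿ` has boundary of class `C²`: near each boundary point, `Ω` is the strict
sublevel set of a `C²` function with nonvanishing gradient (equivalently, after a rigid motion,
the boundary is locally the graph of a `C²` function with `Ω` strictly on one side). -/
def IsC2Boundary {n : ℕ} (Ω : Set (EuclideanSpace ℝ (Fin n))) : Prop :=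
  ∀ x ∈ frontier Ω, ∃ f : EuclideanSpace ℝ (Fin n) → ℝ, ∃ U ∈ nhds x,
    ContDiffOn ℝ 2 f U ∧ (∀ y ∈ U, fderiv ℝ f y ≠ 0) ∧
    U ∩ Ω = U ∩ {y | f y < 0} ∧ U ∩ frontier Ω = U ∩ {y | f y = 0}

/-!
Rescaling `u(·, T)` and `u(·, t)` for `t` close to `T` by a small factor `r` turns the equation
into `|Δv + ‖∇v‖ ^ p| ≤ τ` on a domain whose boundary has curvature at most `τ`, with `τ → 0` as
`r → 0`; everything then happens at unit distance from an almost flat boundary. The gradient bound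
gives `|v| ≤ C δ ^ (1 - β) / (1 - β)`, and a maximum principle for the difference of `v` and its
tangential translates shows that `v` is almost constant along `{δ = 1}`, so that `v` can be
compared with one-dimensional barriers. If `v` exceeded the profile `c_p δ ^ (1 - β)` at height
`1`, a subsolution with infinite slope at the boundary would lie below it, which is impossible for
`t < T`, when `∇v` is still bounded. If `v` fell below the profile, a supersolution with finite
slope would give `|v| ≤ K δ` near `a` with `K` independent of `t < T`, and interior gradient
estimates, proved by Brandt's comparison argument, would turn this into a bound on `∇v`, so that
`a` would not be a blow-up point. Hence `u(·, T) ∼ c_p δ ^ (1 - β)` near the normal at `a`, and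
the same interior estimate, applied to the difference with the linearized profile, passes to the
gradient.
-/

section Laplacian

open Topology

variable {E : Type*} [NormedAddCommGroup E] [InnerProductSpace ℝ E]

/-- `w` is differentiable near `x` and twice differentiable at `x`, with gradient `g` and
Laplacian `L` there. Like `HasDerivAt`, this is a relation, so that no junk values arise. The
derivative of `w` is written with `innerSL` rather than as a `HasGradientAt` because the latter
needs an instance of completeness. -/
def HasLaplacianAt (w : E → ℝ) (g : E) (L : ℝ) (x : E) : Prop :=
  ∃ (G : E → E) (H : E →L[ℝ] E), (∀ᶠ y in 𝓝 x, HasFDerivAt w (innerSL ℝ (G y)) y) ∧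
    HasFDerivAt G H x ∧ G x = g ∧ LinearMap.trace ℝ E H = L

namespace HasLaplacianAt

variable {w w₁ w₂ : E → ℝ} {g g₁ g₂ x : E} {L L₁ L₂ : ℝ}

theorem hasFDerivAt (h : HasLaplacianAt w g L x) : HasFDerivAt w (innerSL ℝ g) x := by
  obtain ⟨G, H, hG, -, rfl, -⟩ := h
  exact hG.self_of_nhds

theorem continuousAt (h : HasLaplacianAt w g L x) : ContinuousAt w x :=
  h.hasFDerivAt.continuousAt

theorem add (h₁ : HasLaplacianAt w₁ g₁ L₁ x) (h₂ : HasLaplacianAt w₂ g₂ L₂ x) :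
    HasLaplacianAt (fun y => w₁ y + w₂ y) (g₁ + g₂) (L₁ + L₂) x := by
  obtain ⟨G₁, H₁, hG₁, hH₁, rfl, rfl⟩ := h₁
  obtain ⟨G₂, H₂, hG₂, hH₂, rfl, rfl⟩ := h₂
  refine ⟨fun y => G₁ y + G₂ y, H₁ + H₂, ?_, hH₁.add hH₂, rfl, by simp⟩
  filter_upwards [hG₁, hG₂] with y h₁ h₂
  rw [map_add]
  exact h₁.add h₂

theorem const_mul (c : ℝ) (h : HasLaplacianAt w g L x) :
    HasLaplacianAt (fun y => c * w y) (c • g) (c * L) x := by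
  obtain ⟨G, H, hG, hH, rfl, rfl⟩ := h
  refine ⟨fun y => c • G y, c • H, ?_, hH.const_smul c, rfl, by simp⟩
  filter_upwards [hG] with y h
  simpa using h.const_mul c

theorem neg (h : HasLaplacianAt w g L x) : HasLaplacianAt (fun y => -w y) (-g) (-L) x := by
  simpa using h.const_mul (-1)

theorem sub (h₁ : HasLaplacianAt w₁ g₁ L₁ x) (h₂ : HasLaplacianAt w₂ g₂ L₂ x) :
    HasLaplacianAt (fun y => w₁ y - w₂ y) (g₁ - g₂) (L₁ - L₂) x := by
  simpa only [sub_eq_add_neg] using h₁.add h₂.neg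

theorem const (c : ℝ) (x : E) : HasLaplacianAt (fun _ => c) 0 0 x :=
  ⟨fun _ => 0, 0, .of_forall fun y => by simpa using hasFDerivAt_const c y,
    hasFDerivAt_const _ _, rfl, by simp⟩

theorem inner_sub (ν z x : E) : HasLaplacianAt (fun y => ⟪y - z, ν⟫) ν 0 x := by
  refine ⟨fun _ => ν, 0, .of_forall fun y => ?_, hasFDerivAt_const _ _, rfl, by simp⟩
  have h := (innerSL ℝ ν).hasFDerivAt.comp y ((hasFDerivAt_id y).sub_const z)
  exact h.congr_of_eventuallyEq (.of_forall fun y => real_inner_comm _ _)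

theorem eq_zero_of_isLocalMax (h : HasLaplacianAt w g L x) (hmax : IsLocalMax w x) : g = 0 := by
  simpa using DFunLike.congr_fun (hmax.hasFDerivAt_eq_zero h.hasFDerivAt) g

theorem comp_similarity (R : E ≃ₗᵢ[ℝ] E) (r : ℝ) (c : E)
    (h : HasLaplacianAt w g L (r • R x + c)) :
    HasLaplacianAt (fun y => w (r • R y + c)) (r • R.symm g) (r ^ 2 * L) x := by
  obtain ⟨G, H, hG, hH, rfl, rfl⟩ := h
  let A : E →L[ℝ] E := R.toContinuousLinearEquiv
  let A' : E →L[ℝ] E := R.symm.toContinuousLinearEquiv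
  have hA : ∀ y, HasFDerivAt (fun y => r • R y + c) (r • A) y := fun y =>
    (A.hasFDerivAt.const_smul r).add_const c
  refine ⟨fun y => r • A' (G (r • R y + c)), r • A'.comp (H.comp (r • A)), ?_,
    (A'.hasFDerivAt.comp x (hH.comp x (hA x))).const_smul r, rfl, ?_⟩
  · filter_upwards [(hA x).continuousAt.eventually hG] with y hy
    refine (hy.comp y (hA y)).congr_fderiv ?_
    ext v
    simp [A, A', R.symm.inner_map_eq_flip]
  · have hconj : ((A'.comp (H.comp A) : E →L[ℝ] E) : E →ₗ[ℝ] E) =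
        R.symm.toLinearEquiv.conj (H : E →ₗ[ℝ] E) := by
      ext v
      simp [A, A', LinearEquiv.conj_apply]
    have htrace := congrArg (LinearMap.trace ℝ E) hconj
    rw [LinearMap.trace_conj'] at htrace
    rw [ContinuousLinearMap.comp_smul, ContinuousLinearMap.comp_smul, smul_smul, ← pow_two,
      ContinuousLinearMap.toLinearMap_smul, map_smul, htrace, smul_eq_mul]

theorem comp_add_right (c : E) (h : HasLaplacianAt w g L (x + c)) :
    HasLaplacianAt (fun y => w (y + c)) g L x := by
  have hcomp := comp_similarity (x := x) (.refl ℝ E) 1 c (by simpa using h)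
  simp only [LinearIsometryEquiv.coe_refl, id_eq, one_smul, one_pow, one_mul] at hcomp
  exact hcomp

variable [FiniteDimensional ℝ E]

theorem norm_sub_sq (z x : E) :
    HasLaplacianAt (fun y => ‖y - z‖ ^ 2) ((2 : ℝ) • (x - z)) (2 * Module.finrank ℝ E) x := by
  refine ⟨fun y => (2 : ℝ) • (y - z), (2 : ℝ) • ContinuousLinearMap.id ℝ E,
    .of_forall fun y => ?_, ((hasFDerivAt_id x).sub_const z).const_smul (2 : ℝ), rfl, by simp⟩
  refine ((hasFDerivAt_id y).sub_const z).norm_sq.congr_fderiv ?_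
  ext v
  simp [two_smul]

theorem comp {F F' : ℝ → ℝ} {F'' : ℝ} (h : HasLaplacianAt w g L x)
    (hF : ∀ᶠ s in 𝓝 (w x), HasDerivAt F (F' s) s) (hF' : HasDerivAt F' F'' (w x)) :
    HasLaplacianAt (fun y => F (w y)) (F' (w x) • g) (F'' * ‖g‖ ^ 2 + F' (w x) * L) x := by
  have hw := h.hasFDerivAt
  obtain ⟨G, H, hG, hH, rfl, rfl⟩ := h
  refine ⟨fun y => F' (w y) • G y, _, ?_, (hF'.comp_hasFDerivAt x hw).smul hH, rfl, ?_⟩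
  · filter_upwards [hG, hw.continuousAt.eventually hF] with y hy hFy
    exact (hFy.comp_hasFDerivAt y hy).congr_fderiv (map_smul _ _ _).symm
  · simp [add_comm]

end HasLaplacianAt

theorem nonpos_of_isLocalMax_of_hasDerivAt {f f' : ℝ → ℝ} {f'' s : ℝ} (hmax : IsLocalMax f s)
    (hf : ∀ᶠ t in 𝓝 s, HasDerivAt f (f' t) t) (hf' : HasDerivAt f' f'' s) : f'' ≤ 0 := by
  by_contra! hpos
  have hderiv : deriv (deriv f) s = f'' := by
    rw [EventuallyEq.deriv_eq (hf.mono fun t ht => ht.deriv), hf'.deriv]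
  have hmin : IsLocalMin f s := isLocalMin_of_deriv_deriv_pos (by rwa [hderiv])
    hmax.deriv_eq_zero hf.self_of_nhds.continuousAt
  have hconst : f =ᶠ[𝓝 s] fun _ => f s := by
    filter_upwards [hmax, hmin] with t h₁ h₂ using le_antisymm h₁ h₂
  have hzero : deriv (deriv f) s = 0 := by simp [hconst.deriv.deriv_eq]
  linarith

namespace HasLaplacianAt

variable [FiniteDimensional ℝ E] {w : E → ℝ} {g x : E} {L : ℝ}

theorem nonpos_of_isLocalMax (h : HasLaplacianAt w g L x) (hmax : IsLocalMax w x) : L ≤ 0 := by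
  obtain ⟨G, H, hG, hH, rfl, rfl⟩ := h
  rw [LinearMap.trace_eq_sum_inner _ (stdOrthonormalBasis ℝ E)]
  refine Finset.sum_nonpos fun i _ => ?_
  set e := stdOrthonormalBasis ℝ E i
  have hline : ∀ s : ℝ, HasDerivAt (fun s : ℝ => x + s • e) e s := fun s => by
    simpa using ((hasDerivAt_id s).smul_const e).const_add x
  have htend : Tendsto (fun s : ℝ => x + s • e) (𝓝 0) (𝓝 x) := by
    simpa [ContinuousAt] using (hline 0).continuousAt
  have hH' : HasFDerivAt G H (x + (0 : ℝ) • e) := by simpa using hH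
  refine nonpos_of_isLocalMax_of_hasDerivAt (f := fun s : ℝ => w (x + s • e))
    (f' := fun s : ℝ => ⟪e, G (x + s • e)⟫) (s := 0) ?_ ?_ ?_
  · simpa [IsLocalMax, IsMaxFilter] using htend.eventually hmax
  · filter_upwards [htend.eventually hG] with s hs
    rw [real_inner_comm]
    exact hs.comp_hasDerivAt s (hline s)
  · simpa using (hasDerivAt_const (0 : ℝ) e).inner ℝ (hH'.comp_hasDerivAt (0 : ℝ) (hline 0))

end HasLaplacianAt

end Laplacian

section InteriorGradientEstimate

open Topology

theorem deriv_le_deriv_of_le_right {f q : ℝ → ℝ} {f' q' s ρ : ℝ} (hf : HasDerivAt f f' s)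
    (hq : HasDerivAt q q' s) (heq : f s = q s) (hρ : 0 < ρ)
    (hle : ∀ t ∈ Ioo 0 ρ, f (s + t) ≤ q (s + t)) : f' ≤ q' := by
  refine sub_nonneg.1 (ge_of_tendsto (hq.sub hf).tendsto_slope_zero_right ?_)
  filter_upwards [Ioo_mem_nhdsGT hρ] with t ht
  simp only [Pi.sub_apply, heq, sub_self, sub_zero]
  exact mul_nonneg (inv_nonneg.2 ht.1.le) (sub_nonneg.2 (hle t ht))

variable {E : Type*} [NormedAddCommGroup E] [InnerProductSpace ℝ E]

/-- The comparison function of Brandt's reflection argument: on the half ball of radius `ρ` in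
direction `e` its Laplacian is the constant `-N`, and it dominates `S` on the spherical part of
the boundary. -/
def halfBallBarrier (e : E) (ρ S N : ℝ) (y : E) : ℝ :=
  S / ρ ^ 2 * (‖y‖ ^ 2 + Module.finrank ℝ E * (⟪y, e⟫ * (ρ - ⟪y, e⟫))) +
    N / 2 * (⟪y, e⟫ * (ρ - ⟪y, e⟫))

variable {e : E} {ρ S N : ℝ}

theorem inner_mul_sub_inner_nonneg (he : ‖e‖ = 1) {y : E} (hy : ‖y‖ ≤ ρ) (hye : 0 ≤ ⟪y, e⟫) :
    0 ≤ ⟪y, e⟫ * (ρ - ⟪y, e⟫) := by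
  have hle : ⟪y, e⟫ ≤ ‖y‖ := by simpa [he] using real_inner_le_norm y e
  exact mul_nonneg hye (by linarith)

theorem inner_le_of_le_halfBallBarrier {F : E → ℝ} {g : E} (he : ‖e‖ = 1) (hρ : 0 < ρ)
    (hF : HasFDerivAt F (innerSL ℝ g) 0) (hF0 : F 0 = 0)
    (hle : ∀ y, ‖y‖ ≤ ρ → 0 ≤ ⟪y, e⟫ → F y ≤ halfBallBarrier e ρ S N y) :
    ⟪g, e⟫ ≤ Module.finrank ℝ E * S / ρ + N * ρ / 2 := by
  have hline : HasDerivAt (fun s : ℝ => s • e) e 0 := by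
    simpa using (hasDerivAt_id (0 : ℝ)).smul_const e
  have hFline : HasDerivAt (fun s : ℝ => F (s • e)) ⟪g, e⟫ 0 := by
    rw [← zero_smul ℝ e] at hF
    exact hF.comp_hasDerivAt 0 hline
  have hψline : HasDerivAt (fun s : ℝ => S / ρ ^ 2 * (s ^ 2 + Module.finrank ℝ E *
      (s * (ρ - s))) + N / 2 * (s * (ρ - s))) (Module.finrank ℝ E * S / ρ + N * ρ / 2) 0 := by
    have hprod := (hasDerivAt_id (0 : ℝ)).mul ((hasDerivAt_id (0 : ℝ)).const_sub ρ)
    refine (((((hasDerivAt_id (0 : ℝ)).pow 2).add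
      (hprod.const_mul (Module.finrank ℝ E : ℝ))).const_mul (S / ρ ^ 2)).add
      (hprod.const_mul (N / 2))).congr_deriv ?_
    simp
    field_simp
  refine deriv_le_deriv_of_le_right hFline hψline (by simp [hF0]) hρ fun s hs => ?_
  have hinner : ⟪s • e, e⟫ = s := by simp [inner_smul_left, he]
  have hnorm : ‖s • e‖ = s := by simp [norm_smul, he, abs_of_pos hs.1]
  have := hle (s • e) (by rw [hnorm]; exact hs.2.le) (by rw [hinner]; exact hs.1.le)
  simpa only [zero_add, halfBallBarrier, hinner, hnorm] using this

variable [FiniteDimensional ℝ E]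

theorem hasLaplacianAt_halfBallBarrier (he : ‖e‖ = 1) (y : E) :
    ∃ g, HasLaplacianAt (halfBallBarrier e ρ S N) g (-N) y := by
  have hquad : ∀ s : ℝ, HasDerivAt (fun s => s * (ρ - s)) (ρ - 2 * s) s := fun s =>
    ((hasDerivAt_id s).mul ((hasDerivAt_id s).const_sub ρ)).congr_deriv (by simp; ring)
  have hlin : ∀ s : ℝ, HasDerivAt (fun s => ρ - 2 * s) (-2) s := fun s => by
    simpa using ((hasDerivAt_id s).const_mul 2).const_sub ρ
  have hprod := (HasLaplacianAt.inner_sub e 0 y).comp (.of_forall hquad) (hlin _)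
  have hsq := HasLaplacianAt.norm_sub_sq (0 : E) y
  have hsum := (hsq.const_mul (S / ρ ^ 2)).add
    (hprod.const_mul (S / ρ ^ 2 * Module.finrank ℝ E + N / 2))
  have hfun : halfBallBarrier e ρ S N = fun y => S / ρ ^ 2 * ‖y - 0‖ ^ 2 +
      (S / ρ ^ 2 * Module.finrank ℝ E + N / 2) * (⟪y - 0, e⟫ * (ρ - ⟪y - 0, e⟫)) := by
    funext y
    simp only [halfBallBarrier, sub_zero]
    ring
  rw [hfun, show -N = S / ρ ^ 2 * (2 * Module.finrank ℝ E) +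
    (S / ρ ^ 2 * Module.finrank ℝ E + N / 2) *
      (-2 * ‖e‖ ^ 2 + (ρ - 2 * ⟪y - 0, e⟫) * 0) by rw [he]; ring]
  exact ⟨_, hsum⟩

theorem le_halfBallBarrier {F : E → ℝ} {g : E → E} {L : E → ℝ} (he : ‖e‖ = 1) (hρ : 0 < ρ)
    (hN : 0 ≤ N) (hF : ∀ y ∈ closedBall 0 ρ, HasLaplacianAt F (g y) (L y) y)
    (hFS : ∀ y ∈ closedBall 0 ρ, F y ≤ S) (hL : ∀ y ∈ closedBall 0 ρ, -N < L y)
    (hF0 : ∀ y, ⟪y, e⟫ = 0 → F y = 0) {y : E} (hy : ‖y‖ ≤ ρ) (hye : 0 ≤ ⟪y, e⟫) :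
    F y ≤ halfBallBarrier e ρ S N y := by
  have hS : 0 ≤ S := (hF0 0 (inner_zero_left _)).symm.le.trans (hFS 0 (by simpa using hρ.le))
  let f : E → ℝ := fun y => F y - halfBallBarrier e ρ S N y
  have hf : ∀ y ∈ closedBall 0 ρ, ∃ g, HasLaplacianAt f g (L y + N) y := fun y hy => by
    obtain ⟨g', hψ⟩ := hasLaplacianAt_halfBallBarrier (ρ := ρ) (S := S) (N := N) he y
    exact ⟨_, by simpa using (hF y hy).sub hψ⟩
  have hcompact : IsCompact (closedBall (0 : E) ρ ∩ {y | 0 ≤ ⟪y, e⟫}) :=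
    (isCompact_closedBall _ _).inter_right (isClosed_le continuous_const (by fun_prop))
  obtain ⟨z, ⟨hzρ, hze⟩, hmax⟩ := hcompact.exists_isMaxOn ⟨y, by simpa using hy, hye⟩
    fun y hy => (hf y hy.1).choose_spec.continuousAt.continuousWithinAt
  suffices f z ≤ 0 from sub_nonpos.1 ((hmax ⟨by simpa using hy, hye⟩).trans this)
  have hz : ‖z‖ ≤ ρ := by simpa using hzρ
  have hprod := inner_mul_sub_inner_nonneg he hz hze
  rcases hz.lt_or_eq with hlt | heq
  · rcases (show 0 ≤ ⟪z, e⟫ from hze).lt_or_eq with hpos | hzero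
    · have hloc : IsLocalMax f z := by
        filter_upwards [isOpen_ball.mem_nhds (show z ∈ ball 0 ρ by simpa using hlt),
          (isOpen_lt (g := fun y : E => ⟪y, e⟫) continuous_const (by fun_prop)).mem_nhds hpos]
          with y hy hye using hmax ⟨ball_subset_closedBall hy, le_of_lt hye⟩
      obtain ⟨g', hg'⟩ := hf z hzρ
      linarith [hg'.nonpos_of_isLocalMax hloc, hL z hzρ]
    · simp only [f, hF0 z hzero.symm, halfBallBarrier, ← hzero, zero_mul, mul_zero, add_zero,
        zero_sub, neg_nonpos]
      positivity
  · have hdom : halfBallBarrier e ρ S N z = S + (S / ρ ^ 2 * Module.finrank ℝ E + N / 2) *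
        (⟪z, e⟫ * (ρ - ⟪z, e⟫)) := by
      rw [halfBallBarrier, heq]
      field_simp
      ring
    have : 0 ≤ (S / ρ ^ 2 * Module.finrank ℝ E + N / 2) * (⟪z, e⟫ * (ρ - ⟪z, e⟫)) := by
      positivity
    simp only [f, hdom]
    linarith [hFS z hzρ]

-- Brandt's argument: compare the odd part of `w` with respect to the hyperplane `eᗮ` with the
-- barrier on a half ball.
theorem inner_gradient_le {w : E → ℝ} {g : E → E} {L : E → ℝ} {x : E} (he : ‖e‖ = 1)
    (hρ : 0 < ρ) (hw : ∀ y ∈ closedBall x ρ, HasLaplacianAt w (g y) (L y) y)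
    (hS : ∀ y ∈ closedBall x ρ, |w y| ≤ S) (hN : ∀ y ∈ closedBall x ρ, |L y| ≤ N) :
    ⟪g x, e⟫ ≤ Module.finrank ℝ E * S / ρ + N * ρ / 2 := by
  let R : E ≃ₗᵢ[ℝ] E := (ℝ ∙ e)ᗮ.reflection
  have hRe : R e = -e := Submodule.reflection_orthogonalComplement_singleton_eq_neg e
  have hmem : ∀ y ∈ closedBall (0 : E) ρ, y + x ∈ closedBall x ρ := fun y hy => by
    simpa using hy
  have hRmem : ∀ y ∈ closedBall (0 : E) ρ, R y ∈ closedBall (0 : E) ρ := fun y hy => by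
    simpa using hy
  let F : E → ℝ := fun y => 1 / 2 * (w (y + x) - w (R y + x))
  have hF : ∀ y ∈ closedBall (0 : E) ρ, HasLaplacianAt F
      ((1 / 2 : ℝ) • (g (y + x) - R.symm (g (R y + x))))
      (1 / 2 * (L (y + x) - L (R y + x))) y := fun y hy => by
    have h₁ := (hw _ (hmem y hy)).comp_add_right
    have h₂ := HasLaplacianAt.comp_similarity (x := y) R 1 x
      (by simpa using hw _ (hmem _ (hRmem y hy)))
    simpa [F] using (h₁.sub h₂).const_mul (1 / 2)
  have h0 : (0 : E) ∈ closedBall 0 ρ := by simpa using hρ.le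
  have hN0 : 0 ≤ N := (abs_nonneg _).trans (hN x (by simpa using hρ.le))
  have hgrad : ⟪(1 / 2 : ℝ) • (g (0 + x) - R.symm (g (R 0 + x))), e⟫ = ⟪g x, e⟫ := by
    rw [inner_smul_left, inner_sub_left, R.symm.inner_map_eq_flip, R.symm_symm, hRe]
    simp
    ring
  refine le_of_forall_pos_le_add fun ε hε => ?_
  have hbound : ∀ y, ‖y‖ ≤ ρ → 0 ≤ ⟪y, e⟫ →
      F y ≤ halfBallBarrier e ρ S (N + 2 * ε / ρ) y := fun y hy hye => by
    have hε' : 0 < 2 * ε / ρ := by positivity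
    refine le_halfBallBarrier he hρ (by positivity) hF (fun y hy => ?_) (fun y hy => ?_)
      (fun y hy => ?_) hy hye
    · dsimp only [F]
      linarith [(abs_le.1 (hS _ (hmem y hy))).2, (abs_le.1 (hS _ (hmem _ (hRmem y hy)))).1]
    · linarith [(abs_le.1 (hN _ (hmem y hy))).1, (abs_le.1 (hN _ (hmem _ (hRmem y hy)))).2]
    · have : R y = y := Submodule.reflection_mem_subspace_eq_self
        (Submodule.mem_orthogonal_singleton_iff_inner_left.2 hy)
      simp [F, this]
  have := inner_le_of_le_halfBallBarrier he hρ (hF 0 h0).hasFDerivAt (by simp [F]) hbound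
  rw [hgrad] at this
  refine this.trans_eq ?_
  field_simp
  ring

theorem norm_gradient_le_of_hasLaplacianAt {w : E → ℝ} {g : E → E} {L : E → ℝ} {x : E}
    (hρ : 0 < ρ) (hw : ∀ y ∈ closedBall x ρ, HasLaplacianAt w (g y) (L y) y)
    (hS : ∀ y ∈ closedBall x ρ, |w y| ≤ S) (hN : ∀ y ∈ closedBall x ρ, |L y| ≤ N) :
    ‖g x‖ ≤ Module.finrank ℝ E * S / ρ + N * ρ / 2 := by
  rcases eq_or_ne (g x) 0 with h0 | h0
  · have hx : x ∈ closedBall x ρ := by simpa using hρ.le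
    have hS0 : 0 ≤ S := (abs_nonneg _).trans (hS x hx)
    have hN0 : 0 ≤ N := (abs_nonneg _).trans (hN x hx)
    rw [h0, norm_zero]
    positivity
  · have hnorm : ‖g x‖ ≠ 0 := norm_ne_zero_iff.2 h0
    have he : ‖‖g x‖⁻¹ • g x‖ = 1 := by simp [norm_smul, hnorm]
    have hinner : ⟪g x, ‖g x‖⁻¹ • g x⟫ = ‖g x‖ := by
      rw [inner_smul_right, real_inner_self_eq_norm_sq]
      field_simp
    rw [← hinner]
    exact inner_gradient_le he hρ hw hS hN

end InteriorGradientEstimate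

section SmallParameters

theorem eventually_const_mul_rpow_lt (c : ℝ) {s ε : ℝ} (hs : 0 < s) (hε : 0 < ε) :
    ∀ᶠ τ in nhdsWithin (0 : ℝ) (Ioi 0), c * τ ^ s < ε := by
  have htend : Tendsto (fun τ : ℝ => c * τ ^ s) (nhdsWithin 0 (Ioi 0)) (nhds 0) :=
    tendsto_nhdsWithin_of_tendsto_nhds <|
      (continuous_const.mul (Real.continuous_rpow_const hs.le)).tendsto' _ _
        (by simp [Real.zero_rpow hs.ne'])
  exact htend.eventually_lt_const hε

theorem eventually_const_mul_lt (c : ℝ) {ε : ℝ} (hε : 0 < ε) :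
    ∀ᶠ τ in nhdsWithin (0 : ℝ) (Ioi 0), c * τ < ε := by
  simpa only [Real.rpow_one] using eventually_const_mul_rpow_lt c one_pos hε

theorem eventually_const_div_pow_lt (c : ℝ) {k : ℕ} (hk : k ≠ 0) {ε : ℝ} (hε : 0 < ε) :
    ∀ᶠ s : ℝ in atTop, c / s ^ k < ε :=
  (tendsto_const_nhds.div_atTop (tendsto_pow_atTop hk)).eventually_lt_const hε

theorem eventually_lt_inv (c : ℝ) : ∀ᶠ τ in nhdsWithin (0 : ℝ) (Ioi 0), c < τ⁻¹ := by
  filter_upwards [eventually_const_mul_lt c one_pos, self_mem_nhdsWithin] with τ hτ hpos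
  rwa [← one_div, lt_div_iff₀ hpos]

end SmallParameters

section RealAnalysis

theorem sub_rpow_le_mul_abs_sub {p a b m : ℝ} (hp : 1 ≤ p) (ha : 0 ≤ a) (hb : 0 ≤ b)
    (ham : a ≤ m) : a ^ p - b ^ p ≤ p * m ^ (p - 1) * |a - b| := by
  have hm : 0 ≤ m := ha.trans ham
  rcases le_total a b with hab | hab
  · have hpow : a ^ p ≤ b ^ p := Real.rpow_le_rpow ha hab (by linarith)
    have : 0 ≤ p * m ^ (p - 1) * |a - b| := by positivity
    linarith
  · have hderiv : ∀ s ∈ Icc b a, HasDerivWithinAt (fun s : ℝ => s ^ p) (p * s ^ (p - 1))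
        (Icc b a) s := fun s _ => (Real.hasDerivAt_rpow_const (.inr hp)).hasDerivWithinAt
    have hbound : ∀ s ∈ Icc b a, ‖p * s ^ (p - 1)‖ ≤ p * m ^ (p - 1) := fun s hs => by
      have hs0 : 0 ≤ s := hb.trans hs.1
      rw [Real.norm_of_nonneg (by positivity)]
      exact mul_le_mul_of_nonneg_left
        (Real.rpow_le_rpow hs0 (hs.2.trans ham) (by linarith)) (by linarith)
    exact (le_abs_self _).trans ((convex_Icc b a).norm_image_sub_le_of_norm_hasDerivWithin_le
      hderiv hbound (left_mem_Icc.2 hab) (right_mem_Icc.2 hab))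

theorem sub_le_sub_of_deriv_le_deriv {f f' B B' : ℝ → ℝ} {a b : ℝ} (hab : a ≤ b)
    (hf : ContinuousOn f (Icc a b)) (hf' : ∀ s ∈ Ioo a b, HasDerivAt f (f' s) s)
    (hB : ContinuousOn B (Icc a b)) (hB' : ∀ s ∈ Ioo a b, HasDerivAt B (B' s) s)
    (hle : ∀ s ∈ Ioo a b, f' s ≤ B' s) : f b - f a ≤ B b - B a := by
  have hderiv : ∀ s ∈ Ioo a b, HasDerivAt (B - f) (B' s - f' s) s := fun s hs =>
    (hB' s hs).sub (hf' s hs)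
  have hmono : MonotoneOn (B - f) (Icc a b) := by
    refine monotoneOn_of_deriv_nonneg (convex_Icc a b) (hB.sub hf) ?_ ?_ <;>
      rw [interior_Icc] <;> intro s hs
    · exact (hderiv s hs).differentiableAt.differentiableWithinAt
    · rw [(hderiv s hs).deriv]
      linarith [hle s hs]
  have := hmono (left_mem_Icc.2 hab) (right_mem_Icc.2 hab) hab
  simp only [Pi.sub_apply] at this
  linarith

/-- `β = 1 / (p - 1)` with `p > 2`, in a form free of division. -/
structure IsGBUExponent (p β : ℝ) : Prop where
  pos : 0 < β
  lt_one : β < 1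
  mul_sub_one : β * (p - 1) = 1

/-- The constant `d_p = β ^ β`: the one-dimensional stationary profile
`profileCoeff β * s ^ (1 - β)` has derivative `profileSlope β * s ^ (-β)`. -/
def profileSlope (β : ℝ) : ℝ := β ^ β

/-- The constant `c_p = β ^ β / (1 - β)` of the one-dimensional stationary profile, which solves
`-U'' = |U'| ^ p`. -/
def profileCoeff (β : ℝ) : ℝ := profileSlope β / (1 - β)

namespace IsGBUExponent

variable {p β s : ℝ}

theorem two_lt (h : IsGBUExponent p β) : 2 < p := by
  nlinarith [h.pos, h.lt_one, h.mul_sub_one]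

theorem mul_eq_add_one (h : IsGBUExponent p β) : β * p = β + 1 := by
  linarith [h.mul_sub_one]

theorem one_sub_pos (h : IsGBUExponent p β) : 0 < 1 - β := by
  linarith [h.lt_one]

theorem rpow_neg_rpow (h : IsGBUExponent p β) (hs : 0 ≤ s) : (s ^ (-β)) ^ p = s ^ (-β - 1) := by
  rw [← Real.rpow_mul hs]
  congr 1
  linarith [h.mul_eq_add_one]

theorem rpow_neg_rpow_sub_one (h : IsGBUExponent p β) (hs : 0 ≤ s) :
    (s ^ (-β)) ^ (p - 1) = s⁻¹ := by
  rw [← Real.rpow_mul hs, neg_mul, h.mul_sub_one, Real.rpow_neg_one]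

theorem profileSlope_pos (h : IsGBUExponent p β) : 0 < profileSlope β :=
  Real.rpow_pos_of_pos h.pos _

theorem profileSlope_rpow (h : IsGBUExponent p β) :
    profileSlope β ^ p = β * profileSlope β := by
  rw [profileSlope, ← Real.rpow_mul h.pos.le, h.mul_eq_add_one, Real.rpow_add_one h.pos.ne',
    mul_comm]

theorem profileCoeff_mul (h : IsGBUExponent p β) :
    profileCoeff β * (1 - β) = profileSlope β :=
  div_mul_cancel₀ _ h.one_sub_pos.ne'

theorem profileCoeff_pos (h : IsGBUExponent p β) : 0 < profileCoeff β :=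
  div_pos h.profileSlope_pos h.one_sub_pos

end IsGBUExponent

theorem hasDerivAt_const_mul_rpow_one_sub (c β : ℝ) {s : ℝ} (hs : 0 < s) :
    HasDerivAt (fun s : ℝ => c * s ^ (1 - β)) (c * (1 - β) * s ^ (-β)) s := by
  refine ((Real.hasDerivAt_rpow_const (.inl hs.ne')).const_mul c).congr_deriv ?_
  rw [show (1 : ℝ) - β - 1 = -β by ring]
  ring

end RealAnalysis

section BoundaryDistance

open Pointwise

variable {E : Type*} [NormedAddCommGroup E] {Ω : Set E} {x y : E}

/-- The distance `δ` to the boundary of `Ω`. -/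
def boundaryDist (Ω : Set E) (x : E) : ℝ := infDist x (frontier Ω)

notation "δ[" Ω "]" => boundaryDist Ω

theorem continuous_boundaryDist (Ω : Set E) : Continuous δ[Ω] :=
  continuous_infDist_pt _

theorem boundaryDist_le_add_norm_sub (Ω : Set E) (x y : E) : δ[Ω] x ≤ δ[Ω] y + ‖x - y‖ := by
  rw [← dist_eq_norm]
  exact infDist_le_infDist_add_dist

theorem boundaryDist_nonneg (Ω : Set E) (x : E) : 0 ≤ δ[Ω] x :=
  infDist_nonneg

theorem boundaryDist_eq_zero (hx : x ∈ frontier Ω) : δ[Ω] x = 0 :=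
  infDist_zero_of_mem hx

theorem boundaryDist_pos (hΩ : IsOpen Ω) (hne : (frontier Ω).Nonempty) (hx : x ∈ Ω) :
    0 < δ[Ω] x :=
  (isClosed_frontier.notMem_iff_infDist_pos hne).1 fun h => h.2 (by rwa [hΩ.interior_eq])

theorem mem_frontier_of_mem_closure_of_notMem (hΩ : IsOpen Ω) (hx : x ∈ closure Ω)
    (hxΩ : x ∉ Ω) : x ∈ frontier Ω :=
  ⟨hx, by rwa [hΩ.interior_eq]⟩

theorem boundaryDist_le_norm_sub_of_notMem [NormedSpace ℝ E] [FiniteDimensional ℝ E]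
    (hx : x ∈ Ω) (hy : y ∉ Ω) : δ[Ω] x ≤ ‖y - x‖ := by
  obtain ⟨z, hz, hxz⟩ := exists_mem_frontier_infDist_compl_eq_dist hx
    fun h => hy (h ▸ mem_univ y)
  calc δ[Ω] x ≤ dist x z := infDist_le_dist_of_mem hz
    _ = infDist x Ωᶜ := hxz.symm
    _ ≤ dist x y := infDist_le_dist_of_mem hy
    _ = ‖y - x‖ := by rw [dist_comm, dist_eq_norm]

theorem mem_and_abs_boundaryDist_sub_le [NormedSpace ℝ E] [FiniteDimensional ℝ E] {ρ : ℝ}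
    (hx : x ∈ Ω) (hρ : ρ < δ[Ω] x) (hy : y ∈ closedBall x ρ) :
    y ∈ Ω ∧ |δ[Ω] y - δ[Ω] x| ≤ ρ := by
  rw [mem_closedBall, dist_eq_norm] at hy
  refine ⟨?_, abs_le.2 ⟨?_, ?_⟩⟩
  · by_contra hyΩ
    linarith [boundaryDist_le_norm_sub_of_notMem hx hyΩ]
  · linarith [boundaryDist_le_add_norm_sub Ω x y, norm_sub_rev x y]
  · linarith [boundaryDist_le_add_norm_sub Ω y x]

theorem frontier_preimage_smul [NormedSpace ℝ E] {r : ℝ} (hr : r ≠ 0) (Ω : Set E) :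
    frontier ((r • ·) ⁻¹' Ω) = (r • ·) ⁻¹' frontier Ω :=
  ((Homeomorph.smulOfNeZero r hr).preimage_frontier Ω).symm

theorem closure_preimage_smul [NormedSpace ℝ E] {r : ℝ} (hr : r ≠ 0) (Ω : Set E) :
    closure ((r • ·) ⁻¹' Ω) = (r • ·) ⁻¹' closure Ω :=
  ((Homeomorph.smulOfNeZero r hr).preimage_closure Ω).symm

theorem boundaryDist_smul [NormedSpace ℝ E] {r : ℝ} (hr : 0 < r) (Ω : Set E) (x : E) :
    δ[Ω] (r • x) = r * δ[(r • ·) ⁻¹' Ω] x := by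
  have hsmul : frontier Ω = r • frontier ((r • ·) ⁻¹' Ω) := by
    rw [frontier_preimage_smul hr.ne', preimage_smul₀ hr.ne', smul_inv_smul₀ hr.ne']
  rw [boundaryDist, hsmul, infDist_smul₀ hr.ne', Real.norm_of_nonneg hr.le]
  rfl

theorem boundaryDist_preimage_inv_smul [NormedSpace ℝ E] {r : ℝ} (hr : 0 < r) (Ω : Set E) (x : E) :
    δ[(r • ·) ⁻¹' Ω] (r⁻¹ • x) = r⁻¹ * δ[Ω] x := by
  conv_rhs => rw [← smul_inv_smul₀ hr.ne' x, boundaryDist_smul hr, inv_mul_cancel_left₀ hr.ne']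

end BoundaryDistance

section QuasiStationary

variable {E : Type*} [NormedAddCommGroup E] [InnerProductSpace ℝ E]

/-- `Ω` is a bounded domain with inward unit normal `ν` along its boundary, and `κ` controls its
curvature: in the strip of width `κ⁻¹` along the boundary, normals do not meet and the distance
to the boundary differs from its affine approximations by at most `κ` times the squared
distance. This is all that is used of a `C²` boundary. -/
structure IsCollar (Ω : Set E) (ν : E → E) (κ : ℝ) : Prop where
  isOpen : IsOpen Ω
  isCompact_closure : IsCompact (closure Ω)
  frontier_nonempty : (frontier Ω).Nonempty
  curvature_pos : 0 < κ
  norm_normal : ∀ b ∈ frontier Ω, ‖ν b‖ = 1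
  add_smul_mem : ∀ b ∈ frontier Ω, ∀ s ∈ Ioo 0 κ⁻¹, b + s • ν b ∈ Ω
  boundaryDist_add_smul : ∀ b ∈ frontier Ω, ∀ s ∈ Ioo 0 κ⁻¹, δ[Ω] (b + s • ν b) = s
  exists_eq_add_smul : ∀ x ∈ Ω, δ[Ω] x < κ⁻¹ → ∃ b ∈ frontier Ω, x = b + δ[Ω] x • ν b
  abs_sub_affine_le : ∀ b ∈ frontier Ω, ∀ s ∈ Ioo 0 κ⁻¹, ∀ y ∈ closure Ω,
    |δ[Ω] y - s - ⟪y - (b + s • ν b), ν b⟫| ≤ κ * ‖y - (b + s • ν b)‖ ^ 2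

/-- `v` vanishes on the boundary of `Ω`, has gradient `g` and Laplacian `L` in `Ω`, solves
`Δv + |∇v|ᵖ = 0` up to an error `M`, and obeys the gradient bound with constant `C`. Time slices
of `u` are of this kind, the time derivative being the error. -/
structure IsQuasiStationary (Ω : Set E) (p β M C : ℝ) (v : E → ℝ) (g : E → E) (L : E → ℝ) :
    Prop where
  continuousOn : ContinuousOn v (closure Ω)
  eq_zero : ∀ b ∈ frontier Ω, v b = 0
  hasLaplacianAt : ∀ x ∈ Ω, HasLaplacianAt v (g x) (L x) x
  abs_residual_le : ∀ x ∈ Ω, |L x + ‖g x‖ ^ p| ≤ M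
  norm_gradient_le : ∀ x ∈ Ω, ‖g x‖ ≤ C * δ[Ω] x ^ (-β)

variable {Ω : Set E} {ν : E → E} {κ p β M C : ℝ} {v : E → ℝ} {g : E → E} {L : E → ℝ}

namespace IsCollar

theorem pos (h : IsCollar Ω ν κ) {x : E} (hx : x ∈ Ω) : 0 < δ[Ω] x :=
  boundaryDist_pos h.isOpen h.frontier_nonempty hx

theorem mem_of_boundaryDist_ne_zero (h : IsCollar Ω ν κ) {x : E} (hx : x ∈ closure Ω)
    (hδ : δ[Ω] x ≠ 0) : x ∈ Ω := by
  by_contra hxΩ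
  exact hδ (boundaryDist_eq_zero (mem_frontier_of_mem_closure_of_notMem h.isOpen hx hxΩ))

theorem mono (h : IsCollar Ω ν κ) {κ' : ℝ} (hκ : κ ≤ κ') : IsCollar Ω ν κ' := by
  have hinv : κ'⁻¹ ≤ κ⁻¹ := inv_anti₀ h.curvature_pos hκ
  have hsub : ∀ s ∈ Ioo 0 κ'⁻¹, s ∈ Ioo 0 κ⁻¹ := fun s hs => ⟨hs.1, hs.2.trans_le hinv⟩
  exact
  { isOpen := h.isOpen
    isCompact_closure := h.isCompact_closure
    frontier_nonempty := h.frontier_nonempty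
    curvature_pos := h.curvature_pos.trans_le hκ
    norm_normal := h.norm_normal
    add_smul_mem := fun b hb s hs => h.add_smul_mem b hb s (hsub s hs)
    boundaryDist_add_smul := fun b hb s hs => h.boundaryDist_add_smul b hb s (hsub s hs)
    exists_eq_add_smul := fun x hx hδ => h.exists_eq_add_smul x hx (hδ.trans_le hinv)
    abs_sub_affine_le := fun b hb s hs y hy =>
      (h.abs_sub_affine_le b hb s (hsub s hs) y hy).trans (by gcongr) }

theorem rescale (h : IsCollar Ω ν κ) {r : ℝ} (hr : 0 < r) :
    IsCollar ((r • ·) ⁻¹' Ω) (fun y => ν (r • y)) (r * κ) := by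
  have hδ : ∀ y, δ[(r • ·) ⁻¹' Ω] y = r⁻¹ * δ[Ω] (r • y) := fun y => by
    rw [boundaryDist_smul hr, inv_mul_cancel_left₀ hr.ne']
  have hfr : ∀ y, y ∈ frontier ((r • ·) ⁻¹' Ω) ↔ r • y ∈ frontier Ω := fun y => by
    rw [frontier_preimage_smul hr.ne', mem_preimage]
  have hwidth : ∀ s < (r * κ)⁻¹, r * s < κ⁻¹ := fun s hs => by
    have hlt := mul_lt_mul_of_pos_left hs hr
    rwa [mul_inv, mul_inv_cancel_left₀ hr.ne'] at hlt
  have hscale : ∀ s ∈ Ioo 0 (r * κ)⁻¹, r * s ∈ Ioo 0 κ⁻¹ := fun s hs =>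
    ⟨mul_pos hr hs.1, hwidth s hs.2⟩
  have hray : ∀ b s, r • (b + s • ν (r • b)) = r • b + (r * s) • ν (r • b) := fun b s => by
    rw [smul_add, smul_smul]
  refine
  { isOpen := h.isOpen.preimage (continuous_const_smul r)
    isCompact_closure := ?_
    frontier_nonempty := ?_
    curvature_pos := mul_pos hr h.curvature_pos
    norm_normal := fun b hb => h.norm_normal _ ((hfr b).1 hb)
    add_smul_mem := fun b hb s hs => ?_
    boundaryDist_add_smul := fun b hb s hs => ?_
    exists_eq_add_smul := fun x hx hx' => ?_
    abs_sub_affine_le := fun b hb s hs y hy => ?_ }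
  · rw [closure_preimage_smul hr.ne']
    exact (Homeomorph.smulOfNeZero r hr.ne').isClosedEmbedding.isCompact_preimage
      h.isCompact_closure
  · obtain ⟨b, hb⟩ := h.frontier_nonempty
    exact ⟨r⁻¹ • b, (hfr _).2 (by rwa [smul_inv_smul₀ hr.ne'])⟩
  · rw [mem_preimage, hray]
    exact h.add_smul_mem _ ((hfr b).1 hb) _ (hscale s hs)
  · rw [hδ, hray, h.boundaryDist_add_smul _ ((hfr b).1 hb) _ (hscale s hs),
      inv_mul_cancel_left₀ hr.ne']
  · obtain ⟨b, hb, hxb⟩ := h.exists_eq_add_smul _ hx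
      ((boundaryDist_smul hr Ω x).trans_lt (hwidth _ hx'))
    refine ⟨r⁻¹ • b, (hfr _).2 (by rwa [smul_inv_smul₀ hr.ne']), ?_⟩
    rw [hδ, smul_inv_smul₀ hr.ne', mul_smul, ← smul_add, ← hxb, inv_smul_smul₀ hr.ne']
  · have hyΩ : r • y ∈ closure Ω := by rwa [closure_preimage_smul hr.ne'] at hy
    have haff := h.abs_sub_affine_le _ ((hfr b).1 hb) _ (hscale s hs) _ hyΩ
    rw [← hray, ← smul_sub, inner_smul_left, norm_smul, boundaryDist_smul hr,
      Real.norm_of_nonneg hr.le, conj_trivial, mul_pow, ← mul_sub, ← mul_sub, abs_mul,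
      abs_of_pos hr] at haff
    exact le_of_mul_le_mul_left (haff.trans_eq (by ring)) hr

end IsCollar

namespace IsQuasiStationary

theorem mono (h : IsQuasiStationary Ω p β M C v g L) {M' : ℝ} (hM : M ≤ M') :
    IsQuasiStationary Ω p β M' C v g L :=
  { h with abs_residual_le := fun x hx => (h.abs_residual_le x hx).trans hM }

theorem rescale (hexp : IsGBUExponent p β) (h : IsQuasiStationary Ω p β M C v g L)
    {r : ℝ} (hr : 0 < r) :
    IsQuasiStationary ((r • ·) ⁻¹' Ω) p β (r ^ (1 + β) * M) C
      (fun y => r ^ (β - 1) * v (r • y)) (fun y => r ^ β • g (r • y))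
      (fun y => r ^ (1 + β) * L (r • y)) := by
  have hβ : r ^ (β - 1) * r = r ^ β := by rw [← Real.rpow_add_one hr.ne', sub_add_cancel]
  have hβ' : r ^ (β - 1) * r ^ 2 = r ^ (1 + β) := by
    rw [← Real.rpow_add_natCast hr.ne']
    congr 1
    push_cast
    ring
  refine ⟨?_, fun b hb => ?_, fun x hx => ?_, fun x hx => ?_, fun x hx => ?_⟩
  · refine continuousOn_const.mul (h.continuousOn.comp (continuous_const_smul r).continuousOn ?_)
    rw [closure_preimage_smul hr.ne']
    exact mapsTo_preimage _ _
  · rw [frontier_preimage_smul hr.ne'] at hb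
    rw [h.eq_zero _ hb, mul_zero]
  · have hcomp := (HasLaplacianAt.comp_similarity (x := x) (.refl ℝ E) r 0
      (by simpa using h.hasLaplacianAt _ hx)).const_mul (r ^ (β - 1))
    simp only [LinearIsometryEquiv.coe_refl, id_eq, add_zero, smul_smul, hβ, ← mul_assoc,
      hβ'] at hcomp
    exact hcomp
  · have hp : (r ^ β) ^ p = r ^ (1 + β) := by
      rw [← Real.rpow_mul hr.le, hexp.mul_eq_add_one, add_comm]
    rw [norm_smul, Real.norm_of_nonneg (by positivity), Real.mul_rpow (by positivity)
      (norm_nonneg _), hp, ← mul_add, abs_mul, abs_of_pos (by positivity)]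
    exact mul_le_mul_of_nonneg_left (h.abs_residual_le _ hx) (by positivity)
  · have hg := h.norm_gradient_le _ hx
    rw [boundaryDist_smul hr, Real.mul_rpow hr.le (boundaryDist_nonneg _ _)] at hg
    rw [norm_smul, Real.norm_of_nonneg (by positivity)]
    refine (mul_le_mul_of_nonneg_left hg (by positivity)).trans_eq ?_
    rw [Real.rpow_neg hr.le]
    field_simp

end IsQuasiStationary

theorem IsCollar.eventually_rescale (hexp : IsGBUExponent p β) (h : IsCollar Ω ν κ) (M C : ℝ)
    {τ : ℝ} (hτ : 0 < τ) : ∀ᶠ r in nhdsWithin (0 : ℝ) (Ioi 0),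
      IsCollar ((r • ·) ⁻¹' Ω) (fun y => ν (r • y)) τ ∧
      ∀ v g L, IsQuasiStationary Ω p β M C v g L →
        IsQuasiStationary ((r • ·) ⁻¹' Ω) p β τ C (fun y => r ^ (β - 1) * v (r • y))
          (fun y => r ^ β • g (r • y)) (fun y => r ^ (1 + β) * L (r • y)) := by
  filter_upwards [eventually_const_mul_lt κ hτ,
    eventually_const_mul_rpow_lt M (by linarith [hexp.pos] : 0 < 1 + β) hτ, self_mem_nhdsWithin]
    with r hrκ hrM hr
  exact ⟨(h.rescale hr).mono ((mul_comm _ _).trans_le hrκ.le),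
    fun v g L hv => (hv.rescale hexp hr).mono ((mul_comm _ _).trans_le hrM.le)⟩

end QuasiStationary

section NormalRays

variable {E : Type*} [NormedAddCommGroup E] [InnerProductSpace ℝ E] {Ω : Set E} {ν : E → E}
  {κ p β M C : ℝ} {v : E → ℝ} {g : E → E} {L : E → ℝ}

namespace IsCollar

theorem exists_mem_frontier_eq_add_smul (hΩ : IsCollar Ω ν κ) {x : E} (hx : x ∈ closure Ω)
    (hδ : δ[Ω] x < κ⁻¹) : ∃ b ∈ frontier Ω, x = b + δ[Ω] x • ν b := by
  by_cases hxΩ : x ∈ Ω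
  · exact hΩ.exists_eq_add_smul x hxΩ hδ
  · have hfr := mem_frontier_of_mem_closure_of_notMem hΩ.isOpen hx hxΩ
    exact ⟨x, hfr, by simp [boundaryDist_eq_zero hfr]⟩

theorem add_smul_mem_closure (hΩ : IsCollar Ω ν κ) {b : E} (hb : b ∈ frontier Ω) {s : ℝ}
    (hs : s ∈ Ico 0 κ⁻¹) : b + s • ν b ∈ closure Ω := by
  rcases hs.1.eq_or_lt with rfl | hs0
  · simpa using frontier_subset_closure hb
  · exact subset_closure (hΩ.add_smul_mem b hb s ⟨hs0, hs.2⟩)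

end IsCollar

namespace IsQuasiStationary

theorem abs_apply_add_smul_le (hΩ : IsCollar Ω ν κ) (hv : IsQuasiStationary Ω p β M C v g L)
    {b : E} (hb : b ∈ frontier Ω) {s : ℝ} (hs : s ∈ Ico 0 κ⁻¹) {B B' : ℝ → ℝ}
    (hB : ContinuousOn B (Icc 0 s)) (hB0 : B 0 = 0) (hB' : ∀ σ ∈ Ioo 0 s, HasDerivAt B (B' σ) σ)
    (hle : ∀ σ ∈ Ioo 0 s, ‖g (b + σ • ν b)‖ ≤ B' σ) : |v (b + s • ν b)| ≤ B s := by
  have hray : ContinuousOn (fun σ : ℝ => v (b + σ • ν b)) (Icc 0 s) :=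
    hv.continuousOn.comp (by fun_prop) fun σ hσ =>
      hΩ.add_smul_mem_closure hb ⟨hσ.1, hσ.2.trans_lt hs.2⟩
  have hderiv : ∀ σ ∈ Ioo 0 s, HasDerivAt (fun σ : ℝ => v (b + σ • ν b))
      ⟪g (b + σ • ν b), ν b⟫ σ := fun σ hσ => by
    have hline : HasDerivAt (fun σ : ℝ => b + σ • ν b) (ν b) σ := by
      simpa using ((hasDerivAt_id σ).smul_const (ν b)).const_add b
    exact (hv.hasLaplacianAt _ (hΩ.add_smul_mem b hb σ
      ⟨hσ.1, hσ.2.trans hs.2⟩)).hasFDerivAt.comp_hasDerivAt σ hline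
  have hslope : ∀ σ ∈ Ioo 0 s, |⟪g (b + σ • ν b), ν b⟫| ≤ B' σ := fun σ hσ =>
    (abs_real_inner_le_norm _ _).trans (by simpa [hΩ.norm_normal b hb] using hle σ hσ)
  have hupper := sub_le_sub_of_deriv_le_deriv hs.1 hray hderiv hB hB'
    fun σ hσ => (le_abs_self _).trans (hslope σ hσ)
  have hlower := sub_le_sub_of_deriv_le_deriv hs.1 hray.neg (fun σ hσ => (hderiv σ hσ).neg) hB hB'
    fun σ hσ => (neg_le_abs _).trans (hslope σ hσ)
  simp only [zero_smul, add_zero, hv.eq_zero b hb, hB0, sub_zero, neg_zero,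
    Pi.neg_apply] at hupper hlower
  exact abs_le.2 ⟨by linarith, hupper⟩

theorem abs_le_mul_rpow (hexp : IsGBUExponent p β) (hΩ : IsCollar Ω ν κ)
    (hv : IsQuasiStationary Ω p β M C v g L) {x : E} (hx : x ∈ closure Ω) (hδ : δ[Ω] x < κ⁻¹) :
    |v x| ≤ C / (1 - β) * δ[Ω] x ^ (1 - β) := by
  have hβ := hexp.one_sub_pos
  obtain ⟨b, hb, hxb⟩ := hΩ.exists_mem_frontier_eq_add_smul hx hδ
  nth_rw 1 [hxb]
  refine hv.abs_apply_add_smul_le hΩ hb ⟨boundaryDist_nonneg Ω x, hδ⟩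
    (B := fun s => C / (1 - β) * s ^ (1 - β)) (B' := fun s => C * s ^ (-β))
    (continuous_const.mul (Real.continuous_rpow_const hβ.le)).continuousOn
    (by simp [Real.zero_rpow hβ.ne']) (fun s hs => ?_) fun s hs => ?_
  · simpa [div_mul_cancel₀ _ hβ.ne'] using hasDerivAt_const_mul_rpow_one_sub (C / (1 - β)) β hs.1
  · have hs' : s ∈ Ioo 0 κ⁻¹ := ⟨hs.1, hs.2.trans hδ⟩
    simpa [hΩ.boundaryDist_add_smul b hb s hs'] using
      hv.norm_gradient_le _ (hΩ.add_smul_mem b hb s hs')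

theorem abs_le_mul_boundaryDist (hΩ : IsCollar Ω ν κ) (hv : IsQuasiStationary Ω p β M C v g L)
    {B : ℝ} (hB : ∀ x ∈ Ω, ‖g x‖ ≤ B) {x : E} (hx : x ∈ closure Ω) (hδ : δ[Ω] x < κ⁻¹) :
    |v x| ≤ B * δ[Ω] x := by
  obtain ⟨b, hb, hxb⟩ := hΩ.exists_mem_frontier_eq_add_smul hx hδ
  nth_rw 1 [hxb]
  refine hv.abs_apply_add_smul_le hΩ hb ⟨boundaryDist_nonneg Ω x, hδ⟩
    (B := fun s => B * s) (B' := fun _ => B) (by fun_prop) (mul_zero B) (fun s _ => ?_)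
    fun s hs => hB _ (hΩ.add_smul_mem b hb s ⟨hs.1, hs.2.trans hδ⟩)
  simpa using (hasDerivAt_id s).const_mul B

end IsQuasiStationary

end NormalRays

section MaximumPrinciple

variable {E : Type*} [NormedAddCommGroup E] [InnerProductSpace ℝ E] {Ω : Set E} {ν : E → E}
  {κ p β M C : ℝ}

/-- The part of the boundary layer of width `1` of `Ω` within distance `Λ` of `x`. -/
def layerBox (Ω : Set E) (x : E) (Λ : ℝ) : Set E :=
  {z ∈ closure Ω | δ[Ω] z ≤ 1 ∧ ‖z - x‖ ≤ Λ}

theorem IsCollar.nonpos_on_layerBox (hΩ : IsCollar Ω ν κ) {W : E → ℝ} {x : E} {Λ : ℝ}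
    (hW : ContinuousOn W (layerBox Ω x Λ))
    (htop : ∀ z ∈ Ω, δ[Ω] z = 1 → ‖z - x‖ ≤ Λ → W z ≤ 0)
    (hside : ∀ z ∈ closure Ω, δ[Ω] z ≤ 1 → ‖z - x‖ = Λ → W z ≤ 0)
    (hbase : ∀ z ∈ frontier Ω, ‖z - x‖ < Λ → IsMaxOn W (layerBox Ω x Λ) z → W z ≤ 0)
    (hint : ∀ z ∈ Ω, δ[Ω] z < 1 → ‖z - x‖ < Λ → IsLocalMax W z → W z ≤ 0) :
    ∀ z ∈ layerBox Ω x Λ, W z ≤ 0 := by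
  intro y hy
  have hδ : Continuous δ[Ω] := continuous_boundaryDist Ω
  have hnorm : Continuous fun z : E => ‖z - x‖ := by fun_prop
  have hcompact : IsCompact (layerBox Ω x Λ) := hΩ.isCompact_closure.inter_right
    ((isClosed_le hδ continuous_const).inter (isClosed_le hnorm continuous_const))
  obtain ⟨z, hz, hmax⟩ := hcompact.exists_isMaxOn ⟨y, hy⟩ hW
  refine (hmax hy).trans ?_
  rcases hz.2.2.eq_or_lt with hΛ | hΛ
  · exact hside z hz.1 hz.2.1 hΛ
  by_cases hzΩ : z ∈ Ω
  · rcases hz.2.1.eq_or_lt with hz1 | hz1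
    · exact htop z hzΩ hz1 hz.2.2
    · refine hint z hzΩ hz1 hΛ (hmax.isLocalMax ?_)
      filter_upwards [hΩ.isOpen.mem_nhds hzΩ, (isOpen_lt hδ continuous_const).mem_nhds hz1,
        (isOpen_lt hnorm continuous_const).mem_nhds hΛ] with y hy hy1 hyΛ
      exact ⟨subset_closure hy, hy1.le, hyΛ.le⟩
  · exact hbase z (mem_frontier_of_mem_closure_of_notMem hΩ.isOpen hz.1 hzΩ) hΛ hmax

variable [FiniteDimensional ℝ E] {F F' : ℝ → ℝ} {F'' : ℝ} {w : E → ℝ} {g z : E} {L : ℝ}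

theorem HasLaplacianAt.comp_paraboloid {e : E} (he : ‖e‖ = 1) (d c : ℝ)
    (hF : ∀ᶠ s in nhds d, HasDerivAt F (F' s) s) (hF' : HasDerivAt F' F'' d) :
    HasLaplacianAt (fun y => F (d + ⟪y - z, e⟫ + c * ‖y - z‖ ^ 2)) (F' d • e)
      (F'' + F' d * (2 * Module.finrank ℝ E * c)) z := by
  have hq := ((HasLaplacianAt.const d z).add (.inner_sub e z z)).add
    ((HasLaplacianAt.norm_sub_sq z z).const_mul c)
  have hcomp := hq.comp (by simpa using hF) (by simpa using hF')
  simpa [he, mul_comm, mul_left_comm] using hcomp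

namespace IsCollar

/-- `δ` need not be differentiable: at the maximum it is replaced by a paraboloid touching it. -/
theorem norm_eq_and_add_le_of_isLocalMax (hΩ : IsCollar Ω ν κ) (hz : z ∈ Ω) (hδz : δ[Ω] z < κ⁻¹)
    (hw : HasLaplacianAt w g L z) (hF : ∀ᶠ s in nhds (δ[Ω] z), HasDerivAt F (F' s) s)
    (hF' : HasDerivAt F' F'' (δ[Ω] z)) (hmono : MonotoneOn F (Ioi 0) ∨ AntitoneOn F (Ioi 0))
    (hmax : IsLocalMax (fun y => w y + F (δ[Ω] y)) z) :
    ‖g‖ = |F' (δ[Ω] z)| ∧ L + F'' ≤ 2 * Module.finrank ℝ E * κ * |F' (δ[Ω] z)| := by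
  have hd : 0 < δ[Ω] z := hΩ.pos hz
  obtain ⟨b, hb, hzb⟩ := hΩ.exists_eq_add_smul z hz hδz
  set d := δ[Ω] z
  have he := hΩ.norm_normal b hb
  let q : ℝ → E → ℝ := fun c y => d + ⟪y - z, ν b⟫ + c * ‖y - z‖ ^ 2
  have hqz : ∀ c, q c z = d := fun c => by simp [q]
  have haff : ∀ᶠ y in nhds z, |δ[Ω] y - d - ⟪y - z, ν b⟫| ≤ κ * ‖y - z‖ ^ 2 := by
    filter_upwards [hΩ.isOpen.mem_nhds hz] with y hy
    simpa only [← hzb] using hΩ.abs_sub_affine_le b hb d ⟨hd, hδz⟩ y (subset_closure hy)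
  have hδpos : ∀ᶠ y in nhds z, 0 < δ[Ω] y :=
    (continuous_boundaryDist Ω).continuousAt.eventually (lt_mem_nhds hd)
  have hqpos : ∀ c, ∀ᶠ y in nhds z, 0 < q c y := fun c => by
    have hq : Continuous (q c) := by fun_prop
    exact hq.continuousAt.eventually (lt_mem_nhds (by rwa [hqz]))
  obtain ⟨c, hc, htouch⟩ : ∃ c, |c| = κ ∧ ∀ᶠ y in nhds z, F (q c y) ≤ F (δ[Ω] y) := by
    rcases hmono with hmono | hanti
    · refine ⟨-κ, by rw [abs_neg, abs_of_pos hΩ.curvature_pos], ?_⟩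
      filter_upwards [haff, hδpos, hqpos (-κ)] with y hy hδy hqy
      exact hmono hqy hδy (by linarith [(abs_le.1 hy).1])
    · refine ⟨κ, abs_of_pos hΩ.curvature_pos, ?_⟩
      filter_upwards [haff, hδpos, hqpos κ] with y hy hδy hqy
      exact hanti hδy hqy (by linarith [(abs_le.1 hy).2])
  have hmax' : IsLocalMax (fun y => w y + F (q c y)) z := by
    filter_upwards [hmax, htouch] with y hy hFy
    rw [hqz]
    linarith
  have hlap := hw.add (HasLaplacianAt.comp_paraboloid (z := z) he d c hF hF')
  have hgrad := eq_neg_of_add_eq_zero_left (hlap.eq_zero_of_isLocalMax hmax')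
  refine ⟨by rw [hgrad, norm_neg, norm_smul, he, mul_one, Real.norm_eq_abs], ?_⟩
  have hbound : -(F' d * c) ≤ |F' d| * κ := by
    rw [← hc, ← abs_mul]
    exact neg_le_abs _
  nlinarith [hlap.nonpos_of_isLocalMax hmax', (Module.finrank ℝ E).cast_nonneg (α := ℝ)]

end IsCollar

end MaximumPrinciple

section TangentialFlatness

variable {E : Type*} [NormedAddCommGroup E] [InnerProductSpace ℝ E] {Ω : Set E} {ν : E → E}
  {κ p β M C : ℝ} {v : E → ℝ} {g : E → E} {L : E → ℝ} {b h z : E}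

namespace IsCollar

theorem abs_sub_le_of_eq_add_normal (hΩ : IsCollar Ω ν κ) (hκ : 1 < κ⁻¹) (hb : b ∈ frontier Ω)
    (hz : z ∈ closure Ω) :
    |δ[Ω] z - 1 - ⟪z - (b + ν b), ν b⟫| ≤ κ * ‖z - (b + ν b)‖ ^ 2 := by
  simpa using hΩ.abs_sub_affine_le b hb 1 ⟨one_pos, hκ⟩ z hz

theorem abs_sub_translate_le (hΩ : IsCollar Ω ν κ) (hκ : 1 < κ⁻¹) (hb : b ∈ frontier Ω)
    (hh : b + ν b + h ∈ closure Ω) (hδh : δ[Ω] (b + ν b + h) = 1) (hz : z ∈ closure Ω)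
    (hzh : z + h ∈ closure Ω) {l l' : ℝ} (hl : ‖h‖ ≤ l) (hl' : ‖z - (b + ν b)‖ ≤ l') :
    |δ[Ω] (z + h) - δ[Ω] z| ≤ 3 * (l + l') ^ 2 * κ := by
  have hκ0 := hΩ.curvature_pos
  have hl0 : 0 ≤ l := (norm_nonneg _).trans hl
  have hl'0 : 0 ≤ l' := (norm_nonneg _).trans hl'
  have hsub : z + h - (b + ν b) = (z - (b + ν b)) + h := by abel
  have hnorm : ‖z + h - (b + ν b)‖ ≤ l + l' := by
    rw [hsub]
    linarith [norm_add_le (z - (b + ν b)) h]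
  have hshift := hΩ.abs_sub_le_of_eq_add_normal hκ hb hzh
  have hbase := hΩ.abs_sub_le_of_eq_add_normal hκ hb hz
  have hx := hΩ.abs_sub_le_of_eq_add_normal hκ hb hh
  rw [hδh, sub_self, zero_sub, abs_neg, add_sub_cancel_left] at hx
  rw [hsub, inner_add_left, ← hsub] at hshift
  have hsq : ∀ y : E, ‖y‖ ≤ l + l' → κ * ‖y‖ ^ 2 ≤ (l + l') ^ 2 * κ := fun y hy => by
    rw [mul_comm]
    gcongr
  have hshift' := abs_le.1 (hshift.trans (hsq _ hnorm))
  have hbase' := abs_le.1 (hbase.trans (hsq _ (by linarith)))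
  have hx' := abs_le.1 (hx.trans (hsq _ (by linarith)))
  exact abs_le.2 ⟨by linarith, by linarith⟩

end IsCollar

/-- The barrier for tangential differences of `v`: it is small far from the boundary, in
the direction `e`, and large far from `x` in the tangential directions. -/
def flatnessBarrier (e x : E) (σ μ R a : ℝ) (z : E) : ℝ :=
  σ * (1 - Real.exp (μ * (⟪z - x, e⟫ - R))) + a * ‖z - x‖ ^ 2

theorem mul_sq_le_flatnessBarrier {e x : E} {σ μ R a : ℝ} (hσ : 0 ≤ σ) (hμ : 0 ≤ μ)
    (hz : ⟪z - x, e⟫ ≤ R) : a * ‖z - x‖ ^ 2 ≤ flatnessBarrier e x σ μ R a z := by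
  have hexp : Real.exp (μ * (⟪z - x, e⟫ - R)) ≤ 1 :=
    Real.exp_le_one_iff.2 (mul_nonpos_of_nonneg_of_nonpos hμ (by linarith))
  have : 0 ≤ σ * (1 - Real.exp (μ * (⟪z - x, e⟫ - R))) := mul_nonneg hσ (by linarith)
  rw [flatnessBarrier]
  linarith

/-- The domain on which translates by `h` are compared: the points `z` of `Ω` near `x` with
`z + h` in `Ω`, up to height `R` over `x` in the direction `e`. -/
def flatnessBox (Ω : Set E) (h e x : E) (R l : ℝ) : Set E :=
  {z | z ∈ closure Ω ∧ z + h ∈ closure Ω ∧ ‖z - x‖ ≤ l ∧ ⟪z - x, e⟫ ≤ R}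

theorem isCompact_flatnessBox (hΩ : IsCompact (closure Ω)) {e x : E} {R l : ℝ} :
    IsCompact (flatnessBox Ω h e x R l) :=
  hΩ.inter_right ((isClosed_closure.preimage (continuous_add_const h)).inter
    ((isClosed_le (by fun_prop : Continuous fun z : E => ‖z - x‖) continuous_const).inter
      (isClosed_le (by fun_prop : Continuous fun z : E => ⟪z - x, e⟫) continuous_const)))

theorem flatnessBox_mem_nhds (hΩ : IsOpen Ω) (hz : z ∈ Ω) (hzh : z + h ∈ Ω) {e x : E} {R l : ℝ}
    (hl : ‖z - x‖ < l) (hR : ⟪z - x, e⟫ < R) : flatnessBox Ω h e x R l ∈ nhds z := by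
  filter_upwards [hΩ.mem_nhds hz, (hΩ.preimage (continuous_add_const h)).mem_nhds hzh,
    (isOpen_lt (by fun_prop : Continuous fun z : E => ‖z - x‖) continuous_const).mem_nhds hl,
    (isOpen_lt (by fun_prop : Continuous fun z : E => ⟪z - x, e⟫) continuous_const).mem_nhds hR]
    with y hy hyh hyl hyR
  exact ⟨subset_closure hy, subset_closure hyh, hyl.le, hyR.le⟩

theorem hasLaplacianAt_flatnessBarrier [FiniteDimensional ℝ E] {e : E} (he : ‖e‖ = 1) (x z : E)
    (σ μ R a : ℝ) :
    HasLaplacianAt (flatnessBarrier e x σ μ R a)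
      (-(σ * μ * Real.exp (μ * (⟪z - x, e⟫ - R))) • e + (2 * a) • (z - x))
      (-(σ * μ ^ 2 * Real.exp (μ * (⟪z - x, e⟫ - R))) + 2 * Module.finrank ℝ E * a) z := by
  have hderiv : ∀ s, HasDerivAt (fun s => Real.exp (μ * (s - R)))
      (μ * Real.exp (μ * (s - R))) s := fun s => by
    simpa [mul_comm] using (((hasDerivAt_id s).sub_const R).const_mul μ).exp
  have hexp := (HasLaplacianAt.inner_sub e x z).comp (.of_forall hderiv)
    ((hderiv _).const_mul μ)
  have hlap := (((HasLaplacianAt.const 1 z).sub hexp).const_mul σ).add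
    ((HasLaplacianAt.norm_sub_sq x z).const_mul a)
  convert hlap using 1
  · rfl
  · module
  · rw [he]
    ring

namespace IsQuasiStationary

theorem neg_laplacian_le_of_isLocalMax [FiniteDimensional ℝ E] (hexp : IsGBUExponent p β)
    (hv : IsQuasiStationary Ω p β M C v g L) (hC : 0 ≤ C) (hz : z ∈ Ω) (hzh : z + h ∈ Ω) {η : ℝ}
    (hη : 0 < η) (hηh : η ≤ δ[Ω] (z + h)) {ψ : E → ℝ} {gψ : E} {Lψ : ℝ}
    (hψ : HasLaplacianAt ψ gψ Lψ z) (hmax : IsLocalMax (fun y => v (y + h) - v y - ψ y) z) :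
    -Lψ ≤ p * C ^ (p - 1) / η * ‖gψ‖ + 2 * M := by
  have hp := hexp.two_lt
  have hlap := ((hv.hasLaplacianAt _ hzh).comp_add_right h).sub (hv.hasLaplacianAt z hz) |>.sub hψ
  have hgrad : g (z + h) - g z = gψ := sub_eq_zero.1 (hlap.eq_zero_of_isLocalMax hmax)
  have hbound : ‖g (z + h)‖ ≤ C * η ^ (-β) := (hv.norm_gradient_le _ hzh).trans <| by
    gcongr ?_ * ?_
    exact Real.rpow_le_rpow_of_nonpos hη hηh (by linarith [hexp.pos])
  have hconst : (C * η ^ (-β)) ^ (p - 1) = C ^ (p - 1) / η := by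
    rw [Real.mul_rpow hC (by positivity), hexp.rpow_neg_rpow_sub_one hη.le, div_eq_mul_inv]
  have hpow : ‖g (z + h)‖ ^ p - ‖g z‖ ^ p ≤ p * C ^ (p - 1) / η * ‖gψ‖ := by
    refine (sub_rpow_le_mul_abs_sub (by linarith) (norm_nonneg _) (norm_nonneg _) hbound).trans ?_
    rw [hconst, mul_div_assoc, ← hgrad]
    gcongr
    exact abs_norm_sub_norm_le _ _
  linarith [hlap.nonpos_of_isLocalMax hmax, (abs_le.1 (hv.abs_residual_le _ hzh)).1,
    (abs_le.1 (hv.abs_residual_le z hz)).2]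

theorem abs_sub_le_of_norm_le_half [FiniteDimensional ℝ E] (hexp : IsGBUExponent p β)
    (hv : IsQuasiStationary Ω p β M C v g L) (hC : 0 ≤ C) {R : ℝ} (hR : 0 < R) (hz : z ∈ Ω)
    (hzR : R ≤ δ[Ω] z) (hh : ‖h‖ ≤ R / 2) : |v (z + h) - v z| ≤ C * (R / 2) ^ (-β) * ‖h‖ := by
  have hball : ∀ y ∈ closedBall z (R / 2), y ∈ Ω ∧ R / 2 ≤ δ[Ω] y := fun y hy => by
    obtain ⟨hyΩ, hyδ⟩ := mem_and_abs_boundaryDist_sub_le hz (by linarith) hy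
    exact ⟨hyΩ, by linarith [(abs_le.1 hyδ).1]⟩
  have hmvt := (convex_closedBall z (R / 2)).norm_image_sub_le_of_norm_hasFDerivWithin_le
    (f := v) (C := C * (R / 2) ^ (-β)) (x := z) (y := z + h)
    (fun y hy => (hv.hasLaplacianAt y (hball y hy).1).hasFDerivAt.hasFDerivWithinAt)
    (fun y hy => ?_) (mem_closedBall_self (by positivity)) (by simpa using hh)
  · simpa using hmvt
  · rw [innerSL_apply_norm]
    refine (hv.norm_gradient_le y (hball y hy).1).trans ?_
    gcongr ?_ * ?_
    exact Real.rpow_le_rpow_of_nonpos (by positivity) (hball y hy).2 (by linarith [hexp.pos])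

theorem abs_sub_le_of_boundaryDist_le (hexp : IsGBUExponent p β) (hΩ : IsCollar Ω ν κ)
    (hv : IsQuasiStationary Ω p β M C v g L) (hC : 0 ≤ C) {D : ℝ} (hD : D < κ⁻¹) {y : E}
    (hz : z ∈ closure Ω) (hδz : δ[Ω] z ≤ D) (hy : y ∈ closure Ω) (hδy : δ[Ω] y ≤ D) :
    |v y - v z| ≤ 2 * (C / (1 - β) * D ^ (1 - β)) := by
  have hβ := hexp.one_sub_pos
  have habs : ∀ w ∈ closure Ω, δ[Ω] w ≤ D → |v w| ≤ C / (1 - β) * D ^ (1 - β) := fun w hw hδw =>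
    (hv.abs_le_mul_rpow hexp hΩ hw (hδw.trans_lt hD)).trans <| by
      have := boundaryDist_nonneg Ω w
      gcongr
  linarith [abs_sub (v y) (v z), habs z hz hδz, habs y hy hδy]

end IsQuasiStationary

/-- The choice of parameters in the proof of tangential flatness, at scale `1`: two points at
height `1` and distance at most `l` are compared on the part of `Ω` within distance `l'` of the
first and at height at most `R + 1`. -/
structure IsFlatnessScale (n : ℕ) (p β C σ l η R a l' τ : ℝ) : Prop where
  layer_pos : 0 < η
  layer_le : η ≤ 1 / 2
  abs_le_layer : C / (1 - β) * (2 * η) ^ (1 - β) ≤ σ / 2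
  one_le_height : 1 ≤ R
  le_height : l ≤ R / 2
  abs_sub_le_height : C * (R / 2) ^ (-β) * l ≤ σ
  barrier_nonneg : 0 ≤ a
  width_pos : 0 < l'
  abs_le_width : 2 * (C / (1 - β) * (R + 2) ^ (1 - β)) ≤ a * l' ^ 2
  residual_lt : 2 * n * a + p * C ^ (p - 1) / η * (2 * a * l') + 2 * τ <
    σ * (p * C ^ (p - 1) / η + 1) * Real.exp (-((p * C ^ (p - 1) / η + 1) * (R + 2)))
  curvature_lt : 3 * (l + l') ^ 2 * τ < η
  height_lt : R + 2 < τ⁻¹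

theorem IsGBUExponent.exists_layer (hexp : IsGBUExponent p β) (c : ℝ) {σ : ℝ} (hσ : 0 < σ) :
    ∃ η > 0, η ≤ 1 / 2 ∧ c * (2 * η) ^ (1 - β) ≤ σ := by
  obtain ⟨s, hs, hs0, hs1⟩ := ((eventually_const_mul_rpow_lt c hexp.one_sub_pos hσ).and
    (Ioo_mem_nhdsGT one_pos)).exists
  exact ⟨s / 2, by linarith, by linarith, by simpa [mul_div_cancel₀] using hs.le⟩

theorem IsGBUExponent.exists_height (hexp : IsGBUExponent p β) (C l : ℝ) {σ : ℝ} (hσ : 0 < σ) :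
    ∃ R ≥ 1, l ≤ R / 2 ∧ C * (R / 2) ^ (-β) * l ≤ σ := by
  have htend : Tendsto (fun R : ℝ => C * (R / 2) ^ (-β) * l) atTop (nhds 0) := by
    simpa using (((tendsto_rpow_neg_atTop hexp.pos).comp
      (tendsto_id.atTop_div_const two_pos)).const_mul C).mul_const l
  obtain ⟨R, hR, hR1, hRl⟩ := ((htend.eventually_le_const hσ).and
    ((eventually_ge_atTop 1).and (eventually_ge_atTop (2 * l)))).exists
  exact ⟨R, hR1, by linarith, hR⟩

theorem exists_isFlatnessScale (hexp : IsGBUExponent p β) (n : ℕ) (hC : 0 < C) {σ : ℝ}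
    (hσ : 0 < σ) (l : ℝ) : ∃ η R a l', ∀ᶠ τ in nhdsWithin (0 : ℝ) (Ioi 0),
      IsFlatnessScale n p β C σ l η R a l' τ := by
  have hβ := hexp.one_sub_pos
  obtain ⟨η, hη0, hη, hηlayer⟩ := hexp.exists_layer (C / (1 - β)) (half_pos hσ)
  obtain ⟨R, hR1, hRl, hR⟩ := hexp.exists_height C l hσ
  set μ := p * C ^ (p - 1) / η
  have hμ : 0 ≤ μ := div_nonneg
    (mul_nonneg (two_pos.trans hexp.two_lt).le (Real.rpow_nonneg hC.le _)) hη0.le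
  set θ := σ * (μ + 1) * Real.exp (-((μ + 1) * (R + 2)))
  have hθ : 0 < θ := by positivity
  set A := 2 * (C / (1 - β) * (R + 2) ^ (1 - β))
  have hA : 0 ≤ A := mul_nonneg two_pos.le
    (mul_nonneg (div_nonneg hC.le hβ.le) (Real.rpow_nonneg (by linarith) _))
  -- The curvature of the penalization is `A / l' ^ 2`, its slope `A / l'`.
  obtain ⟨l', hcurv, hslope, hl'⟩ :=
    ((eventually_const_div_pow_lt (2 * n * A) two_ne_zero (half_pos (half_pos hθ))).and
    ((eventually_const_div_pow_lt (μ * (2 * A)) one_ne_zero (half_pos (half_pos hθ))).and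
    (eventually_gt_atTop 0))).exists
  refine ⟨η, R, A / l' ^ 2, l', ?_⟩
  filter_upwards [eventually_const_mul_lt (3 * (l + l') ^ 2) hη0,
    eventually_const_mul_lt 2 (half_pos hθ), eventually_lt_inv (R + 2)] with τ hτcurv hτres hτR
  refine ⟨hη0, hη, hηlayer, hR1, hRl, hR, div_nonneg hA (sq_nonneg l'), hl',
    (div_mul_cancel₀ A (by positivity)).ge, ?_, hτcurv, hτR⟩
  have hcurv' : 2 * n * (A / l' ^ 2) = 2 * n * A / l' ^ 2 := by ring
  have hslope' : μ * (2 * (A / l' ^ 2) * l') = μ * (2 * A) / l' ^ 1 := by field_simp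
  linarith

theorem IsCollar.abs_boundaryDist_sub_le_of_mem_flatnessBox (hΩ : IsCollar Ω ν κ) (hκ : 1 < κ⁻¹)
    (hb : b ∈ frontier Ω) (hh : b + ν b + h ∈ closure Ω) (hδh : δ[Ω] (b + ν b + h) = 1)
    {l l' R : ℝ} (hl : ‖h‖ ≤ l) (hz : z ∈ flatnessBox Ω h (ν b) (b + ν b) R l') :
    |δ[Ω] (z + h) - δ[Ω] z| ≤ 3 * (l + l') ^ 2 * κ ∧
      |δ[Ω] z - 1 - ⟪z - (b + ν b), ν b⟫| ≤ 3 * (l + l') ^ 2 * κ := by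
  obtain ⟨hz, hzh, hzl', -⟩ := hz
  refine ⟨hΩ.abs_sub_translate_le hκ hb hh hδh hz hzh hl hzl',
    (hΩ.abs_sub_le_of_eq_add_normal hκ hb hz).trans ?_⟩
  rw [mul_comm]
  refine mul_le_mul_of_nonneg_right ?_ hΩ.curvature_pos.le
  nlinarith [norm_nonneg (z - (b + ν b)), (norm_nonneg h).trans hl]

namespace IsQuasiStationary

variable [FiniteDimensional ℝ E] {σ l η R a l' τ : ℝ}

theorem not_isLocalMax_sub_flatnessBarrier (hexp : IsGBUExponent p β)
    (hv : IsQuasiStationary Ω p β τ C v g L) (hC : 0 ≤ C) (hσ : 0 < σ)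
    (hs : IsFlatnessScale (Module.finrank ℝ E) p β C σ l η R a l' τ) {e x : E} (he : ‖e‖ = 1)
    (hz : z ∈ Ω) (hzh : z + h ∈ Ω) (hηh : η ≤ δ[Ω] (z + h)) (hzx : ‖z - x‖ ≤ l')
    (hlow : -2 ≤ ⟪z - x, e⟫) :
    ¬IsLocalMax (fun y => v (y + h) - v y -
      flatnessBarrier e x σ (p * C ^ (p - 1) / η + 1) R a y) z := by
  intro hmax
  have hineq := hv.neg_laplacian_le_of_isLocalMax hexp hC hz hzh hs.layer_pos hηh
    (hasLaplacianAt_flatnessBarrier he x z σ _ R a) hmax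
  have hres := hs.residual_lt
  have hη := hs.layer_pos
  have ha := hs.barrier_nonneg
  set k := p * C ^ (p - 1) / η
  have hk : 0 ≤ k := by
    have := hexp.two_lt
    positivity
  set ex := Real.exp ((k + 1) * (⟪z - x, e⟫ - R))
  have hex : Real.exp (-((k + 1) * (R + 2))) ≤ ex :=
    Real.exp_le_exp.2 (by nlinarith [mul_le_mul_of_nonneg_left hlow (by linarith : 0 ≤ k + 1)])
  have hgrad : ‖(-(σ * (k + 1) * ex) • e + (2 * a) • (z - x))‖ ≤
      σ * (k + 1) * ex + 2 * a * l' := by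
    refine (norm_add_le _ _).trans ?_
    rw [neg_smul, norm_neg, norm_smul, norm_smul, he, Real.norm_of_nonneg (by positivity),
      Real.norm_of_nonneg (by positivity), mul_one]
    gcongr
  have hmain := hineq.trans (add_le_add_left (mul_le_mul_of_nonneg_left hgrad hk) _)
  have hlow' := mul_le_mul_of_nonneg_left hex (by positivity : 0 ≤ σ * (k + 1))
  nlinarith

theorem sub_le_add_flatnessBarrier_of_isMaxOn (hexp : IsGBUExponent p β) (hΩ : IsCollar Ω ν τ)
    (hv : IsQuasiStationary Ω p β τ C v g L) (hC : 0 ≤ C) (hσ : 0 < σ)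
    (hs : IsFlatnessScale (Module.finrank ℝ E) p β C σ l η R a l' τ) (hb : b ∈ frontier Ω)
    (hh : b + ν b + h ∈ closure Ω) (hδh : δ[Ω] (b + ν b + h) = 1) (hl : ‖h‖ ≤ l)
    (hz : z ∈ flatnessBox Ω h (ν b) (b + ν b) R l')
    (hmax : IsMaxOn (fun y => v (y + h) - v y -
      flatnessBarrier (ν b) (b + ν b) σ (p * C ^ (p - 1) / η + 1) R a y)
      (flatnessBox Ω h (ν b) (b + ν b) R l') z) :
    v (z + h) - v z ≤ σ +
      flatnessBarrier (ν b) (b + ν b) σ (p * C ^ (p - 1) / η + 1) R a z := by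
  obtain ⟨hz, hzh, hzl', hzR⟩ := hz
  obtain ⟨hη0, hη, hlayer, hR1, hRl, hfar, ha, -, hside, -, hcurv, hτR⟩ := id hs
  have hp := hexp.two_lt
  have hμ : 0 ≤ p * C ^ (p - 1) / η + 1 := by positivity
  have hκ : 1 < τ⁻¹ := by linarith
  have hbar := mul_sq_le_flatnessBarrier (x := b + ν b) (a := a) hσ.le hμ hzR
  have hbar0 : 0 ≤ a * ‖z - (b + ν b)‖ ^ 2 := by positivity
  obtain ⟨htranslate, hheight⟩ :=
    hΩ.abs_boundaryDist_sub_le_of_mem_flatnessBox hκ hb hh hδh hl ⟨hz, hzh, hzl', hzR⟩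
  have htranslate := abs_le.1 (htranslate.trans hcurv.le)
  have hheight := abs_le.1 (hheight.trans hcurv.le)
  have hdiff : ∀ D, D < τ⁻¹ → δ[Ω] z ≤ D → δ[Ω] (z + h) ≤ D →
      v (z + h) - v z ≤ 2 * (C / (1 - β) * D ^ (1 - β)) := fun D hD hDz hDh =>
    (le_abs_self _).trans (hv.abs_sub_le_of_boundaryDist_le hexp hΩ hC hD hz hDz hzh hDh)
  rcases hzl'.eq_or_lt with heq | hlt
  · rw [heq] at hbar
    linarith [hdiff (R + 2) hτR (by linarith) (by linarith)]
  rcases hzR.eq_or_lt with heq | hltR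
  · have hzΩ := hΩ.mem_of_boundaryDist_ne_zero hz (by linarith)
    have := (le_abs_self _).trans (hv.abs_sub_le_of_norm_le_half hexp hC (by linarith) hzΩ
      (by linarith : R ≤ _) (hl.trans hRl))
    have : C * (R / 2) ^ (-β) * ‖h‖ ≤ C * (R / 2) ^ (-β) * l := by gcongr
    linarith
  rcases le_or_gt (min (δ[Ω] z) (δ[Ω] (z + h))) η with hsmall | hlarge
  · have : δ[Ω] z ≤ 2 * η ∧ δ[Ω] (z + h) ≤ 2 * η := by
      rcases min_le_iff.1 hsmall with hsmall | hsmall <;> constructor <;> linarith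
    linarith [hdiff (2 * η) (by linarith) this.1 this.2]
  · obtain ⟨hηz, hηh⟩ := lt_min_iff.1 hlarge
    have hzΩ := hΩ.mem_of_boundaryDist_ne_zero hz (hη0.trans hηz).ne'
    have hzhΩ := hΩ.mem_of_boundaryDist_ne_zero hzh (by linarith)
    refine absurd (hmax.isLocalMax ?_) (hv.not_isLocalMax_sub_flatnessBarrier hexp hC hσ hs
      (hΩ.norm_normal b hb) hzΩ hzhΩ hηh.le hzl' (by linarith))
    exact flatnessBox_mem_nhds hΩ.isOpen hzΩ hzhΩ hlt hltR

theorem sub_le_of_isFlatnessScale (hexp : IsGBUExponent p β) (hΩ : IsCollar Ω ν τ)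
    (hv : IsQuasiStationary Ω p β τ C v g L) (hC : 0 ≤ C) (hσ : 0 < σ)
    (hs : IsFlatnessScale (Module.finrank ℝ E) p β C σ l η R a l' τ) (hb : b ∈ frontier Ω)
    (hh : b + ν b + h ∈ Ω) (hδh : δ[Ω] (b + ν b + h) = 1) (hl : ‖h‖ ≤ l) :
    v (b + ν b + h) - v (b + ν b) ≤ 2 * σ := by
  have hR := hs.one_le_height
  set μ := p * C ^ (p - 1) / η + 1
  set x := b + ν b
  have hxΩ : x ∈ Ω := by
    simpa using hΩ.add_smul_mem b hb 1 ⟨one_pos, by linarith [hs.height_lt]⟩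
  have hxS : x ∈ flatnessBox Ω h (ν b) x R l' :=
    ⟨subset_closure hxΩ, subset_closure hh, by simpa using hs.width_pos.le, by simp; linarith⟩
  have hcont : ContinuousOn (fun y => v (y + h) - v y - flatnessBarrier (ν b) x σ μ R a y)
      (flatnessBox Ω h (ν b) x R l') := by
    refine ((hv.continuousOn.comp (by fun_prop) fun y hy => hy.2.1).sub
      (hv.continuousOn.mono fun y hy => hy.1)).sub (Continuous.continuousOn ?_)
    unfold flatnessBarrier
    fun_prop
  obtain ⟨z, hz, hmax⟩ := (isCompact_flatnessBox hΩ.isCompact_closure).exists_isMaxOn ⟨x, hxS⟩ hcont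
  have hzmax := hv.sub_le_add_flatnessBarrier_of_isMaxOn hexp hΩ hC hσ hs hb
    (subset_closure hh) hδh hl hz hmax
  have hbar : flatnessBarrier (ν b) x σ μ R a x ≤ σ := by
    simp only [flatnessBarrier, sub_self, inner_zero_left, norm_zero, zero_sub]
    nlinarith [Real.exp_pos (μ * -R)]
  have := hmax hxS
  simp only [mem_ofPred_eq] at this
  linarith

end IsQuasiStationary

theorem eventually_sub_le_of_boundaryDist_eq_one [FiniteDimensional ℝ E]
    (hexp : IsGBUExponent p β) (hC : 0 < C) {ε : ℝ} (hε : 0 < ε) (l : ℝ) :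
    ∀ᶠ τ in nhdsWithin (0 : ℝ) (Ioi 0), ∀ (Ω : Set E) ν v g L, IsCollar Ω ν τ →
      IsQuasiStationary Ω p β τ C v g L → ∀ x ∈ Ω, ∀ y ∈ Ω, δ[Ω] x = 1 → δ[Ω] y = 1 →
      ‖y - x‖ ≤ l → v y - v x ≤ ε := by
  obtain ⟨η, R, a, l', hscale⟩ := exists_isFlatnessScale hexp (Module.finrank ℝ E) hC
    (half_pos hε) l
  filter_upwards [hscale] with τ hs Ω ν v g L hΩ hv x hx y hy hδx hδy hl
  obtain ⟨b, hb, rfl⟩ : ∃ b ∈ frontier Ω, x = b + ν b := by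
    simpa [hδx] using hΩ.exists_eq_add_smul x hx
      (by linarith [hs.height_lt, hs.one_le_height])
  have hbh : b + ν b + (y - (b + ν b)) = y := by abel
  have := hv.sub_le_of_isFlatnessScale hexp hΩ hC.le (half_pos hε) hs hb
    (hbh.symm ▸ hy) (hbh.symm ▸ hδy) hl
  rw [hbh] at this
  linarith

end TangentialFlatness

section UpperProfile

variable {E : Type*} [NormedAddCommGroup E] [InnerProductSpace ℝ E] {Ω : Set E} {ν : E → E}
  {κ p β M C : ℝ} {v : E → ℝ} {g : E → E} {L : E → ℝ} {x z : E} {γ a Λ τ : ℝ}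

namespace IsGBUExponent

theorem mul_profileSlope_mul_rpow (hexp : IsGBUExponent p β) {k d : ℝ} (hk : 0 ≤ k)
    (hd : 0 ≤ d) :
    (k * profileSlope β * d ^ (-β)) ^ p = k ^ p * (β * profileSlope β) * d ^ (-β - 1) := by
  have hslope := hexp.profileSlope_pos
  rw [Real.mul_rpow (by positivity) (by positivity), Real.mul_rpow hk hslope.le,
    hexp.rpow_neg_rpow hd, hexp.profileSlope_rpow]

theorem sq_mul_le_rpow (hexp : IsGBUExponent p β) {k d t : ℝ} (hk : 1 ≤ k) (hd : 0 ≤ d)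
    (ht : k * profileSlope β * d ^ (-β) ≤ t) :
    k ^ 2 * (β * profileSlope β) * d ^ (-β - 1) ≤ t ^ p := by
  have hβ := hexp.pos
  have hslope := hexp.profileSlope_pos
  have hsq : k ^ 2 ≤ k ^ p := by
    rw [← Real.rpow_two]
    exact Real.rpow_le_rpow_of_exponent_le hk hexp.two_lt.le
  calc k ^ 2 * (β * profileSlope β) * d ^ (-β - 1)
      ≤ k ^ p * (β * profileSlope β) * d ^ (-β - 1) := by gcongr
    _ = (k * profileSlope β * d ^ (-β)) ^ p :=
        (hexp.mul_profileSlope_mul_rpow (by linarith) hd).symm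
    _ ≤ t ^ p := Real.rpow_le_rpow (by positivity) ht (by linarith [hexp.two_lt])

theorem rpow_le_sq_mul (hexp : IsGBUExponent p β) {k d t : ℝ} (hk : 0 < k) (hk1 : k ≤ 1)
    (hd : 0 ≤ d) (ht : 0 ≤ t) (htk : t ≤ k * profileSlope β * d ^ (-β)) :
    t ^ p ≤ k ^ 2 * (β * profileSlope β) * d ^ (-β - 1) := by
  have hβ := hexp.pos
  have hslope := hexp.profileSlope_pos
  have hsq : k ^ p ≤ k ^ 2 := by
    rw [← Real.rpow_two]
    exact Real.rpow_le_rpow_of_exponent_ge hk hk1 hexp.two_lt.le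
  calc t ^ p ≤ (k * profileSlope β * d ^ (-β)) ^ p :=
        Real.rpow_le_rpow ht htk (by linarith [hexp.two_lt])
    _ = k ^ p * (β * profileSlope β) * d ^ (-β - 1) := hexp.mul_profileSlope_mul_rpow hk.le hd
    _ ≤ k ^ 2 * (β * profileSlope β) * d ^ (-β - 1) := by gcongr

theorem one_le_rpow_neg (hexp : IsGBUExponent p β) {d : ℝ} (hd : 0 < d) (hd1 : d ≤ 1) :
    1 ≤ d ^ (-β) ∧ d ^ (-β) ≤ d ^ (-β - 1) :=
  ⟨Real.one_le_rpow_of_pos_of_le_one_of_nonpos hd hd1 (by linarith [hexp.pos]),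
    Real.rpow_le_rpow_of_exponent_ge hd hd1 (by linarith)⟩

end IsGBUExponent

theorem IsGBUExponent.hasDerivAt_profile (hexp : IsGBUExponent p β) (k : ℝ) {s : ℝ} (hs : 0 < s) :
    HasDerivAt (fun s => k * profileCoeff β * s ^ (1 - β)) (k * profileSlope β * s ^ (-β)) s := by
  have := hasDerivAt_const_mul_rpow_one_sub (k * profileCoeff β) β hs
  rwa [mul_assoc k, hexp.profileCoeff_mul] at this

theorem hasDerivAt_const_mul_rpow_neg (k β : ℝ) {s : ℝ} (hs : 0 < s) :
    HasDerivAt (fun s => k * s ^ (-β)) (-(k * β * s ^ (-β - 1))) s :=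
  ((Real.hasDerivAt_rpow_const (.inl hs.ne')).const_mul k).congr_deriv (by ring)

/-- The choice of parameters for which `(1 + γ) * profileCoeff β * δ ^ (1 - β) - a * ‖· - x‖ ^ 2`
is a strict subsolution in the layer of width `1` within distance `Λ` of `x`, staying below
any `v` with gradient constant `C` at distance `Λ`. -/
structure IsSubsolutionScale (n : ℕ) (β C γ a Λ τ : ℝ) : Prop where
  excess_pos : 0 < γ
  penalty_pos : 0 < a
  penalty_lt : a < γ * profileCoeff β
  one_le_width : 1 ≤ Λ
  le_penalty : C / (1 - β) + (1 + 2 * γ) * profileCoeff β ≤ a * Λ ^ 2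
  slope_le : 2 * a * Λ ≤ γ / 2 * profileSlope β
  residual_lt : τ + 2 * n * τ * ((1 + γ) * profileSlope β) + 2 * n * a <
    γ ^ 2 / 4 * (β * profileSlope β)
  one_lt_inv : 1 < τ⁻¹

theorem exists_isSubsolutionScale (hexp : IsGBUExponent p β) (n : ℕ) (hC : 0 < C) (hγ : 0 < γ) :
    ∃ a Λ, ∀ᶠ τ in nhdsWithin (0 : ℝ) (Ioi 0), IsSubsolutionScale n β C γ a Λ τ := by
  have hβ := hexp.one_sub_pos
  have hβ0 := hexp.pos
  have hslope := hexp.profileSlope_pos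
  have hcoeff := hexp.profileCoeff_pos
  set A := C / (1 - β) + (1 + 2 * γ) * profileCoeff β
  set θ := γ ^ 2 / 4 * (β * profileSlope β)
  have hA : 0 < A := by positivity
  have hθ : 0 < θ := by positivity
  obtain ⟨Λ, hΛ1, hpen, hgrad, hres⟩ := ((eventually_ge_atTop 1).and
    ((eventually_const_div_pow_lt A two_ne_zero (by positivity : 0 < γ * profileCoeff β)).and
    ((eventually_const_div_pow_lt (2 * A) one_ne_zero
      (by positivity : 0 < γ / 2 * profileSlope β)).and
    (eventually_const_div_pow_lt (2 * n * A) two_ne_zero (half_pos hθ))))).exists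
  refine ⟨A / Λ ^ 2, Λ, ?_⟩
  filter_upwards [eventually_const_mul_lt (1 + 2 * n * ((1 + γ) * profileSlope β)) (half_pos hθ),
    eventually_lt_inv 1] with τ hτ hτ1
  refine ⟨hγ, by positivity, hpen, hΛ1, (div_mul_cancel₀ A (by positivity)).ge,
    le_trans (le_of_eq ?_) hgrad.le, ?_, hτ1⟩
  · field_simp
  · have hcurv : 2 * n * (A / Λ ^ 2) = 2 * n * A / Λ ^ 2 := by ring
    change _ < θ
    linarith

theorem IsSubsolutionScale.residual_lt_mul {n : ℕ} (hs : IsSubsolutionScale n β C γ a Λ τ)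
    (hexp : IsGBUExponent p β) (hτ : 0 ≤ τ) {X D : ℝ} (hX : 1 ≤ X) (hD : D ≤ X) :
    τ + 2 * n * τ * ((1 + γ) * profileSlope β * D) + 2 * n * a <
      γ ^ 2 / 4 * (β * profileSlope β) * X := by
  have hγ := hs.excess_pos
  have ha := hs.penalty_pos
  have hslope := hexp.profileSlope_pos
  have hres := mul_lt_mul_of_pos_right hs.residual_lt (one_pos.trans_le hX)
  have hconst : τ + 2 * n * a ≤ (τ + 2 * n * a) * X := le_mul_of_one_le_right (by positivity) hX
  have hcurv := mul_le_mul_of_nonneg_left hD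
    (by positivity : 0 ≤ 2 * n * τ * ((1 + γ) * profileSlope β))
  linarith

theorem IsCollar.not_isMaxOn_layerBox_of_mem_frontier (hexp : IsGBUExponent p β)
    (hΩ : IsCollar Ω ν κ) (hκ : 1 < κ⁻¹) (hv : IsQuasiStationary Ω p β M C v g L) {B : ℝ}
    (hB : ∀ y ∈ Ω, ‖g y‖ ≤ B) (ha : 0 ≤ a) {k : ℝ} (hk : 0 < k) (c : ℝ) (hz : z ∈ frontier Ω)
    (hzx : ‖z - x‖ < Λ) :
    ¬IsMaxOn (fun y => c - a * ‖y - x‖ ^ 2 - v y + k * δ[Ω] y ^ (1 - β)) (layerBox Ω x Λ) z := by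
  intro hmax
  obtain ⟨s, hs, hsΛ, hs1, hs0⟩ :=
    ((eventually_const_mul_rpow_lt (B + a * (1 + 2 * Λ)) hexp.pos hk).and
    ((eventually_const_mul_lt 1 (sub_pos.2 hzx)).and
    ((eventually_const_mul_lt 1 one_pos).and self_mem_nhdsWithin))).exists
  have hs0 : 0 < s := hs0
  rw [one_mul] at hsΛ hs1
  have hsκ : s ∈ Ioo 0 κ⁻¹ := ⟨hs0, hs1.trans hκ⟩
  have hyΩ := hΩ.add_smul_mem z hz s hsκ
  have hδy := hΩ.boundaryDist_add_smul z hz s hsκ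
  have hdist : ‖z + s • ν z - x‖ ≤ ‖z - x‖ + s := by
    rw [add_sub_right_comm]
    simpa [norm_smul, hΩ.norm_normal z hz, abs_of_pos hs0] using norm_add_le (z - x) (s • ν z)
  have hvy := (le_abs_self _).trans
    (hv.abs_le_mul_boundaryDist hΩ hB (subset_closure hyΩ) (hδy.trans_lt hsκ.2))
  rw [hδy] at hvy
  have hcmp := hmax (show z + s • ν z ∈ layerBox Ω x Λ from
    ⟨subset_closure hyΩ, by linarith, by linarith⟩)
  simp only [mem_ofPred_eq, hv.eq_zero z hz, boundaryDist_eq_zero hz, hδy,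
    Real.zero_rpow hexp.one_sub_pos.ne'] at hcmp
  have hsq : ‖z + s • ν z - x‖ ^ 2 - ‖z - x‖ ^ 2 ≤ s * (1 + 2 * Λ) := by
    nlinarith [norm_nonneg (z - x), norm_nonneg (z + s • ν z - x)]
  have hsplit : s ^ β * s ^ (1 - β) = s := by
    rw [← Real.rpow_add hs0, add_sub_cancel, Real.rpow_one]
  have := mul_lt_mul_of_pos_right hs (Real.rpow_pos_of_pos hs0 (1 - β))
  rw [mul_assoc, hsplit] at this
  nlinarith [mul_le_mul_of_nonneg_left hsq ha]

namespace IsQuasiStationary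

variable [FiniteDimensional ℝ E]

theorem not_isLocalMax_subsolution_sub (hexp : IsGBUExponent p β) (hΩ : IsCollar Ω ν τ)
    (hv : IsQuasiStationary Ω p β τ C v g L)
    (hs : IsSubsolutionScale (Module.finrank ℝ E) β C γ a Λ τ) (c : ℝ) (hz : z ∈ Ω)
    (hδz : δ[Ω] z < 1) (hzx : ‖z - x‖ < Λ) :
    ¬IsLocalMax (fun y => c - a * ‖y - x‖ ^ 2 - v y +
      (1 + γ) * profileCoeff β * δ[Ω] y ^ (1 - β)) z := by
  intro hmax
  have hγ := hs.excess_pos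
  have ha := hs.penalty_pos
  have hd := hΩ.pos hz
  have hβ := hexp.one_sub_pos
  have hslope := hexp.profileSlope_pos
  have hcp := hexp.profileCoeff_pos
  have hw := ((HasLaplacianAt.const c z).sub ((HasLaplacianAt.norm_sub_sq x z).const_mul a)).sub
    (hv.hasLaplacianAt z hz)
  have hmono : MonotoneOn (fun s => (1 + γ) * profileCoeff β * s ^ (1 - β)) (Ioi 0) :=
    fun s hs t _ hst => by
      have : 0 < s := hs
      dsimp only
      gcongr
  obtain ⟨hgrad, hlap⟩ := hΩ.norm_eq_and_add_le_of_isLocalMax hz (hδz.trans hs.one_lt_inv) hw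
    ((lt_mem_nhds hd).mono fun s hs => hexp.hasDerivAt_profile (1 + γ) hs)
    (hasDerivAt_const_mul_rpow_neg _ β hd) (.inl hmono) hmax
  set d := δ[Ω] z
  obtain ⟨hD1, hDX⟩ := hexp.one_le_rpow_neg hd hδz.le
  rw [abs_of_pos (by positivity)] at hgrad hlap
  have hgz : (1 + γ / 2) * profileSlope β * d ^ (-β) ≤ ‖g z‖ := by
    have htri := norm_sub_le (0 - a • ((2 : ℝ) • (z - x))) (g z)
    rw [hgrad, zero_sub, norm_neg, norm_smul, norm_smul, Real.norm_of_nonneg ha.le,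
      Real.norm_two] at htri
    have : γ / 2 * profileSlope β ≤ γ / 2 * profileSlope β * d ^ (-β) :=
      le_mul_of_one_le_right (by positivity) hD1
    nlinarith [hs.slope_le]
  have hpow := hexp.sq_mul_le_rpow (by linarith : 1 ≤ 1 + γ / 2) hd.le hgz
  have hres := hs.residual_lt_mul hexp hΩ.curvature_pos.le (hD1.trans hDX) hDX
  linarith [(abs_le.1 (hv.abs_residual_le z hz)).2]

theorem le_profileCoeff_add_of_isSubsolutionScale (hexp : IsGBUExponent p β)
    (hΩ : IsCollar Ω ν τ) (hv : IsQuasiStationary Ω p β τ C v g L) (hC : 0 ≤ C) {B : ℝ}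
    (hB : ∀ y ∈ Ω, ‖g y‖ ≤ B) (hs : IsSubsolutionScale (Module.finrank ℝ E) β C γ a Λ τ)
    (hx : x ∈ Ω) (hδx : δ[Ω] x = 1)
    (hflat : ∀ y ∈ Ω, δ[Ω] y = 1 → ‖y - x‖ ≤ Λ → v x - γ * profileCoeff β ≤ v y) :
    v x ≤ (1 + 3 * γ) * profileCoeff β := by
  by_contra! hlt
  have hcp := hexp.profileCoeff_pos
  have hβ := hexp.one_sub_pos
  have hγ := hs.excess_pos
  have ha := hs.penalty_pos
  have hτ := hs.one_lt_inv
  obtain ⟨b, hb, hxb⟩ : ∃ b ∈ frontier Ω, x = b + ν b := by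
    simpa [hδx] using hΩ.exists_eq_add_smul x hx (by linarith)
  have hbx : ‖b - x‖ = 1 := by
    rw [hxb, sub_add_cancel_left, norm_neg, hΩ.norm_normal b hb]
  have hδ : ∀ y, δ[Ω] y ≤ 1 → (1 + γ) * profileCoeff β * δ[Ω] y ^ (1 - β) ≤
      (1 + γ) * profileCoeff β := fun y hy =>
    mul_le_of_le_one_right (by positivity)
      (Real.rpow_le_one (boundaryDist_nonneg Ω y) hy hβ.le)
  have hcont : ContinuousOn (fun y => γ * profileCoeff β - a * ‖y - x‖ ^ 2 - v y +
      (1 + γ) * profileCoeff β * δ[Ω] y ^ (1 - β)) (layerBox Ω x Λ) := by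
    have hpow : Continuous fun y => δ[Ω] y ^ (1 - β) :=
      (continuous_boundaryDist Ω).rpow_const fun _ => .inr hβ.le
    exact ((by fun_prop : Continuous fun y => γ * profileCoeff β - a * ‖y - x‖ ^ 2).continuousOn.sub
      (hv.continuousOn.mono fun y hy => hy.1)).add (continuous_const.mul hpow).continuousOn
  have hbox := hΩ.nonpos_on_layerBox hcont
    (fun z hz hδz hzx => by
      have := hflat z hz hδz hzx
      have := hδ z hδz.le
      nlinarith [sq_nonneg ‖z - x‖])
    (fun z hz hδz hzx => by
      have hCz := (abs_le.1 (hv.abs_le_mul_rpow hexp hΩ hz (hδz.trans_lt hτ))).1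
      have hrpow := Real.rpow_le_one (boundaryDist_nonneg Ω z) hδz hβ.le
      have hC' : C / (1 - β) * δ[Ω] z ^ (1 - β) ≤ C / (1 - β) :=
        mul_le_of_le_one_right (by positivity) hrpow
      rw [hzx]
      linarith [hδ z hδz, hs.le_penalty])
    (fun z hz hzx hmax => (hΩ.not_isMaxOn_layerBox_of_mem_frontier hexp hτ hv hB ha.le
      (by positivity) _ hz hzx hmax).elim)
    (fun z hz hδz hzx hmax =>
      (hv.not_isLocalMax_subsolution_sub hexp hΩ hs _ hz hδz hzx hmax).elim)
    b ⟨frontier_subset_closure hb, by simp [boundaryDist_eq_zero hb], hbx.trans_le hs.one_le_width⟩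
  rw [hv.eq_zero b hb, boundaryDist_eq_zero hb, Real.zero_rpow hβ.ne', hbx] at hbox
  linarith [hs.penalty_lt]

end IsQuasiStationary

theorem eventually_le_profileCoeff_add [FiniteDimensional ℝ E] (hexp : IsGBUExponent p β)
    (hC : 0 < C) {ε : ℝ} (hε : 0 < ε) :
    ∀ᶠ τ in nhdsWithin (0 : ℝ) (Ioi 0), ∀ (Ω : Set E) ν v g L, IsCollar Ω ν τ →
      IsQuasiStationary Ω p β τ C v g L → (∃ B, ∀ y ∈ Ω, ‖g y‖ ≤ B) → ∀ x ∈ Ω, δ[Ω] x = 1 →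
      v x ≤ profileCoeff β + ε := by
  have hcp := hexp.profileCoeff_pos
  set γ := ε / (3 * profileCoeff β)
  have hγ : 0 < γ := by positivity
  have hγε : 3 * γ * profileCoeff β = ε := by
    simp only [γ]
    field_simp
  obtain ⟨a, Λ, hscale⟩ := exists_isSubsolutionScale hexp (Module.finrank ℝ E) hC hγ
  filter_upwards [hscale, eventually_sub_le_of_boundaryDist_eq_one (E := E) hexp hC
    (by positivity : 0 < γ * profileCoeff β) Λ]
    with τ hs hflat Ω ν v g L hΩ hv ⟨B, hB⟩ x hx hδx
  have := hv.le_profileCoeff_add_of_isSubsolutionScale hexp hΩ hC.le hB hs hx hδx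
    fun y hy hδy hyx => by
      linarith [hflat Ω ν v g L hΩ hv y hy x hx hδy hδx (by rwa [norm_sub_rev])]
  linarith

end UpperProfile

section LinearBarrier

variable {E : Type*} [NormedAddCommGroup E] [InnerProductSpace ℝ E] {Ω : Set E} {ν : E → E}
  {p β M C : ℝ} {v w : E → ℝ} {g : E → E} {L : E → ℝ} {x z : E} {A m γ k a Λ τ : ℝ}

/-- `w` is nonpositive on the boundary of `Ω` and satisfies `-Δw ≤ |∇w|ᵖ + M` in `Ω`. -/
structure IsApproxSubsolution (Ω : Set E) (p M : ℝ) (w : E → ℝ) (g : E → E) (L : E → ℝ) :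
    Prop where
  continuousOn : ContinuousOn w (closure Ω)
  nonpos : ∀ b ∈ frontier Ω, w b ≤ 0
  hasLaplacianAt : ∀ x ∈ Ω, HasLaplacianAt w (g x) (L x) x
  neg_le : ∀ x ∈ Ω, -L x ≤ ‖g x‖ ^ p + M

namespace IsQuasiStationary

theorem isApproxSubsolution (hv : IsQuasiStationary Ω p β M C v g L) :
    IsApproxSubsolution Ω p M v g L where
  continuousOn := hv.continuousOn
  nonpos b hb := (hv.eq_zero b hb).le
  hasLaplacianAt := hv.hasLaplacianAt
  neg_le x hx := by linarith [(abs_le.1 (hv.abs_residual_le x hx)).1]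

theorem isApproxSubsolution_neg_mul (hv : IsQuasiStationary Ω p β M C v g L) {c : ℝ}
    (hc : c ∈ Icc 0 1) (hM : 0 ≤ M) :
    IsApproxSubsolution Ω p M (fun y => -c * v y) (fun y => -c • g y) (fun y => -c * L y) where
  continuousOn := continuousOn_const.mul hv.continuousOn
  nonpos b hb := by rw [hv.eq_zero b hb, mul_zero]
  hasLaplacianAt x hx := (hv.hasLaplacianAt x hx).const_mul (-c)
  neg_le x hx := by
    have hL : L x ≤ M := by
      linarith [(abs_le.1 (hv.abs_residual_le x hx)).2, Real.rpow_nonneg (norm_nonneg (g x)) p]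
    have hcL : c * L x ≤ M := (mul_le_mul_of_nonneg_left hL hc.1).trans
      (mul_le_of_le_one_left hM hc.2)
    linarith [Real.rpow_nonneg (norm_nonneg (-c • g x)) p]

end IsQuasiStationary

theorem IsGBUExponent.profileCoeff_mul_sub_le (hexp : IsGBUExponent p β) (hk : 0 < k) {d : ℝ}
    (hd : 0 ≤ d) :
    profileCoeff β * ((d + k) ^ (1 - β) - k ^ (1 - β)) ≤ profileSlope β * k ^ (-β) * d := by
  have hβ := hexp.one_sub_pos
  have hfactor : d + k = k * (1 + d / k) := by field_simp; ring
  have hbern := rpow_one_add_le_one_add_mul_self (s := d / k) (p := 1 - β)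
    (by linarith [div_nonneg hd hk.le]) hβ.le (by linarith [hexp.pos])
  have hpow : k ^ (1 - β) * (d / k) = k ^ (-β) * d := by
    rw [sub_eq_neg_add, Real.rpow_add_one hk.ne']
    field_simp
  have hsub : (d + k) ^ (1 - β) - k ^ (1 - β) ≤ (1 - β) * (k ^ (-β) * d) := by
    rw [hfactor, Real.mul_rpow hk.le (by positivity), ← hpow]
    nlinarith [Real.rpow_pos_of_pos hk (1 - β)]
  calc _ ≤ profileCoeff β * ((1 - β) * (k ^ (-β) * d)) := by
        gcongr
        exact hexp.profileCoeff_pos.le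
    _ = _ := by rw [← hexp.profileCoeff_mul]; ring

/-- The choice of parameters for which
`(1 - γ) * profileCoeff β * ((δ + k) ^ (1 - β) - k ^ (1 - β)) + a * ‖· - x‖ ^ 2` is a strict
supersolution in the layer of width `1` within distance `Λ` of `x`, at least `m` at height `1`
and at least `A` at distance `Λ`. Unlike the profile itself it has finite slope at the
boundary. -/
structure IsSupersolutionScale (n : ℕ) (β A m γ k a Λ τ : ℝ) : Prop where
  deficit_pos : 0 < γ
  deficit_le : γ ≤ 1 / 2
  shift_pos : 0 < k
  shift_le : k ≤ 1
  penalty_nonneg : 0 ≤ a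
  width_pos : 0 < Λ
  le_penalty : A ≤ a * Λ ^ 2
  le_profile : m ≤ (1 - γ) * profileCoeff β * ((1 + k) ^ (1 - β) - k ^ (1 - β))
  slope_le : 4 * a * Λ ≤ γ / 8 * profileSlope β
  residual_lt : 4 * τ + 4 * n * τ * profileSlope β + 8 * n * a < γ / 4 * (β * profileSlope β)
  one_lt_inv : 1 < τ⁻¹

theorem exists_isSupersolutionScale (hexp : IsGBUExponent p β) (n : ℕ) (hA : 0 ≤ A)
    (hm : m < profileCoeff β) : ∃ γ k a Λ, 0 < k ∧ ∀ᶠ τ in nhdsWithin (0 : ℝ) (Ioi 0),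
      IsSupersolutionScale n β A m γ k a Λ τ := by
  have hβ := hexp.one_sub_pos
  have hβ0 := hexp.pos
  have hslope := hexp.profileSlope_pos
  have htend : Tendsto (fun k : ℝ => (1 - k) * profileCoeff β *
      ((1 + k) ^ (1 - β) - k ^ (1 - β))) (nhdsWithin 0 (Ioi 0)) (nhds (profileCoeff β)) := by
    refine tendsto_nhdsWithin_of_tendsto_nhds (Continuous.tendsto' ?_ _ _ ?_)
    · have hpow : Continuous fun s : ℝ => s ^ (1 - β) :=
        continuous_id.rpow_const fun _ => .inr hβ.le
      exact (by fun_prop : Continuous fun k : ℝ => (1 - k) * profileCoeff β).mul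
        ((hpow.comp (by fun_prop)).sub hpow)
    · simp [Real.zero_rpow hβ.ne']
  obtain ⟨γ, hprofile, hγ, hγ0⟩ := ((htend.eventually_const_lt hm).and
    ((eventually_const_mul_lt 1 (half_pos one_pos)).and self_mem_nhdsWithin)).exists
  have hγ0 : 0 < γ := hγ0
  rw [one_mul] at hγ
  set θ := γ / 4 * (β * profileSlope β)
  have hθ : 0 < θ := by positivity
  obtain ⟨Λ, hΛ, hgrad, hres⟩ := ((eventually_gt_atTop 0).and
    ((eventually_const_div_pow_lt (4 * A) one_ne_zero
      (by positivity : 0 < γ / 8 * profileSlope β)).and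
    (eventually_const_div_pow_lt (8 * n * A) two_ne_zero (half_pos hθ)))).exists
  refine ⟨γ, γ, A / Λ ^ 2, Λ, hγ0, ?_⟩
  filter_upwards [eventually_const_mul_lt (4 + 4 * n * profileSlope β) (half_pos hθ),
    eventually_lt_inv 1] with τ hτ hτ1
  refine ⟨hγ0, hγ.le, hγ0, by linarith, by positivity, hΛ, (div_mul_cancel₀ A (by positivity)).ge,
    hprofile.le, le_trans (le_of_eq ?_) hgrad.le, ?_, hτ1⟩
  · field_simp
  · have hcurv : 8 * n * (A / Λ ^ 2) = 8 * n * A / Λ ^ 2 := by ring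
    change _ < θ
    linarith

theorem IsSupersolutionScale.residual_lt_mul {n : ℕ} (hs : IsSupersolutionScale n β A m γ k a Λ τ)
    (hexp : IsGBUExponent p β) (hτ : 0 ≤ τ) {X D : ℝ} (hX : 1 / 4 ≤ X) (hD : D ≤ 2 * X) :
    τ + 2 * n * τ * (profileSlope β * D) + 2 * n * a < γ / 4 * (β * profileSlope β) * X := by
  have ha := hs.penalty_nonneg
  have hslope := hexp.profileSlope_pos
  have hres := mul_lt_mul_of_pos_right hs.residual_lt (by linarith : 0 < X)
  have hconst := mul_le_mul_of_nonneg_left hX (by positivity : 0 ≤ 4 * τ + 8 * n * a)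
  have hcurv := mul_le_mul_of_nonneg_left hD (by positivity : 0 ≤ 2 * n * τ * profileSlope β)
  linarith

theorem IsGBUExponent.antitoneOn_neg_profile_shift (hexp : IsGBUExponent p β) (hγ : γ ≤ 1)
    (hk : 0 ≤ k) :
    AntitoneOn (fun s => -(1 - γ) * profileCoeff β * (s + k) ^ (1 - β)) (Ioi 0) :=
  fun s hs t _ hst => by
    have hs : 0 < s := hs
    have hcp := hexp.profileCoeff_pos
    refine mul_le_mul_of_nonpos_left
      (Real.rpow_le_rpow (by linarith) (by linarith) hexp.one_sub_pos.le) ?_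
    exact mul_nonpos_of_nonpos_of_nonneg (by linarith) hcp.le

theorem IsGBUExponent.inv_two_le_rpow_neg (hexp : IsGBUExponent p β) {e : ℝ} (he : 0 < e)
    (he2 : e ≤ 2) : 1 / 2 ≤ e ^ (-β) ∧ 1 / 4 ≤ e ^ (-β - 1) ∧ e ^ (-β) ≤ 2 * e ^ (-β - 1) := by
  have hinv : 1 / 2 ≤ e⁻¹ := by rw [one_div]; gcongr
  have hhalf : 1 / 2 ≤ e ^ (-β) := by
    rw [Real.rpow_neg he.le, one_div]
    gcongr
    calc e ^ β ≤ 2 ^ β := by gcongr; exact hexp.pos.le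
      _ ≤ 2 ^ (1 : ℝ) := Real.rpow_le_rpow_of_exponent_le one_le_two hexp.lt_one.le
      _ = 2 := Real.rpow_one 2
  have hsucc : e ^ (-β - 1) = e ^ (-β) * e⁻¹ := by
    rw [Real.rpow_sub_one he.ne', div_eq_mul_inv]
  rw [hsucc]
  exact ⟨hhalf, by nlinarith, by nlinarith⟩

namespace IsApproxSubsolution

variable [FiniteDimensional ℝ E]

theorem not_isLocalMax_sub_supersolution (hexp : IsGBUExponent p β) (hΩ : IsCollar Ω ν τ)
    (hw : IsApproxSubsolution Ω p τ w g L)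
    (hs : IsSupersolutionScale (Module.finrank ℝ E) β A m γ k a Λ τ) (c : ℝ) (hz : z ∈ Ω)
    (hδz : δ[Ω] z < 1) (hzx : ‖z - x‖ < Λ) :
    ¬IsLocalMax (fun y => w y - (a * ‖y - x‖ ^ 2 + c) +
      -(1 - γ) * profileCoeff β * (δ[Ω] y + k) ^ (1 - β)) z := by
  intro hmax
  obtain ⟨hγ, hγ2, hk, hk1, ha, -, -, -, hgrada, -, hτ⟩ := id hs
  have hd := hΩ.pos hz
  have hslope := hexp.profileSlope_pos
  have hγ1 : 0 < 1 - γ := by linarith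
  have hlapw := (hw.hasLaplacianAt z hz).sub
    (((HasLaplacianAt.norm_sub_sq x z).const_mul a).add (.const c z))
  have hpos : ∀ᶠ s in nhds (δ[Ω] z), 0 < s + k := by
    filter_upwards [lt_mem_nhds hd] with s hs
    linarith
  obtain ⟨hgrad, hlap⟩ := hΩ.norm_eq_and_add_le_of_isLocalMax hz (hδz.trans hτ) hlapw
    (hpos.mono fun s hs => (hexp.hasDerivAt_profile (-(1 - γ)) hs).comp_add_const s k)
    ((hasDerivAt_const_mul_rpow_neg _ β hpos.self_of_nhds).comp_add_const _ k)
    (.inr (hexp.antitoneOn_neg_profile_shift (by linarith) hk.le)) hmax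
  set e := δ[Ω] z + k
  have he : 0 < e := hpos.self_of_nhds
  obtain ⟨hD, hX, hDX⟩ := hexp.inv_two_le_rpow_neg he (by linarith)
  have habs : |-(1 - γ) * profileSlope β * e ^ (-β)| = (1 - γ) * profileSlope β * e ^ (-β) := by
    rw [neg_mul, neg_mul, abs_neg, abs_of_pos (by positivity)]
  rw [habs] at hgrad hlap
  have hgz : ‖g z‖ ≤ (1 - 7 * γ / 8) * profileSlope β * e ^ (-β) := by
    have htri := norm_le_norm_sub_add (g z) (a • ((2 : ℝ) • (z - x)) + 0)
    rw [hgrad, add_zero, norm_smul, norm_smul, Real.norm_of_nonneg ha, Real.norm_two] at htri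
    have : a * (2 * ‖z - x‖) ≤ a * (2 * Λ) := by gcongr
    nlinarith [mul_le_mul_of_nonneg_left hD (by positivity : 0 ≤ γ / 8 * profileSlope β)]
  have hpow := hexp.rpow_le_sq_mul (by linarith : 0 < 1 - 7 * γ / 8) (by linarith) he.le
    (norm_nonneg _) hgz
  have hsq : (1 - 7 * γ / 8) ^ 2 * (β * profileSlope β * e ^ (-β - 1)) ≤
      (1 - 5 * γ / 4) * (β * profileSlope β * e ^ (-β - 1)) := by
    have := hexp.pos
    gcongr
    nlinarith
  have hτ0 := hΩ.curvature_pos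
  have hres := hs.residual_lt_mul hexp hτ0.le hX hDX
  have hcurv : 0 ≤ γ * (2 * Module.finrank ℝ E * τ * (profileSlope β * e ^ (-β))) := by positivity
  linarith [hw.neg_le z hz]

theorem le_mul_boundaryDist (hexp : IsGBUExponent p β) (hΩ : IsCollar Ω ν τ)
    (hw : IsApproxSubsolution Ω p τ w g L)
    (hs : IsSupersolutionScale (Module.finrank ℝ E) β A m γ k a Λ τ) (hx : x ∈ Ω)
    (hδx : δ[Ω] x ≤ 1) (hside : ∀ y ∈ closure Ω, δ[Ω] y ≤ 1 → w y ≤ A)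
    (htop : ∀ y ∈ Ω, δ[Ω] y = 1 → ‖y - x‖ ≤ Λ → w y ≤ m) :
    w x ≤ profileSlope β * k ^ (-β) * δ[Ω] x := by
  have hβ := hexp.one_sub_pos
  have hcp := hexp.profileCoeff_pos
  have hk := hs.shift_pos
  have hγ : 0 < 1 - γ := by linarith [hs.deficit_le]
  have ha := hs.penalty_nonneg
  have hprofile : ∀ y, (1 - γ) * profileCoeff β * k ^ (1 - β) ≤
      (1 - γ) * profileCoeff β * (δ[Ω] y + k) ^ (1 - β) := fun y => by
    gcongr
    linarith [boundaryDist_nonneg Ω y]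
  set c := -((1 - γ) * profileCoeff β * k ^ (1 - β))
  have hcont : ContinuousOn (fun y => w y - (a * ‖y - x‖ ^ 2 + c) +
      -(1 - γ) * profileCoeff β * (δ[Ω] y + k) ^ (1 - β)) (layerBox Ω x Λ) := by
    have hpow : Continuous fun y => (δ[Ω] y + k) ^ (1 - β) :=
      ((continuous_boundaryDist Ω).add continuous_const).rpow_const fun _ => .inr hβ.le
    exact ((hw.continuousOn.mono fun y hy => hy.1).sub (by fun_prop)).add
      (continuous_const.mul hpow).continuousOn
  have hbox := hΩ.nonpos_on_layerBox hcont
    (fun z hz hδz hzx => by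
      rw [hδz]
      nlinarith [htop z hz hδz hzx, hs.le_profile, sq_nonneg ‖z - x‖])
    (fun z hz hδz hzx => by
      rw [hzx]
      linarith [hside z hz hδz, hs.le_penalty, hprofile z])
    (fun z hz _ _ => by
      nlinarith [hw.nonpos z hz, hprofile z, sq_nonneg ‖z - x‖])
    (fun z hz hδz hzx hmax =>
      (hw.not_isLocalMax_sub_supersolution hexp hΩ hs _ hz hδz hzx hmax).elim)
    x ⟨subset_closure hx, hδx, by simpa using hs.width_pos.le⟩
  have hlin := hexp.profileCoeff_mul_sub_le hk (boundaryDist_nonneg Ω x)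
  have hγprofile := mul_le_mul_of_nonneg_left (hprofile x) hs.deficit_pos.le
  simp only [sub_self, norm_zero, c] at hbox
  have : 0 ≤ γ * (profileCoeff β * ((δ[Ω] x + k) ^ (1 - β) - k ^ (1 - β))) := by
    nlinarith
  linarith

end IsApproxSubsolution

namespace IsQuasiStationary

variable [FiniteDimensional ℝ E]

theorem abs_le_mul_boundaryDist_of_top_le (hexp : IsGBUExponent p β) (hΩ : IsCollar Ω ν τ)
    (hv : IsQuasiStationary Ω p β τ C v g L) (hC : 0 ≤ C) (hm : 0 < m)
    (hs : IsSupersolutionScale (Module.finrank ℝ E) β (C / (1 - β)) m γ k a Λ τ) (hx : x ∈ Ω)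
    (hδx : δ[Ω] x ≤ 1) (htop : ∀ y ∈ Ω, δ[Ω] y = 1 → ‖y - x‖ ≤ Λ → v y ≤ m) :
    |v x| ≤ (1 + C / (1 - β) / m) * (profileSlope β * k ^ (-β)) * δ[Ω] x := by
  have hβ := hexp.one_sub_pos
  have hA : 0 ≤ C / (1 - β) := by positivity
  set N := 1 + C / (1 - β) / m
  have hN : 1 ≤ N := le_add_of_nonneg_right (by positivity)
  have hinv : N⁻¹ ∈ Icc (0 : ℝ) 1 := ⟨by positivity, inv_le_one_of_one_le₀ hN⟩
  have habs : ∀ y ∈ closure Ω, δ[Ω] y ≤ 1 → |v y| ≤ C / (1 - β) := fun y hy hδy =>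
    (hv.abs_le_mul_rpow hexp hΩ hy (hδy.trans_lt hs.one_lt_inv)).trans <|
      mul_le_of_le_one_right hA (Real.rpow_le_one (boundaryDist_nonneg Ω y) hδy hβ.le)
  have hneg : ∀ y ∈ closure Ω, δ[Ω] y ≤ 1 → -N⁻¹ * v y ≤ N⁻¹ * (C / (1 - β)) := fun y hy hδy => by
    have := mul_le_mul_of_nonneg_left (neg_le_of_abs_le (habs y hy hδy)) hinv.1
    linarith
  have hNm : N⁻¹ * (C / (1 - β)) ≤ m := by
    rw [inv_mul_le_iff₀ (by linarith), add_mul, div_mul_cancel₀ _ hm.ne']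
    linarith
  have hupper := hv.isApproxSubsolution.le_mul_boundaryDist hexp hΩ hs hx hδx
    (fun y hy hδy => (le_abs_self _).trans (habs y hy hδy)) htop
  -- A small multiple of `-v` meets the condition at height `1` whatever the size of `v`.
  have hlower := (hv.isApproxSubsolution_neg_mul hinv hΩ.curvature_pos.le).le_mul_boundaryDist
    hexp hΩ hs hx hδx
    (fun y hy hδy => (hneg y hy hδy).trans (mul_le_of_le_one_left hA hinv.2))
    (fun y hy hδy _ => (hneg y (subset_closure hy) hδy.le).trans hNm)
  have hbar : 0 ≤ profileSlope β * k ^ (-β) * δ[Ω] x := by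
    have := hexp.profileSlope_pos
    have := hs.shift_pos
    have := boundaryDist_nonneg Ω x
    positivity
  rw [neg_mul, ← mul_neg, inv_mul_le_iff₀ (by linarith), ← mul_assoc] at hlower
  exact abs_le.2 ⟨by linarith, by nlinarith⟩

end IsQuasiStationary

end LinearBarrier

section BoundaryGradientBound

variable {E : Type*} [NormedAddCommGroup E] [InnerProductSpace ℝ E]
  {Ω : Set E} {ν : E → E} {p β κ M C K N θ : ℝ} {v : E → ℝ} {g : E → E} {L : E → ℝ} {a x y : E}

namespace IsQuasiStationary

theorem abs_laplacian_le (hv : IsQuasiStationary Ω p β M C v g L) (hy : y ∈ Ω) :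
    |L y| ≤ M + ‖g y‖ ^ p := by
  have hpow : 0 ≤ ‖g y‖ ^ p := Real.rpow_nonneg (norm_nonneg _) p
  have hres := abs_le.1 (hv.abs_residual_le y hy)
  exact abs_le.2 ⟨by linarith, by linarith⟩

theorem norm_gradient_rpow_le (hexp : IsGBUExponent p β)
    (hv : IsQuasiStationary Ω p β M C v g L) (hC : 0 ≤ C) (hy : y ∈ Ω) :
    ‖g y‖ ^ p ≤ C ^ (p - 1) * (δ[Ω] y)⁻¹ * ‖g y‖ := by
  have hp := hexp.two_lt
  calc ‖g y‖ ^ p = ‖g y‖ ^ (p - 1) * ‖g y‖ := by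
        rw [← Real.rpow_add_one' (norm_nonneg _) (by linarith), sub_add_cancel]
    _ ≤ (C * δ[Ω] y ^ (-β)) ^ (p - 1) * ‖g y‖ := by
        gcongr
        · linarith
        · exact hv.norm_gradient_le y hy
    _ = C ^ (p - 1) * (δ[Ω] y)⁻¹ * ‖g y‖ := by
        have hδ := boundaryDist_nonneg Ω y
        rw [Real.mul_rpow hC (by positivity), hexp.rpow_neg_rpow_sub_one hδ]

theorem abs_laplacian_le_of_norm_gradient_mul_le (hexp : IsGBUExponent p β)
    (hv : IsQuasiStationary Ω p β M C v g L) (hC : 0 ≤ C) (hy : y ∈ Ω) {e h : ℝ} (he : 0 < e)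
    (hh : 0 < h) (hδ : h ≤ δ[Ω] y) (hN : ‖g y‖ * e ≤ N) :
    |L y| ≤ M + C ^ (p - 1) * N / (h * e) := by
  refine (hv.abs_laplacian_le hy).trans (add_le_add_right ?_ M)
  calc ‖g y‖ ^ p ≤ C ^ (p - 1) * (δ[Ω] y)⁻¹ * ‖g y‖ := hv.norm_gradient_rpow_le hexp hC hy
    _ ≤ C ^ (p - 1) * h⁻¹ * (N / e) := by
        gcongr
        rwa [le_div_iff₀ he]
    _ = C ^ (p - 1) * N / (h * e) := by field_simp

variable [FiniteDimensional ℝ E]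

theorem norm_gradient_le_of_radius (hexp : IsGBUExponent p β)
    (hv : IsQuasiStationary Ω p β M C v g L) (hC : 0 ≤ C) (hK : 0 ≤ K)
    (hlin : ∀ y ∈ Ω, ‖y - a‖ < 1 → |v y| ≤ K * δ[Ω] y)
    (hN : ∀ y ∈ Ω, ‖y - a‖ < 1 → ‖g y‖ * (1 - ‖y - a‖) ≤ N) (hx : x ∈ Ω) {r : ℝ} (hr : 0 < r)
    (hrδ : r ≤ δ[Ω] x / 2) (hra : r ≤ (1 - ‖x - a‖) / 2) :
    ‖g x‖ ≤ Module.finrank ℝ E * (K * (3 / 2 * δ[Ω] x)) / r +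
      (M + 4 * C ^ (p - 1) * N / (δ[Ω] x * (1 - ‖x - a‖))) * r / 2 := by
  set d := 1 - ‖x - a‖ with hd
  have hd0 : 0 < d := by linarith [hd]
  have hδ0 : 0 < δ[Ω] x := by linarith
  have hball : ∀ y ∈ closedBall x r, y ∈ Ω ∧ d / 2 ≤ 1 - ‖y - a‖ ∧
      δ[Ω] x / 2 ≤ δ[Ω] y ∧ δ[Ω] y ≤ 3 / 2 * δ[Ω] x := fun y hy => by
    obtain ⟨hyΩ, hyδ⟩ := mem_and_abs_boundaryDist_sub_le hx (by linarith) hy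
    rw [mem_closedBall, dist_eq_norm] at hy
    have hya := norm_sub_le_norm_sub_add_norm_sub y x a
    have := abs_le.1 hyδ
    exact ⟨hyΩ, by linarith, by linarith, by linarith⟩
  refine norm_gradient_le_of_hasLaplacianAt hr
    (fun y hy => hv.hasLaplacianAt y (hball y hy).1) (fun y hy => ?_) fun y hy => ?_
  · obtain ⟨hyΩ, hyd, -, hyδ⟩ := hball y hy
    exact (hlin y hyΩ (by linarith)).trans (mul_le_mul_of_nonneg_left hyδ hK)
  · obtain ⟨hyΩ, hyd, hyδ, -⟩ := hball y hy
    have hgy : ‖g y‖ * (d / 2) ≤ N :=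
      (mul_le_mul_of_nonneg_left hyd (norm_nonneg _)).trans (hN y hyΩ (by linarith))
    refine (hv.abs_laplacian_le_of_norm_gradient_mul_le hexp hC hyΩ (half_pos hd0)
      (half_pos hδ0) hyδ hgy).trans_eq ?_
    field_simp
    ring

theorem norm_gradient_mul_le (hexp : IsGBUExponent p β) (hΩ : IsCollar Ω ν κ)
    (hv : IsQuasiStationary Ω p β M C v g L) (hC : 0 ≤ C) (hK : 0 ≤ K) (ha : a ∈ frontier Ω)
    (hlin : ∀ y ∈ Ω, ‖y - a‖ < 1 → |v y| ≤ K * δ[Ω] y)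
    (hN : ∀ y ∈ Ω, ‖y - a‖ < 1 → ‖g y‖ * (1 - ‖y - a‖) ≤ N)
    (hθ : 0 < θ) (hθ2 : 2 * θ ≤ 1) (hθC : 4 * C ^ (p - 1) * θ ≤ 1)
    (hx : x ∈ Ω) (hxa : ‖x - a‖ < 1) :
    ‖g x‖ * (1 - ‖x - a‖) ≤ Module.finrank ℝ E * (3 / 2 * K) / θ + M / 2 + N / 2 := by
  have hM : 0 ≤ M := (abs_nonneg _).trans (hv.abs_residual_le x hx)
  have hδ0 := hΩ.pos hx
  have hδ1 : δ[Ω] x ≤ 1 := by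
    linarith [boundaryDist_le_add_norm_sub Ω x a, boundaryDist_eq_zero ha]
  have hd1 : 1 - ‖x - a‖ ≤ 1 := by linarith [norm_nonneg (x - a)]
  have hd0 : 0 < 1 - ‖x - a‖ := by linarith
  have hNx := hN x hx hxa
  set d := 1 - ‖x - a‖
  have hN0 : 0 ≤ N := (mul_nonneg (norm_nonneg _) hd0.le).trans hNx
  -- `m` bounds the distance from `x` to the complement of `Ω ∩ ball a 1` from below.
  set m := min (δ[Ω] x) d
  have hm : 0 < m := lt_min hδ0 hd0
  have hmδ : m ≤ δ[Ω] x := min_le_left _ _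
  have hmd : m ≤ d := min_le_right _ _
  have hr : θ * m ≤ m / 2 := by nlinarith
  have hint := mul_le_mul_of_nonneg_right (hv.norm_gradient_le_of_radius hexp hC hK hlin hN hx
    (mul_pos hθ hm) (by linarith) (by linarith)) hd0.le
  have hδd : δ[Ω] x * d ≤ m :=
    le_min (mul_le_of_le_one_right hδ0.le hd1) (mul_le_of_le_one_left hd0.le hδ1)
  have hosc : Module.finrank ℝ E * (K * (3 / 2 * δ[Ω] x)) / (θ * m) * d ≤
      Module.finrank ℝ E * (3 / 2 * K) / θ := by
    calc _ = Module.finrank ℝ E * (3 / 2 * K) / θ * (δ[Ω] x * d / m) := by field_simp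
      _ ≤ _ := mul_le_of_le_one_right (by positivity) ((div_le_one hm).2 hδd)
  have herr : M * (θ * m) * d ≤ M := by
    rw [mul_assoc]
    exact mul_le_of_le_one_right hM (by nlinarith)
  have hnonlin : 4 * C ^ (p - 1) * N / (δ[Ω] x * d) * (θ * m) * d ≤ N := by
    calc _ = N * (4 * C ^ (p - 1) * θ * (m / δ[Ω] x)) := by field_simp
      _ ≤ N := mul_le_of_le_one_right hN0
        (mul_le_one₀ hθC (by positivity) ((div_le_one hδ0).2 hmδ))
  linarith

theorem norm_gradient_le_of_abs_le_mul_boundaryDist (hexp : IsGBUExponent p β)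
    (hΩ : IsCollar Ω ν κ) (hv : IsQuasiStationary Ω p β M C v g L) (hC : 0 ≤ C) (hK : 0 ≤ K)
    (hg : ∃ B, ∀ y ∈ Ω, ‖g y‖ ≤ B) (ha : a ∈ frontier Ω)
    (hlin : ∀ y ∈ Ω, ‖y - a‖ < 1 → |v y| ≤ K * δ[Ω] y) (hx : x ∈ Ω) (hxa : ‖x - a‖ < 1 / 2) :
    ‖g x‖ ≤ 6 * Module.finrank ℝ E * K * (2 + 4 * C ^ (p - 1)) + 2 * M := by
  obtain ⟨B, hB⟩ := hg
  set W := (fun y => ‖g y‖ * (1 - ‖y - a‖)) '' {y | y ∈ Ω ∧ ‖y - a‖ < 1}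
  have hmem : ∀ y ∈ Ω, ‖y - a‖ < 1 → ‖g y‖ * (1 - ‖y - a‖) ∈ W := fun y hy hya =>
    mem_image_of_mem _ ⟨hy, hya⟩
  have hbdd : BddAbove W := by
    refine ⟨B, ?_⟩
    rintro _ ⟨y, ⟨hy, -⟩, rfl⟩
    refine (mul_le_of_le_one_right (norm_nonneg _) ?_).trans (hB y hy)
    linarith [norm_nonneg (y - a)]
  have hCp : 0 ≤ C ^ (p - 1) := Real.rpow_nonneg hC _
  have hden : 0 < 2 + 4 * C ^ (p - 1) := by linarith
  have hθ : ∀ c ≤ 2 + 4 * C ^ (p - 1), c * (2 + 4 * C ^ (p - 1))⁻¹ ≤ 1 := fun c hc => by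
    rwa [← div_eq_mul_inv, div_le_one hden]
  have hsup : sSup W ≤ Module.finrank ℝ E * (3 / 2 * K) / (2 + 4 * C ^ (p - 1))⁻¹ + M / 2 +
      sSup W / 2 := by
    refine csSup_le ⟨_, hmem x hx (by linarith)⟩ ?_
    rintro _ ⟨y, ⟨hy, hya⟩, rfl⟩
    exact hv.norm_gradient_mul_le hexp hΩ hC hK ha hlin
      (fun z hz hza => le_csSup hbdd (hmem z hz hza)) (inv_pos.2 hden)
      (hθ 2 (by linarith)) (hθ _ (by linarith)) hy hya
  have hle := le_csSup hbdd (hmem x hx (by linarith))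
  have hhalf : ‖g x‖ * (1 / 2) ≤ ‖g x‖ * (1 - ‖x - a‖) := by
    gcongr
    linarith
  rw [div_inv_eq_mul] at hsup
  linarith

end IsQuasiStationary

variable [FiniteDimensional ℝ E]

theorem eventually_norm_gradient_le (hexp : IsGBUExponent p β) (hC : 0 < C) {ε : ℝ}
    (hε : 0 < ε) : ∃ Q, ∀ᶠ τ in nhdsWithin (0 : ℝ) (Ioi 0), ∀ (Ω : Set E) ν v g L,
      IsCollar Ω ν τ → IsQuasiStationary Ω p β τ C v g L → (∃ B, ∀ y ∈ Ω, ‖g y‖ ≤ B) →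
      ∀ a ∈ frontier Ω, ∀ x ∈ Ω, δ[Ω] x = 1 → ‖x - a‖ ≤ 2 → v x ≤ profileCoeff β - ε →
      ∀ z ∈ Ω, ‖z - a‖ < 1 / 2 → ‖g z‖ ≤ Q := by
  have hcp := hexp.profileCoeff_pos
  have hβ := hexp.one_sub_pos
  set m := max (profileCoeff β / 2) (profileCoeff β - ε / 2)
  have hm : 0 < m := lt_max_of_lt_left (half_pos hcp)
  obtain ⟨γ, k, A, Λ, hk, hscale⟩ := exists_isSupersolutionScale hexp (Module.finrank ℝ E)
    (div_nonneg hC.le hβ.le) (max_lt (half_lt_self hcp) (sub_lt_self _ (half_pos hε)))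
  set K := (1 + C / (1 - β) / m) * (profileSlope β * k ^ (-β))
  have hK : 0 ≤ K := by
    have := hexp.profileSlope_pos
    positivity
  refine ⟨6 * Module.finrank ℝ E * K * (2 + 4 * C ^ (p - 1)) + 2, ?_⟩
  filter_upwards [hscale, eventually_const_mul_lt 1 one_pos,
    eventually_sub_le_of_boundaryDist_eq_one (E := E) hexp hC (half_pos hε) (Λ + 3)]
    with τ hs hτ hflat Ω ν v g L hΩ hv hg a ha x hx hδx hxa hvx z hz hza
  have hlin : ∀ y ∈ Ω, ‖y - a‖ < 1 → |v y| ≤ K * δ[Ω] y := fun y hy hya => by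
    refine hv.abs_le_mul_boundaryDist_of_top_le hexp hΩ hC.le hm hs hy ?_ fun w hw hδw hwy => ?_
    · linarith [boundaryDist_le_add_norm_sub Ω y a, boundaryDist_eq_zero ha]
    · have hwx : ‖w - x‖ ≤ Λ + 3 := by
        linarith [norm_sub_le_norm_sub_add_norm_sub w y x,
          norm_sub_le_norm_sub_add_norm_sub y a x, norm_sub_rev a x]
      refine le_max_of_le_right ?_
      linarith [hflat Ω ν v g L hΩ hv x hx w hw hδx hδw hwx]
  linarith [hv.norm_gradient_le_of_abs_le_mul_boundaryDist hexp hΩ hC.le hK hg ha hlin hz hza]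

end BoundaryGradientBound

section GradientAsymptotics

theorem abs_rpow_sub_affine_le {t α : ℝ} (ht : 0 < t) (hα : α ∈ Icc (0 : ℝ) 1) :
    |t ^ α - 1 - α * (t - 1)| ≤ (t - 1) ^ 2 := by
  have hconcave : ∀ γ ∈ Icc (0 : ℝ) 1, t ^ γ ≤ 1 + γ * (t - 1) := fun γ hγ => by
    simpa using rpow_one_add_le_one_add_mul_self (by linarith : -1 ≤ t - 1) hγ.1 hγ.2
  have hα' : 1 - α ∈ Icc (0 : ℝ) 1 := ⟨by linarith [hα.2], by linarith [hα.1]⟩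
  have hprod : t ^ α * t ^ (1 - α) = t := by rw [← Real.rpow_add ht, add_sub_cancel, Real.rpow_one]
  have hlower : 1 + α * (t - 1) - (t - 1) ^ 2 ≤ t ^ α := by
    have hpos : 0 < t ^ (1 - α) := Real.rpow_pos_of_pos ht _
    have hα1 := hconcave (1 - α) hα'
    rcases le_or_gt (1 + α * (t - 1) - (t - 1) ^ 2) 0 with hneg | hnn
    · exact hneg.trans (Real.rpow_nonneg ht.le _)
    · refine le_of_mul_le_mul_right ?_ hpos
      rw [hprod]
      refine (mul_le_mul_of_nonneg_left hα1 hnn.le).trans (sub_nonneg.1 ?_)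
      have hfactor : 0 ≤ (t - 1) ^ 2 * (α ^ 2 + (1 - α) * t) :=
        mul_nonneg (sq_nonneg _) (add_nonneg (sq_nonneg _) (mul_nonneg hα'.1 ht.le))
      linarith
  rw [abs_le]
  constructor <;> nlinarith [hconcave α hα]

variable {E : Type*} [NormedAddCommGroup E] [InnerProductSpace ℝ E] [FiniteDimensional ℝ E]
  {Ω : Set E} {ν : E → E} {κ p β M C : ℝ} {v : E → ℝ} {g : E → E} {L : E → ℝ} {a : E} {θ η : ℝ}

theorem IsCollar.abs_profile_sub_affine_le (hexp : IsGBUExponent p β) (hΩ : IsCollar Ω ν κ)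
    (hκ : 1 < κ⁻¹) (ha : a ∈ frontier Ω) (hθ : θ < 1) {y : E}
    (hy : y ∈ closedBall (a + ν a) θ) :
    |profileCoeff β * δ[Ω] y ^ (1 - β) -
      (profileCoeff β + profileSlope β * ⟪y - (a + ν a), ν a⟫)| ≤
      (profileCoeff β + profileSlope β * κ) * θ ^ 2 := by
  have hone : (1 : ℝ) ∈ Ioo 0 κ⁻¹ := ⟨one_pos, hκ⟩
  have hx := hΩ.add_smul_mem a ha 1 hone
  have hδx := hΩ.boundaryDist_add_smul a ha 1 hone
  rw [one_smul] at hx hδx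
  obtain ⟨hyΩ, hδy⟩ := mem_and_abs_boundaryDist_sub_le hx (hθ.trans_eq hδx.symm) hy
  rw [hδx] at hδy
  have hpow : |δ[Ω] y ^ (1 - β) - 1 - (1 - β) * (δ[Ω] y - 1)| ≤ θ ^ 2 :=
    (abs_rpow_sub_affine_le (hΩ.pos hyΩ) ⟨hexp.one_sub_pos.le, by linarith [hexp.pos]⟩).trans
      (sq_le_sq.2 (hδy.trans (le_abs_self θ)))
  have hdist : |δ[Ω] y - 1 - ⟪y - (a + ν a), ν a⟫| ≤ κ * θ ^ 2 := by
    have h := hΩ.abs_sub_affine_le a ha 1 hone y (subset_closure hyΩ)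
    rw [one_smul] at h
    refine h.trans (mul_le_mul_of_nonneg_left ?_ hΩ.curvature_pos.le)
    exact pow_le_pow_left₀ (norm_nonneg _) (mem_closedBall_iff_norm.1 hy) 2
  calc |profileCoeff β * δ[Ω] y ^ (1 - β) -
        (profileCoeff β + profileSlope β * ⟪y - (a + ν a), ν a⟫)|
      = |profileCoeff β * (δ[Ω] y ^ (1 - β) - 1 - (1 - β) * (δ[Ω] y - 1)) +
          profileSlope β * (δ[Ω] y - 1 - ⟪y - (a + ν a), ν a⟫)| := by
        rw [← hexp.profileCoeff_mul]
        ring_nf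
    _ ≤ profileCoeff β * θ ^ 2 + profileSlope β * (κ * θ ^ 2) := by
        refine (abs_add_le _ _).trans ?_
        rw [abs_mul, abs_mul, abs_of_pos hexp.profileCoeff_pos, abs_of_pos hexp.profileSlope_pos]
        gcongr
        · exact hexp.profileCoeff_pos.le
        · exact hexp.profileSlope_pos.le
    _ = (profileCoeff β + profileSlope β * κ) * θ ^ 2 := by ring

theorem IsQuasiStationary.norm_gradient_sub_le (hexp : IsGBUExponent p β)
    (hv : IsQuasiStationary Ω p β M C v g L) (hΩ : IsCollar Ω ν κ) (hC : 0 ≤ C) (hκ : 1 < κ⁻¹)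
    (ha : a ∈ frontier Ω) (hθ : θ ∈ Ioc (0 : ℝ) (1 / 2))
    (hvη : ∀ y ∈ Ω, ‖y - (a + ν a)‖ ≤ θ →
      |v y - profileCoeff β * δ[Ω] y ^ (1 - β)| ≤ η) :
    ‖g (a + ν a) - profileSlope β • ν a‖ ≤
      Module.finrank ℝ E * (η + (profileCoeff β + profileSlope β * κ) * θ ^ 2) / θ +
        (M + (C * (1 / 2) ^ (-β)) ^ p) * θ / 2 := by
  have hp : 0 ≤ p := by linarith [hexp.two_lt]
  have hone : (1 : ℝ) ∈ Ioo 0 κ⁻¹ := ⟨one_pos, hκ⟩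
  have hx := hΩ.add_smul_mem a ha 1 hone
  have hδx := hΩ.boundaryDist_add_smul a ha 1 hone
  rw [one_smul] at hx hδx
  have hball : ∀ y ∈ closedBall (a + ν a) θ, y ∈ Ω ∧ |δ[Ω] y - 1| ≤ θ := fun y hy =>
    hδx ▸ mem_and_abs_boundaryDist_sub_le hx (by linarith [hθ.2]) hy
  refine norm_gradient_le_of_hasLaplacianAt (L := fun y => L y - (0 + profileSlope β * 0))
    (w := fun y => v y - (profileCoeff β + profileSlope β * ⟪y - (a + ν a), ν a⟫))
    (g := fun y => g y - profileSlope β • ν a) hθ.1 (fun y hy => ?_) (fun y hy => ?_)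
    fun y hy => ?_
  · have haffine := (HasLaplacianAt.const (profileCoeff β) y).add
      ((HasLaplacianAt.inner_sub (ν a) (a + ν a) y).const_mul (profileSlope β))
    rw [zero_add] at haffine
    exact (hv.hasLaplacianAt y (hball y hy).1).sub haffine
  · have hclose := hvη y (hball y hy).1 (mem_closedBall_iff_norm.1 hy)
    have haffine := hΩ.abs_profile_sub_affine_le hexp hκ ha (by linarith [hθ.2]) hy
    exact (abs_sub_le _ (profileCoeff β * δ[Ω] y ^ (1 - β)) _).trans (add_le_add hclose haffine)
  · obtain ⟨hyΩ, hδy⟩ := hball y hy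
    have hhalf : 1 / 2 ≤ δ[Ω] y := by linarith [(abs_le.1 hδy).1, hθ.2]
    rw [mul_zero, add_zero, sub_zero]
    refine (hv.abs_laplacian_le hyΩ).trans ?_
    gcongr
    refine (hv.norm_gradient_le y hyΩ).trans (mul_le_mul_of_nonneg_left ?_ hC)
    exact Real.rpow_le_rpow_of_nonpos (by norm_num) hhalf (neg_nonpos.2 hexp.pos.le)

theorem exists_eventually_norm_gradient_sub_le (hexp : IsGBUExponent p β) (hC : 0 ≤ C) {ε : ℝ}
    (hε : 0 < ε) : ∃ θ ∈ Ioc (0 : ℝ) (1 / 4), ∀ᶠ τ in nhdsWithin (0 : ℝ) (Ioi 0),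
      ∀ (Ω : Set E) ν v g L, IsCollar Ω ν τ → IsQuasiStationary Ω p β τ C v g L →
      ∀ a ∈ frontier Ω,
      (∀ y ∈ Ω, ‖y - (a + ν a)‖ ≤ θ → |v y - profileCoeff β * δ[Ω] y ^ (1 - β)| ≤ θ ^ 2) →
      ‖g (a + ν a) - profileSlope β • ν a‖ ≤ ε := by
  set K := Module.finrank ℝ E * (1 + (profileCoeff β + profileSlope β)) +
    (1 + (C * (1 / 2) ^ (-β)) ^ p) / 2
  obtain ⟨θ, hKθ, hθ⟩ := ((eventually_const_mul_lt K hε).and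
    (Ioc_mem_nhdsGT (by norm_num : (0 : ℝ) < 1 / 4))).exists
  refine ⟨θ, hθ, ?_⟩
  filter_upwards [eventually_lt_inv 1, Ioo_mem_nhdsGT one_pos]
    with τ hτ hτ1 Ω ν v g L hΩ hv a ha hvη
  have hdp := hexp.profileSlope_pos
  calc ‖g (a + ν a) - profileSlope β • ν a‖
      ≤ Module.finrank ℝ E * (θ ^ 2 + (profileCoeff β + profileSlope β * τ) * θ ^ 2) / θ +
          (τ + (C * (1 / 2) ^ (-β)) ^ p) * θ / 2 :=
        hv.norm_gradient_sub_le hexp hΩ hC hτ ha ⟨hθ.1, hθ.2.trans (by norm_num)⟩ hvη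
    _ = (Module.finrank ℝ E * (1 + (profileCoeff β + profileSlope β * τ)) +
          (τ + (C * (1 / 2) ^ (-β)) ^ p) / 2) * θ := by
        field_simp [hθ.1.ne']
    _ ≤ K * θ := by
        have hτ1' := hτ1.2.le
        have hθ0 := hθ.1.le
        simp only [K]
        gcongr
        exact mul_le_of_le_one_right hdp.le hτ1'
    _ ≤ ε := hKθ.le

end GradientAsymptotics

section BlowUpProfile

open Topology

variable {E : Type*} [NormedAddCommGroup E] [InnerProductSpace ℝ E]

/-- `u` is, uniformly at times close to `T` and at time `T` itself, quasi-stationary in `Ω`; its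
gradient `G` is bounded at each earlier time, but possibly not at time `T`. -/
structure IsQuasiStationaryUpTo (Ω : Set E) (p β M C T : ℝ) (u : E → ℝ → ℝ) (G : E → ℝ → E)
    (L : E → ℝ → ℝ) : Prop where
  eventually_slice : ∀ᶠ t in 𝓝[<] T,
    IsQuasiStationary Ω p β M C (fun x => u x t) (fun x => G x t) (fun x => L x t)
  eventually_bounded : ∀ᶠ t in 𝓝[<] T, ∃ B, ∀ x ∈ Ω, ‖G x t‖ ≤ B
  slice_final : IsQuasiStationary Ω p β M C (fun x => u x T) (fun x => G x T) (fun x => L x T)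
  tendsto_final : ∀ x ∈ Ω, Tendsto (u x) (𝓝[<] T) (𝓝 (u x T))

/-- `a` is a boundary point at which the gradient `G` blows up: its limsup as `t → T⁻` and
`x → a` is infinite. -/
structure IsGBUPoint (Ω : Set E) (G : E → ℝ → E) (T : ℝ) (a : E) : Prop where
  mem_frontier : a ∈ frontier Ω
  frequently_le_norm : ∀ K, ∃ᶠ q in 𝓝[Ω] a ×ˢ 𝓝[<] T, K ≤ ‖G q.1 q.2‖

variable {Ω : Set E} {ν : E → E} {κ p β M C T : ℝ} {u : E → ℝ → ℝ} {G : E → ℝ → E}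
  {L : E → ℝ → ℝ} {a : E}

theorem tendsto_boundaryDist (hΩ : IsCollar Ω ν κ) (ha : a ∈ frontier Ω) :
    Tendsto δ[Ω] (𝓝[Ω] a) (𝓝[>] 0) := by
  refine tendsto_nhdsWithin_iff.2 ⟨?_, eventually_mem_nhdsWithin.mono fun x hx => hΩ.pos hx⟩
  have h := (continuous_boundaryDist Ω).tendsto a
  rw [boundaryDist_eq_zero ha] at h
  exact h.mono_left nhdsWithin_le_nhds

namespace IsQuasiStationaryUpTo

theorem eventually_rescale (hexp : IsGBUExponent p β) (hΩ : IsCollar Ω ν κ)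
    (hu : IsQuasiStationaryUpTo Ω p β M C T u G L) {τ : ℝ} (hτ : 0 < τ) :
    ∀ᶠ r in 𝓝[>] (0 : ℝ), IsCollar ((r • ·) ⁻¹' Ω) (fun y => ν (r • y)) τ ∧
      IsQuasiStationaryUpTo ((r • ·) ⁻¹' Ω) p β τ C T (fun y t => r ^ (β - 1) * u (r • y) t)
        (fun y t => r ^ β • G (r • y) t) (fun y t => r ^ (1 + β) * L (r • y) t) := by
  filter_upwards [hΩ.eventually_rescale hexp M C hτ, self_mem_nhdsWithin] with r ⟨hΩr, hres⟩ hr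
  refine ⟨hΩr, hu.eventually_slice.mono fun t ht => hres _ _ _ ht,
    hu.eventually_bounded.mono ?_, hres _ _ _ hu.slice_final,
    fun y hy => (hu.tendsto_final _ hy).const_mul _⟩
  rintro t ⟨B, hB⟩
  refine ⟨r ^ β * B, fun y hy => ?_⟩
  have hrβ : 0 ≤ r ^ β := Real.rpow_nonneg (mem_Ioi.1 hr).le β
  rw [norm_smul, Real.norm_of_nonneg hrβ]
  exact mul_le_mul_of_nonneg_left (hB _ hy) hrβ

variable [FiniteDimensional ℝ E]

theorem eventually_le_mul_rpow (hexp : IsGBUExponent p β) (hΩ : IsCollar Ω ν κ)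
    (hu : IsQuasiStationaryUpTo Ω p β M C T u G L) (hC : 0 < C) {ε : ℝ} (hε : 0 < ε) :
    ∀ᶠ r in 𝓝[>] (0 : ℝ), ∀ x ∈ Ω, δ[Ω] x = r →
      u x T ≤ (profileCoeff β + ε) * r ^ (1 - β) := by
  obtain ⟨τ, hprof, hτ⟩ := ((eventually_le_profileCoeff_add (E := E) hexp hC hε).and
    self_mem_nhdsWithin).exists
  filter_upwards [hu.eventually_rescale hexp hΩ hτ, self_mem_nhdsWithin]
    with r ⟨hΩr, hur⟩ hr x hx hδ
  have hr0 : r ≠ 0 := (mem_Ioi.1 hr).ne'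
  have hx' : r • r⁻¹ • x = x := smul_inv_smul₀ hr0 x
  have hδ' : δ[(r • ·) ⁻¹' Ω] (r⁻¹ • x) = 1 := by
    rw [boundaryDist_preimage_inv_smul hr, hδ, inv_mul_cancel₀ hr0]
  have hmem : r⁻¹ • x ∈ (r • ·) ⁻¹' Ω := by rwa [mem_preimage, hx']
  have hle := le_of_tendsto (hur.tendsto_final _ hmem)
    ((hur.eventually_slice.and hur.eventually_bounded).mono fun t ht =>
      hprof _ _ _ _ _ hΩr ht.1 ht.2 _ hmem hδ')
  rwa [hx', ← neg_sub 1 β, Real.rpow_neg (mem_Ioi.1 hr).le,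
    inv_mul_le_iff₀ (Real.rpow_pos_of_pos hr _), mul_comm] at hle

theorem exists_eventually_norm_gradient_le_of_lt (hexp : IsGBUExponent p β)
    (hΩ : IsCollar Ω ν κ) (hu : IsQuasiStationaryUpTo Ω p β M C T u G L) (hC : 0 < C)
    (ha : a ∈ frontier Ω) {ε : ℝ} (hε : 0 < ε) :
    ∃ Q, ∀ᶠ r in 𝓝[>] (0 : ℝ), ∀ x ∈ Ω, δ[Ω] x = r → ‖x - a‖ ≤ 2 * r →
      u x T < (profileCoeff β - ε) * r ^ (1 - β) →
      ∀ᶠ t in 𝓝[<] T, ∀ z ∈ Ω, ‖z - a‖ < r / 2 → ‖G z t‖ ≤ (r ^ β)⁻¹ * Q := by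
  obtain ⟨Q, hQ⟩ := eventually_norm_gradient_le (E := E) hexp hC hε
  obtain ⟨τ, hgrad, hτ⟩ := (hQ.and self_mem_nhdsWithin).exists
  refine ⟨Q, ?_⟩
  filter_upwards [hu.eventually_rescale hexp hΩ hτ, self_mem_nhdsWithin]
    with r ⟨hΩr, hur⟩ hr x hx hδ hxa hlt
  have hrpos : 0 < r := hr
  have hsmul : ∀ y : E, r • r⁻¹ • y = y := smul_inv_smul₀ hrpos.ne'
  have hnorm : ∀ y : E, ‖r⁻¹ • y - r⁻¹ • a‖ = ‖y - a‖ / r := fun y => by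
    rw [← smul_sub, norm_smul, norm_inv, Real.norm_of_nonneg hrpos.le, inv_mul_eq_div]
  have hmem : ∀ y ∈ Ω, r⁻¹ • y ∈ (r • ·) ⁻¹' Ω := fun y hy => by rwa [mem_preimage, hsmul]
  have hδ' : δ[(r • ·) ⁻¹' Ω] (r⁻¹ • x) = 1 := by
    rw [boundaryDist_preimage_inv_smul hr, hδ, inv_mul_cancel₀ hrpos.ne']
  have ha' : r⁻¹ • a ∈ frontier ((r • ·) ⁻¹' Ω) := by
    rwa [frontier_preimage_smul hrpos.ne', mem_preimage, hsmul]
  have hlt' : r ^ (β - 1) * u (r • r⁻¹ • x) T < profileCoeff β - ε := by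
    rwa [hsmul, ← neg_sub 1 β, Real.rpow_neg hrpos.le,
      inv_mul_lt_iff₀ (Real.rpow_pos_of_pos hr _), mul_comm]
  filter_upwards [hur.eventually_slice, hur.eventually_bounded,
    (hur.tendsto_final _ (hmem x hx)).eventually_lt_const hlt'] with t hslice hB hxt z hz hza
  have hrβ := Real.rpow_pos_of_pos hrpos β
  have hgz := hgrad _ _ _ _ _ hΩr hslice hB _ ha' _ (hmem x hx) hδ'
    (by rwa [hnorm, div_le_iff₀ hrpos]) hxt.le _ (hmem z hz)
    (by rw [hnorm, div_lt_iff₀ hrpos]; linarith)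
  rwa [hsmul, norm_smul, Real.norm_of_nonneg hrβ.le, ← le_inv_mul_iff₀ hrβ] at hgz

theorem eventually_mul_rpow_le (hexp : IsGBUExponent p β) (hΩ : IsCollar Ω ν κ)
    (hu : IsQuasiStationaryUpTo Ω p β M C T u G L) (hC : 0 < C) (ha : IsGBUPoint Ω G T a)
    {ε : ℝ} (hε : 0 < ε) :
    ∀ᶠ r in 𝓝[>] (0 : ℝ), ∀ x ∈ Ω, δ[Ω] x = r → ‖x - a‖ ≤ 2 * r →
      (profileCoeff β - ε) * r ^ (1 - β) ≤ u x T := by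
  obtain ⟨Q, hQ⟩ :=
    hu.exists_eventually_norm_gradient_le_of_lt hexp hΩ hC ha.mem_frontier hε
  filter_upwards [hQ, self_mem_nhdsWithin] with r hr hrpos x hx hδ hxa
  by_contra! hlt
  have hnear : ∀ᶠ z in 𝓝[Ω] a, z ∈ Ω ∧ ‖z - a‖ < r / 2 := by
    filter_upwards [eventually_mem_nhdsWithin,
      mem_nhdsWithin_of_mem_nhds (ball_mem_nhds a (half_pos hrpos))] with z hz hza
    exact ⟨hz, mem_ball_iff_norm.1 hza⟩
  refine ha.frequently_le_norm ((r ^ β)⁻¹ * Q + 1)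
    ((hnear.prod_mk (hr x hx hδ hxa hlt)).mono ?_)
  rintro ⟨z, t⟩ ⟨⟨hz, hza⟩, hbound⟩ hK
  linarith [hbound z hz hza]

theorem eventually_abs_sub_profile_le (hexp : IsGBUExponent p β) (hΩ : IsCollar Ω ν κ)
    (hu : IsQuasiStationaryUpTo Ω p β M C T u G L) (hC : 0 < C) (ha : IsGBUPoint Ω G T a)
    {ε : ℝ} (hε : 0 < ε) :
    ∀ᶠ x in 𝓝[Ω] a, ‖x - a‖ ≤ 2 * δ[Ω] x →
      |u x T - profileCoeff β * δ[Ω] x ^ (1 - β)| ≤ ε * δ[Ω] x ^ (1 - β) := by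
  filter_upwards [eventually_mem_nhdsWithin,
    (tendsto_boundaryDist hΩ ha.mem_frontier).eventually (hu.eventually_le_mul_rpow hexp hΩ hC hε),
    (tendsto_boundaryDist hΩ ha.mem_frontier).eventually
      (hu.eventually_mul_rpow_le hexp hΩ hC ha hε)] with x hx hupper hlower hxa
  rw [abs_le]
  constructor <;> linarith [hupper x hx rfl, hlower x hx rfl hxa]

theorem eventually_abs_rescale_sub_profile_le (hexp : IsGBUExponent p β) (hΩ : IsCollar Ω ν κ)
    (hu : IsQuasiStationaryUpTo Ω p β M C T u G L) (hC : 0 < C) (ha : IsGBUPoint Ω G T a)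
    {ε : ℝ} (hε : 0 < ε) :
    ∀ᶠ r in 𝓝[>] (0 : ℝ), ∀ y ∈ (r • ·) ⁻¹' Ω, ‖y - r⁻¹ • a‖ ≤ 2 →
      ‖y - r⁻¹ • a‖ ≤ 2 * δ[(r • ·) ⁻¹' Ω] y →
      |r ^ (β - 1) * u (r • y) T - profileCoeff β * δ[(r • ·) ⁻¹' Ω] y ^ (1 - β)| ≤ ε := by
  obtain ⟨ρ, hρ, hclose⟩ := mem_nhdsWithin_iff.1
    (hu.eventually_abs_sub_profile_le hexp hΩ hC ha (half_pos hε))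
  filter_upwards [self_mem_nhdsWithin, eventually_const_mul_lt 2 hρ] with r hr hrρ y hy hya2 hya
  have hrpos : 0 < r := hr
  have hδ0 := boundaryDist_nonneg ((r • ·) ⁻¹' Ω) y
  have hnorm : ‖r • y - a‖ = r * ‖y - r⁻¹ • a‖ := by
    rw [← Real.norm_of_nonneg hrpos.le, ← norm_smul, smul_sub, Real.norm_of_nonneg hrpos.le,
      smul_inv_smul₀ hrpos.ne']
  have hball : r • y ∈ ball a ρ := by
    rw [mem_ball_iff_norm, hnorm]
    nlinarith
  have hfr : r⁻¹ • a ∈ frontier ((r • ·) ⁻¹' Ω) := by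
    rw [frontier_preimage_smul hrpos.ne', mem_preimage, smul_inv_smul₀ hrpos.ne']
    exact ha.mem_frontier
  have hδ2 : δ[(r • ·) ⁻¹' Ω] y ^ (1 - β) ≤ 2 := by
    have hle : δ[(r • ·) ⁻¹' Ω] y ≤ 2 := by
      linarith [boundaryDist_le_add_norm_sub ((r • ·) ⁻¹' Ω) y (r⁻¹ • a), boundaryDist_eq_zero hfr]
    calc δ[(r • ·) ⁻¹' Ω] y ^ (1 - β) ≤ 2 ^ (1 - β) :=
          Real.rpow_le_rpow hδ0 hle hexp.one_sub_pos.le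
      _ ≤ 2 := Real.rpow_le_self_of_one_le one_le_two (by linarith [hexp.pos])
  have h := hclose ⟨hball, hy⟩ (by rw [hnorm, boundaryDist_smul hrpos]; nlinarith)
  rw [boundaryDist_smul hrpos, Real.mul_rpow hrpos.le hδ0] at h
  have hcancel : r ^ (β - 1) * r ^ (1 - β) = 1 := by
    rw [← Real.rpow_add hrpos, sub_add_sub_cancel, sub_self, Real.rpow_zero]
  set d := δ[(r • ·) ⁻¹' Ω] y ^ (1 - β)
  calc |r ^ (β - 1) * u (r • y) T - profileCoeff β * d|
      = r ^ (β - 1) * |u (r • y) T - profileCoeff β * (r ^ (1 - β) * d)| := by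
        rw [← abs_of_pos (Real.rpow_pos_of_pos hrpos (β - 1)), ← abs_mul,
          abs_of_pos (Real.rpow_pos_of_pos hrpos (β - 1))]
        congr 1
        linear_combination (profileCoeff β * d) * hcancel
    _ ≤ r ^ (β - 1) * (ε / 2 * (r ^ (1 - β) * d)) := by gcongr
    _ = ε / 2 * d := by linear_combination (ε / 2 * d) * hcancel
    _ ≤ ε := by linarith [mul_le_mul_of_nonneg_left hδ2 (half_pos hε).le]

theorem tendsto_rpow_smul_gradient (hexp : IsGBUExponent p β) (hΩ : IsCollar Ω ν κ)
    (hu : IsQuasiStationaryUpTo Ω p β M C T u G L) (hC : 0 < C) (ha : IsGBUPoint Ω G T a) :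
    Tendsto (fun r : ℝ => r ^ β • G (a + r • ν a) T) (𝓝[>] 0) (𝓝 (profileSlope β • ν a)) := by
  refine Metric.tendsto_nhds.2 fun ε hε => ?_
  obtain ⟨θ, ⟨hθ0, hθ⟩, hgrad⟩ :=
    exists_eventually_norm_gradient_sub_le (E := E) hexp hC.le (half_pos hε)
  obtain ⟨τ, ⟨hgradτ, hτ1⟩, hτ⟩ :=
    ((hgrad.and (eventually_lt_inv 1)).and self_mem_nhdsWithin).exists
  filter_upwards [hu.eventually_rescale hexp hΩ hτ, self_mem_nhdsWithin,
    hu.eventually_abs_rescale_sub_profile_le hexp hΩ hC ha (pow_pos hθ0 2)]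
    with r ⟨hΩr, hur⟩ hr hclose
  have hr0 : r ≠ 0 := (mem_Ioi.1 hr).ne'
  have hsmul : ∀ y : E, r • r⁻¹ • y = y := smul_inv_smul₀ hr0
  have ha' : r⁻¹ • a ∈ frontier ((r • ·) ⁻¹' Ω) := by
    rw [frontier_preimage_smul hr0, mem_preimage, hsmul]
    exact ha.mem_frontier
  have hδ := hΩr.boundaryDist_add_smul _ ha' 1 ⟨one_pos, hτ1⟩
  have hν := hΩr.norm_normal _ ha'
  have h := hgradτ _ _ _ _ _ hΩr hur.slice_final _ ha'
  simp only [hsmul, one_smul, smul_add] at hδ hν h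
  rw [dist_eq_norm]
  refine (h fun y hy hyθ => ?_).trans_lt (half_lt_self hε)
  have hya : ‖y - r⁻¹ • a‖ ≤ θ + 1 := by
    refine (norm_sub_le_norm_sub_add_norm_sub y (r⁻¹ • a + ν a) (r⁻¹ • a)).trans ?_
    rw [add_sub_cancel_left, hν]
    gcongr
  have hδy := boundaryDist_le_add_norm_sub ((r • ·) ⁻¹' Ω) (r⁻¹ • a + ν a) y
  rw [hδ, norm_sub_rev] at hδy
  exact hclose y hy (by linarith) (by linarith)

end IsQuasiStationaryUpTo

end BlowUpProfile

section SmoothBoundary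

open Topology

theorem exists_abs_sub_fderiv_le {F : Type*} [NormedAddCommGroup F] [NormedSpace ℝ F] {f : F → ℝ}
    {b₀ : F} (hf : ContDiffAt ℝ 2 f b₀) :
    ∃ K, ∀ᶠ R in 𝓝[>] (0 : ℝ), ∀ b ∈ ball b₀ R, ∀ y ∈ ball b₀ R,
      |f y - f b - fderiv ℝ f b (y - b)| ≤ K * ‖y - b‖ ^ 2 := by
  obtain ⟨K, t, ht, hK⟩ :=
    (hf.fderiv_right (m := 1) (by norm_num)).exists_lipschitzOnWith
  obtain ⟨R₀, hR₀, hball⟩ := Metric.mem_nhds_iff.1 (inter_mem ht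
    (hf.eventually (by simp) : ∀ᶠ y in 𝓝 b₀, ContDiffAt ℝ 2 f y))
  refine ⟨(K : ℝ), ?_⟩
  filter_upwards [Ioc_mem_nhdsGT hR₀] with R hR b hb y hy
  have hseg : segment ℝ b y ⊆ ball b₀ R := (convex_ball b₀ R).segment_subset hb hy
  have hmem : ∀ z ∈ ball b₀ R, z ∈ t ∧ ContDiffAt ℝ 2 f z := fun z hz =>
    hball (ball_subset_ball hR.2 hz)
  rw [sq, ← mul_assoc, ← Real.norm_eq_abs]
  refine (convex_segment b y).norm_image_sub_le_of_norm_hasFDerivWithin_le'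
    (f' := fderiv ℝ f) (fun z hz => ?_) (fun z hz => ?_) (left_mem_segment ℝ b y)
    (right_mem_segment ℝ b y)
  · exact ((hmem z (hseg hz)).2.differentiableAt (by norm_num)).hasFDerivAt.hasFDerivWithinAt
  · rw [← dist_eq_norm]
    refine (hK.dist_le_mul z (hmem z (hseg hz)).1 b (hmem b hb).1).trans ?_
    rw [dist_eq_norm]
    gcongr
    exact norm_sub_le_of_mem_segment hz

variable {E : Type*} [NormedAddCommGroup E] [InnerProductSpace ℝ E]

/-- The ball of radius `(2 * κ)⁻¹` on the outer side of `b`, touching `b` with unit inward normal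
`e`, does not meet `Ω`. The inequality is `‖y - (b - ρ • e)‖ ≥ ρ`, expanded, with
`ρ = (2 * κ)⁻¹`; it is monotone in `κ` and includes `κ = 0`. -/
structure HasExteriorBall (Ω : Set E) (κ : ℝ) (b e : E) : Prop where
  norm_eq_one : ‖e‖ = 1
  inner_sub_le : ∀ y ∈ Ω, ⟪b - y, e⟫ ≤ κ * ‖y - b‖ ^ 2

variable {Ω : Set E} {κ : ℝ} {b e ν₀ w : E}

theorem norm_add_smul_le {R : ℝ} (hR : 0 < R) (hν : ‖ν₀‖ = 1) :
    ‖w + R • ν₀‖ ≤ R + ⟪w, ν₀⟫ + ‖w‖ ^ 2 / (2 * R) := by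
  have hsq : ‖w + R • ν₀‖ ^ 2 = ‖w‖ ^ 2 + 2 * R * ⟪w, ν₀⟫ + R ^ 2 := by
    rw [norm_add_sq_real, inner_smul_right, norm_smul, hν, Real.norm_of_nonneg hR.le]
    ring
  have hrhs : R + ⟪w, ν₀⟫ + ‖w‖ ^ 2 / (2 * R) = (‖w + R • ν₀‖ ^ 2 + R ^ 2) / (2 * R) := by
    rw [hsq]
    field_simp
    ring
  rw [hrhs, le_div_iff₀ (by positivity)]
  linarith [two_mul_le_add_sq ‖w + R • ν₀‖ R]

theorem HasExteriorBall.mono (h : HasExteriorBall Ω κ b e) {κ' : ℝ} (hκ : κ ≤ κ') :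
    HasExteriorBall Ω κ' b e :=
  ⟨h.norm_eq_one, fun y hy => (h.inner_sub_le y hy).trans (by gcongr)⟩

theorem HasExteriorBall.eq_of_ball_subset (h : HasExteriorBall Ω κ b e) {s : ℝ} (hs : 0 < s)
    (hν : ‖ν₀‖ = 1) (hint : ball (b + s • ν₀) s ⊆ Ω) : ν₀ = e := by
  by_contra hne
  set k := 1 - ⟪ν₀, e⟫
  have hsq : ‖ν₀ - e‖ ^ 2 = 2 * k := by
    rw [norm_sub_sq_real, hν, h.norm_eq_one]
    ring
  have hk : 0 < k := by
    have := norm_pos_iff.2 (sub_ne_zero.2 hne)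
    nlinarith
  have hinner : ⟪ν₀ - e, ν₀⟫ = k ∧ ⟪ν₀ - e, e⟫ = -k := by
    simp only [inner_sub_left, real_inner_self_eq_norm_sq, hν, h.norm_eq_one, k,
      real_inner_comm ν₀ e]
    constructor <;> ring
  obtain ⟨τ, hτκ, hτ, hτs⟩ :=
    ((eventually_const_mul_lt (2 * κ) one_pos).and (Ioo_mem_nhdsGT hs)).exists
  have hmem : b + τ • (ν₀ - e) ∈ Ω := by
    refine hint (mem_ball_iff_norm.2 (lt_of_pow_lt_pow_left₀ 2 hs.le ?_))
    rw [add_sub_add_left_eq_sub, norm_sub_sq_real, inner_smul_left, inner_smul_right, hinner.1,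
      norm_smul, norm_smul, hν, mul_pow, hsq, Real.norm_of_nonneg hτ.le,
      Real.norm_of_nonneg hs.le, conj_trivial]
    nlinarith [mul_pos hτ hk]
  have hle := h.inner_sub_le _ hmem
  rw [sub_add_cancel_left, add_sub_cancel_left, inner_neg_left, inner_smul_left, hinner.2,
    norm_smul, mul_pow, hsq, Real.norm_of_nonneg hτ.le, conj_trivial] at hle
  nlinarith [mul_pos hτ hk]

theorem HasExteriorBall.of_inner_le {D : E} {m K R : ℝ} (hm : 0 < m) (hmD : m ≤ ‖D‖)
    (hK : 0 ≤ K) (hR : 0 < R)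
    (hnear : ∀ y ∈ Ω, ‖y - b‖ < R → ⟪D, y - b⟫ ≤ K * ‖y - b‖ ^ 2) :
    HasExteriorBall Ω (max (K / m) R⁻¹) b (-(‖D‖⁻¹ • D)) := by
  have hunit : ‖-(‖D‖⁻¹ • D)‖ = 1 := by
    rw [norm_neg, norm_smul, norm_inv, norm_norm, inv_mul_cancel₀ (hm.trans_le hmD).ne']
  refine ⟨hunit, fun y hy => ?_⟩
  rcases lt_or_ge ‖y - b‖ R with hlt | hge
  · calc ⟪b - y, -(‖D‖⁻¹ • D)⟫ = ⟪D, y - b⟫ / ‖D‖ := by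
          rw [inner_neg_right, ← inner_neg_left, neg_sub, inner_smul_right, real_inner_comm,
            inv_mul_eq_div]
      _ ≤ K * ‖y - b‖ ^ 2 / m :=
          div_le_div₀ (by positivity) (hnear y hy hlt) hm hmD
      _ = K / m * ‖y - b‖ ^ 2 := by ring
      _ ≤ max (K / m) R⁻¹ * ‖y - b‖ ^ 2 := by
          gcongr
          exact le_max_left _ _
  · calc ⟪b - y, -(‖D‖⁻¹ • D)⟫ ≤ ‖y - b‖ := by
          simpa [hunit, norm_sub_rev] using real_inner_le_norm (b - y) (-(‖D‖⁻¹ • D))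
      _ ≤ R⁻¹ * ‖y - b‖ ^ 2 := by
          rw [le_inv_mul_iff₀ hR, sq]
          gcongr
      _ ≤ max (K / m) R⁻¹ * ‖y - b‖ ^ 2 := by
          gcongr
          exact le_max_right _ _

theorem exists_eventually_hasExteriorBall [CompleteSpace E] {f : E → ℝ} {b₀ : E}
    (hf : ContDiffAt ℝ 2 f b₀) (hne : fderiv ℝ f b₀ ≠ 0)
    (hneg : ∀ᶠ y in 𝓝 b₀, y ∈ Ω → f y ≤ 0) :
    ∃ κ, ∀ᶠ b in 𝓝 b₀, f b = 0 → ∃ e, HasExteriorBall Ω κ b e := by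
  obtain ⟨K, hK⟩ := exists_abs_sub_fderiv_le hf
  obtain ⟨R₀, hR₀, hball⟩ := Metric.mem_nhds_iff.1 hneg
  obtain ⟨R, htaylor, hR, hRR₀⟩ := (hK.and (Ioc_mem_nhdsGT hR₀)).exists
  obtain ⟨m, hm, hmf⟩ := exists_between (norm_pos_iff.2 hne)
  have hcont : ContinuousAt (fderiv ℝ f) b₀ :=
    (hf.fderiv_right (m := 1) (by norm_num)).continuousAt
  refine ⟨max (|K| / m) (R / 2)⁻¹, ?_⟩
  filter_upwards [ball_mem_nhds b₀ (half_pos hR), hcont.norm.eventually_const_lt hmf]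
    with b hb hmb hfb
  set D := (InnerProductSpace.toDual ℝ E).symm (fderiv ℝ f b)
  have hD : ‖D‖ = ‖fderiv ℝ f b‖ := LinearIsometryEquiv.norm_map _ _
  refine ⟨_, .of_inner_le (D := D) hm (hmb.le.trans_eq hD.symm) (abs_nonneg K) (half_pos hR)
    fun y hy hyb => ?_⟩
  have hyR : y ∈ ball b₀ R := by
    rw [mem_ball_iff_norm] at hb ⊢
    linarith [norm_sub_le_norm_sub_add_norm_sub y b b₀]
  have h := (abs_le.1 (htaylor b (ball_subset_ball (half_le_self hR.le) hb) y hyR)).1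
  have hfy : f y ≤ 0 := hball (ball_subset_ball hRR₀ hyR) hy
  rw [InnerProductSpace.toDual_symm_apply]
  nlinarith [le_abs_self K, sq_nonneg ‖y - b‖]

theorem IsC2Boundary.exists_hasExteriorBall {n : ℕ} {Ω : Set (EuclideanSpace ℝ (Fin n))}
    (h : IsC2Boundary Ω) (hb : Bornology.IsBounded Ω) :
    ∃ κ, ∀ b ∈ frontier Ω, ∃ e, HasExteriorBall Ω κ b e := by
  have hcompact : IsCompact (frontier Ω) := isCompact_of_isClosed_isBounded isClosed_frontier
    (hb.closure.subset frontier_subset_closure)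
  refine hcompact.induction_on (p := fun s => ∃ κ, ∀ b ∈ s, ∃ e, HasExteriorBall Ω κ b e)
    ⟨0, fun b hb => hb.elim⟩ (fun s t hst ⟨κ, hκ⟩ => ⟨κ, fun b hb => hκ b (hst hb)⟩) ?_ ?_
  · rintro s t ⟨κ, hκ⟩ ⟨κ', hκ'⟩
    refine ⟨max κ κ', fun b hb => hb.elim (fun hs => ?_) fun ht => ?_⟩
    · exact (hκ b hs).imp fun e he => he.mono (le_max_left _ _)
    · exact (hκ' b ht).imp fun e he => he.mono (le_max_right _ _)
  · intro b₀ hb₀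
    obtain ⟨f, U, hU, hf, hne, hΩ, hfr⟩ := h b₀ hb₀
    obtain ⟨κ, hκ⟩ := exists_eventually_hasExteriorBall (Ω := Ω) (hf.contDiffAt hU)
      (hne b₀ (mem_of_mem_nhds hU)) (mem_of_superset hU fun y hyU hy =>
        (hΩ.subset ⟨hyU, hy⟩).2.le)
    refine ⟨_, ?_, κ, fun b hb => hb⟩
    filter_upwards [nhdsWithin_le_nhds hκ, nhdsWithin_le_nhds hU, self_mem_nhdsWithin]
      with b hb hbU hbfr
    exact hb (hfr.subset ⟨hbU, hbfr⟩).2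

theorem sub_le_boundaryDist_of_boundaryDist_add_smul {R s : ℝ} (hν : ‖ν₀‖ = 1) (hsR : s < R)
    (hR : δ[Ω] (b + R • ν₀) = R) (y : E) :
    s + ⟪y - (b + s • ν₀), ν₀⟫ - ‖y - (b + s • ν₀)‖ ^ 2 / (2 * (R - s)) ≤ δ[Ω] y := by
  have htri := boundaryDist_le_add_norm_sub Ω (b + R • ν₀) y
  have hball := norm_add_smul_le (w := -(y - (b + s • ν₀))) (sub_pos.2 hsR) hν
  rw [show -(y - (b + s • ν₀)) + (R - s) • ν₀ = b + R • ν₀ - y by module, inner_neg_left,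
    norm_neg] at hball
  linarith

section Collar

variable [FiniteDimensional ℝ E] {ν : E → E} {δ₀ s : ℝ}

theorem HasExteriorBall.eq_of_boundaryDist_add_smul (h : HasExteriorBall Ω κ b e)
    (hν : ‖ν₀‖ = 1) (hs : 0 < s) (hmem : b + s • ν₀ ∈ Ω) (hdist : δ[Ω] (b + s • ν₀) = s) :
    ν₀ = e := by
  refine h.eq_of_ball_subset hs hν fun z hz => ?_
  by_contra hzΩ
  exact (mem_ball_iff_norm.1 hz).not_ge
    (hdist.symm.le.trans (boundaryDist_le_norm_sub_of_notMem hmem hzΩ))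

theorem HasExteriorBall.boundaryDist_le (h : HasExteriorBall Ω κ b e) (hκ : 0 < κ) {y : E}
    (hy : y ∈ Ω) : δ[Ω] y ≤ ‖y - b + (2 * κ)⁻¹ • e‖ - (2 * κ)⁻¹ := by
  set ρ := (2 * κ)⁻¹
  have hκρ : 2 * κ * ρ = 1 := mul_inv_cancel₀ (by positivity)
  have hρ : 0 < ρ := by positivity
  have hout : ∀ z ∈ Ω, ρ ≤ ‖z - b + ρ • e‖ := fun z hz => by
    refine le_of_sq_le_sq ?_ (norm_nonneg _)
    rw [norm_add_sq_real, inner_smul_right, norm_smul, h.norm_eq_one, Real.norm_of_nonneg hρ.le]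
    have hle := h.inner_sub_le z hz
    rw [← neg_sub, inner_neg_left] at hle
    nlinarith
  set c := y - b + ρ • e
  have hc : 0 < ‖c‖ := hρ.trans_le (hout y hy)
  by_contra! hlt
  obtain ⟨s, hs, hsρ⟩ := exists_between (max_lt hρ (by linarith : ‖c‖ - δ[Ω] y < ρ))
  obtain ⟨hs0, hcs⟩ := max_lt_iff.1 hs
  have hsc : s < ‖c‖ := hsρ.trans_le (hout y hy)
  set z := y + (s / ‖c‖ - 1) • c
  have hz : z ∉ Ω := fun hz => by
    have hzc : ‖z - b + ρ • e‖ = s := by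
      rw [show z - b + ρ • e = (s / ‖c‖) • c by module, norm_smul,
        Real.norm_of_nonneg (by positivity), div_mul_cancel₀ _ hc.ne']
    linarith [hout z hz]
  have hzy : ‖z - y‖ = ‖c‖ - s := by
    rw [add_sub_cancel_left, norm_smul, Real.norm_of_nonpos (by
      rw [sub_nonpos, div_le_one hc]
      exact hsc.le)]
    field_simp
    ring
  linarith [boundaryDist_le_norm_sub_of_notMem hy hz]

theorem HasExteriorBall.boundaryDist_le_add_inner (h : HasExteriorBall Ω κ b e) (hκ : 0 < κ)
    (hs : 0 < s) {y : E} (hy : y ∈ closure Ω) :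
    δ[Ω] y ≤ s + ⟪y - (b + s • e), e⟫ + κ * ‖y - (b + s • e)‖ ^ 2 := by
  set ρ := (2 * κ)⁻¹
  have hκρ : (2 * ρ)⁻¹ = κ := by
    simp only [ρ]
    field_simp
  have hρ : 0 < ρ := by positivity
  have hle : δ[Ω] y ≤ ‖y - b + ρ • e‖ - ρ :=
    le_on_closure (fun z hz => h.boundaryDist_le hκ hz) (continuous_boundaryDist Ω).continuousOn
      (by fun_prop) hy
  have hball := norm_add_smul_le (w := y - (b + s • e)) (add_pos hs hρ) h.norm_eq_one
  rw [show y - (b + s • e) + (s + ρ) • e = y - b + ρ • e by module] at hball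
  have hquad : ‖y - (b + s • e)‖ ^ 2 / (2 * (s + ρ)) ≤ κ * ‖y - (b + s • e)‖ ^ 2 := by
    rw [← hκρ, inv_mul_eq_div]
    gcongr
    linarith
  linarith

theorem exists_eq_add_smul_of_hasExteriorBall (hΩo : IsOpen Ω) (hne : (frontier Ω).Nonempty)
    (hball : ∀ b ∈ frontier Ω, HasExteriorBall Ω κ b (ν b)) {x : E} (hx : x ∈ Ω) :
    ∃ b ∈ frontier Ω, x = b + δ[Ω] x • ν b := by
  have hδ := boundaryDist_pos hΩo hne hx
  obtain ⟨b, hb, hxb⟩ := isClosed_frontier.exists_infDist_eq_dist hne x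
  have hnorm : ‖x - b‖ = δ[Ω] x := by rw [← dist_eq_norm, ← hxb, boundaryDist]
  have hunit : ‖(δ[Ω] x)⁻¹ • (x - b)‖ = 1 := by
    rw [norm_smul, hnorm, norm_inv, Real.norm_of_nonneg hδ.le, inv_mul_cancel₀ hδ.ne']
  have hx_eq : b + δ[Ω] x • (δ[Ω] x)⁻¹ • (x - b) = x := by
    rw [smul_inv_smul₀ hδ.ne', add_sub_cancel]
  refine ⟨b, hb, ?_⟩
  rw [← (hball b hb).eq_of_boundaryDist_add_smul hunit hδ (by rwa [hx_eq]) (by rw [hx_eq]), hx_eq]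

theorem HasExteriorBall.isCollar (hΩo : IsOpen Ω) (hΩb : Bornology.IsBounded Ω)
    (hne : (frontier Ω).Nonempty) (hδ₀ : 0 < δ₀)
    (hext : ∀ b ∈ frontier Ω, ∃ e, HasExteriorBall Ω κ b e) (hν : ∀ b ∈ frontier Ω, ‖ν b‖ = 1)
    (hray : ∀ b ∈ frontier Ω, ∀ s ∈ Ioo 0 δ₀, b + s • ν b ∈ Ω ∧ δ[Ω] (b + s • ν b) = s) :
    IsCollar Ω ν (max κ (4 / δ₀)) := by
  have hκ : 0 < max κ (4 / δ₀) := lt_max_of_lt_right (by positivity)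
  have hwidth : (max κ (4 / δ₀))⁻¹ ≤ δ₀ / 4 := by
    rw [inv_le_comm₀ hκ (by positivity), inv_div]
    exact le_max_right _ _
  have hball : ∀ b ∈ frontier Ω, HasExteriorBall Ω (max κ (4 / δ₀)) b (ν b) := fun b hb => by
    obtain ⟨e, he⟩ := hext b hb
    obtain ⟨hmem, hdist⟩ := hray b hb (δ₀ / 2) ⟨half_pos hδ₀, half_lt_self hδ₀⟩
    rw [he.eq_of_boundaryDist_add_smul (hν b hb) (half_pos hδ₀) hmem hdist]
    exact he.mono (le_max_left _ _)
  have hsub : ∀ s ∈ Ioo 0 (max κ (4 / δ₀))⁻¹, s ∈ Ioo 0 δ₀ := fun s hs =>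
    ⟨hs.1, by linarith [hs.2]⟩
  refine
  { isOpen := hΩo
    isCompact_closure := hΩb.isCompact_closure
    frontier_nonempty := hne
    curvature_pos := hκ
    norm_normal := hν
    add_smul_mem := fun b hb s hs => (hray b hb s (hsub s hs)).1
    boundaryDist_add_smul := fun b hb s hs => (hray b hb s (hsub s hs)).2
    exists_eq_add_smul := fun x hx _ => exists_eq_add_smul_of_hasExteriorBall hΩo hne hball hx
    abs_sub_affine_le := fun b hb s hs y hy => abs_sub_le_iff.2 ⟨?_, ?_⟩ }
  · linarith [(hball b hb).boundaryDist_le_add_inner hκ hs.1 hy]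
  · have hlow := sub_le_boundaryDist_of_boundaryDist_add_smul (hν b hb)
      (by linarith [hs.2] : s < δ₀ / 2) (hray b hb _ ⟨half_pos hδ₀, half_lt_self hδ₀⟩).2 y
    have hquad : ‖y - (b + s • ν b)‖ ^ 2 / (2 * (δ₀ / 2 - s)) ≤
        max κ (4 / δ₀) * ‖y - (b + s • ν b)‖ ^ 2 := by
      rw [div_eq_inv_mul]
      gcongr
      rw [inv_le_comm₀ (by linarith [hs.2]) hκ]
      linarith [hs.2]
    linarith

end Collar

end SmoothBoundary

section ClassicalSolutions

open Topology

theorem isGBUExponent_one_div {p : ℝ} (hp : 2 < p) : IsGBUExponent p (1 / (p - 1)) where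
  pos := one_div_pos.2 (by linarith)
  lt_one := (div_lt_one (by linarith)).2 (by linarith)
  mul_sub_one := div_mul_cancel₀ _ (by linarith)

theorem IsC2Boundary.exists_isCollar {n : ℕ} {Ω : Set (EuclideanSpace ℝ (Fin n))}
    (h : IsC2Boundary Ω) (hΩo : IsOpen Ω) (hΩb : Bornology.IsBounded Ω)
    (hne : (frontier Ω).Nonempty) {δ₀ : ℝ} (hδ₀ : 0 < δ₀)
    {ν : EuclideanSpace ℝ (Fin n) → EuclideanSpace ℝ (Fin n)}
    (hν : ∀ b ∈ frontier Ω, ‖ν b‖ = 1 ∧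
      ∀ s ∈ Ioo 0 δ₀, b + s • ν b ∈ Ω ∧ δ[Ω] (b + s • ν b) = s) :
    ∃ κ, IsCollar Ω ν κ := by
  obtain ⟨κ, hκ⟩ := h.exists_hasExteriorBall hΩb
  exact ⟨_, HasExteriorBall.isCollar hΩo hΩb hne hδ₀ hκ (fun b hb => (hν b hb).1)
    fun b hb => (hν b hb).2⟩

theorem trace_eq_sum_inner_single {n : ℕ}
    (A : EuclideanSpace ℝ (Fin n) →L[ℝ] EuclideanSpace ℝ (Fin n)) :
    LinearMap.trace ℝ _ A.toLinearMap = ∑ i : Fin n,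
      ⟪A (EuclideanSpace.single i (1 : ℝ)), EuclideanSpace.single i (1 : ℝ)⟫ := by
  simp [LinearMap.trace_eq_sum_inner _ (EuclideanSpace.basisFun (Fin n) ℝ), real_inner_comm]

variable {E : Type*} [NormedAddCommGroup E] {Ω : Set E} {T : ℝ} {G : E → ℝ → E} {a : E}

theorem isGBUPoint_of_forall_exists (ha : a ∈ frontier Ω)
    (h : ∀ K, ∀ η > 0, ∃ x ∈ Ω, ∃ t ∈ Ioo (T - η) T, dist x a < η ∧ K ≤ ‖G x t‖) :
    IsGBUPoint Ω G T a := by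
  refine ⟨ha, fun K => ?_⟩
  refine (nhdsWithin_basis_ball.prod (nhdsLT_basis T)).frequently_iff.2 ?_
  rintro ⟨η, t₁⟩ ⟨hη, ht₁⟩
  obtain ⟨x, hx, t, ht, hxa, hK⟩ := h K (min η (T - t₁)) (lt_min hη (sub_pos.2 ht₁))
  have hηt := min_le_right η (T - t₁)
  exact ⟨(x, t), ⟨⟨hxa.trans_le (min_le_left _ _), hx⟩, by linarith [ht.1], ht.2⟩, hK⟩

variable [InnerProductSpace ℝ E] {ν : E → E} {κ p β M C t₀ : ℝ} {u : E → ℝ → ℝ}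
  {H : E → ℝ → E →L[ℝ] E} {ν₀ : E}

theorem IsCollar.exists_mul_rpow_neg_add_one_le (hΩ : IsCollar Ω ν κ) (hβ : 0 ≤ β) (C₀ : ℝ) :
    ∃ C > 0, ∀ x ∈ Ω, C₀ * (δ[Ω] x ^ (-β) + 1) ≤ C * δ[Ω] x ^ (-β) := by
  obtain ⟨D, hD⟩ := hΩ.isCompact_closure.exists_bound_of_continuousOn
    (continuous_boundaryDist Ω).continuousOn
  refine ⟨(|C₀| + 1) * (1 + |D| ^ β), by positivity, fun x hx => ?_⟩
  have hδ := hΩ.pos hx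
  have hδD : δ[Ω] x ≤ |D| :=
    (le_abs_self _).trans ((hD x (subset_closure hx)).trans (le_abs_self D))
  have hone : 1 ≤ |D| ^ β * δ[Ω] x ^ (-β) := by
    rw [Real.rpow_neg hδ.le, ← div_eq_mul_inv, ← Real.div_rpow (abs_nonneg D) hδ.le]
    exact Real.one_le_rpow ((one_le_div hδ).2 hδD) hβ
  calc C₀ * (δ[Ω] x ^ (-β) + 1) ≤ (|C₀| + 1) * (δ[Ω] x ^ (-β) + |D| ^ β * δ[Ω] x ^ (-β)) := by
        gcongr
        linarith [le_abs_self C₀]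
    _ = (|C₀| + 1) * (1 + |D| ^ β) * δ[Ω] x ^ (-β) := by ring

theorem eventually_sub_le_rpow_mul_abs_inner {g : ℝ → E} {d ε : ℝ} (hν : ‖ν₀‖ = 1)
    (hg : Tendsto (fun r : ℝ => r ^ β • g r) (𝓝[>] 0) (𝓝 (d • ν₀))) (hε : 0 < ε) :
    ∀ᶠ r in 𝓝[>] (0 : ℝ), d - ε ≤ r ^ β * |⟪g r, ν₀⟫| := by
  have hlim : Tendsto (fun r : ℝ => r ^ β * ⟪g r, ν₀⟫) (𝓝[>] 0) (𝓝 d) := by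
    simpa [inner_smul_left, hν] using hg.inner (𝕜 := ℝ) (tendsto_const_nhds (x := ν₀))
  filter_upwards [hlim.eventually_const_le (sub_lt_self d hε), self_mem_nhdsWithin] with r hr hr0
  exact hr.trans (mul_le_mul_of_nonneg_left (le_abs_self _) (Real.rpow_nonneg (mem_Ioi.1 hr0).le β))

theorem eq_of_forall_dist_eq_boundaryDist {r : ℝ} {q : E} (ha : a ∈ frontier Ω) (hν : ‖ν₀‖ = 1)
    (hr : 0 ≤ r) (hdist : δ[Ω] (a + r • ν₀) = r)
    (hunique : ∀ b ∈ frontier Ω, dist (a + r • ν₀) b = δ[Ω] (a + r • ν₀) → b = q) : a = q := by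
  refine hunique a ha ?_
  rw [hdist, dist_self_add_left, norm_smul, hν, Real.norm_of_nonneg hr, mul_one]

variable [FiniteDimensional ℝ E]

theorem hasLaplacianAt_trace {w : E → ℝ} {g : E → E} {A : E →L[ℝ] E} {x : E}
    (hg : ∀ᶠ y in 𝓝 x, HasGradientAt w (g y) y) (hA : HasFDerivAt g A x) :
    HasLaplacianAt w (g x) (LinearMap.trace ℝ E A) x :=
  ⟨g, A, hg, hA, rfl, rfl⟩

theorem isQuasiStationaryUpTo_of_solution (hΩ : IsCollar Ω ν κ) (ht₀ : t₀ ∈ Ioo 0 T)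
    (hu : ContinuousOn (fun q : E × ℝ => u q.1 q.2) (closure Ω ×ˢ Icc 0 T))
    (hu_zero : ∀ b ∈ frontier Ω, ∀ t ∈ Icc 0 T, u b t = 0)
    (hG_closure : ContinuousOn (fun q : E × ℝ => G q.1 q.2) (closure Ω ×ˢ Ico 0 T))
    (hG_interior : ContinuousOn (fun q : E × ℝ => G q.1 q.2) (Ω ×ˢ Ioc 0 T))
    (hG : ∀ t ∈ Ioc 0 T, ∀ x ∈ Ω, HasGradientAt (fun y => u y t) (G x t) x)
    (hH : ∀ t ∈ Ioc 0 T, ∀ x ∈ Ω, HasFDerivAt (fun y => G y t) (H x t) x)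
    (hres : ∀ x ∈ Ω, ∀ t ∈ Icc t₀ T, |LinearMap.trace ℝ E (H x t) + ‖G x t‖ ^ p| ≤ M)
    (hbound : ∀ x ∈ Ω, ∀ t ∈ Ico 0 T, ‖G x t‖ ≤ C * δ[Ω] x ^ (-β)) :
    IsQuasiStationaryUpTo Ω p β M C T u G (fun x t => LinearMap.trace ℝ E (H x t)) := by
  have hT : 0 < T := ht₀.1.trans ht₀.2
  have hnear : ∀ᶠ t in 𝓝[<] T, t ∈ Ico t₀ T := Ico_mem_nhdsLT ht₀.2
  have hIoc : Icc t₀ T ⊆ Ioc 0 T := fun t ht => ⟨ht₀.1.trans_le ht.1, ht.2⟩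
  have hIco : Ico t₀ T ⊆ Ico 0 T := Ico_subset_Ico_left ht₀.1.le
  have hslice : ∀ t ∈ Icc t₀ T, (∀ x ∈ Ω, ‖G x t‖ ≤ C * δ[Ω] x ^ (-β)) →
      IsQuasiStationary Ω p β M C (fun x => u x t) (fun x => G x t)
        (fun x => LinearMap.trace ℝ E (H x t)) := fun t ht hCt =>
    { continuousOn := hu.comp (f := fun x => (x, t)) (by fun_prop) fun x hx =>
        ⟨hx, Ioc_subset_Icc_self (hIoc ht)⟩
      eq_zero := fun b hb => hu_zero b hb t (Ioc_subset_Icc_self (hIoc ht))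
      hasLaplacianAt := fun x hx => hasLaplacianAt_trace
        (mem_of_superset (hΩ.isOpen.mem_nhds hx) (hG t (hIoc ht))) (hH t (hIoc ht) x hx)
      abs_residual_le := fun x hx => hres x hx t ht
      norm_gradient_le := hCt }
  have hG_final : ∀ x ∈ Ω, Tendsto (G x) (𝓝[<] T) (𝓝 (G x T)) := fun x hx =>
    ((hG_interior.comp (f := fun t => (x, t)) (by fun_prop) fun t ht => ⟨hx, ht⟩) T
      (right_mem_Ioc.2 hT)).mono_left (nhdsWithin_le_of_mem (Ioc_mem_nhdsLT hT))
  refine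
  { eventually_slice := hnear.mono fun t ht =>
      hslice t (Ico_subset_Icc_self ht) fun x hx => hbound x hx t (hIco ht)
    eventually_bounded := hnear.mono fun t ht => ?_
    slice_final := hslice T (right_mem_Icc.2 ht₀.2.le) fun x hx => le_of_tendsto
      (hG_final x hx).norm (hnear.mono fun t ht => hbound x hx t (hIco ht))
    tendsto_final := fun x hx => ?_ }
  · obtain ⟨B, hB⟩ := hΩ.isCompact_closure.exists_bound_of_continuousOn
      (hG_closure.comp (f := fun x => (x, t)) (by fun_prop) fun x hx => ⟨hx, hIco ht⟩)
    exact ⟨B, fun x hx => hB x (subset_closure hx)⟩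
  · exact ((hu.comp (f := fun t => (x, t)) (by fun_prop) fun t ht => ⟨subset_closure hx, ht⟩) T
      (right_mem_Icc.2 hT.le)).mono_left (nhdsWithin_le_of_mem (Icc_mem_nhdsLT hT))

end ClassicalSolutions
theorem stmt14 {n : ℕ} (hn : 1 ≤ n)
    -- the exponents and constants
    (p β cp dp : ℝ) (hp : 2 < p) (hβ : β = 1 / (p - 1))
    (hcp : cp = β ^ β / (1 - β)) (hdp : dp = β ^ β)
    -- the bounded domain Ω with C² boundary
    (Ω : Set (EuclideanSpace ℝ (Fin n))) (hΩo : IsOpen Ω) (hΩb : Bornology.IsBounded Ω) (hΩc2 : IsC2Boundary Ω)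
    -- the distance to the boundary
    (δ : EuclideanSpace ℝ (Fin n) → ℝ) (hδ : ∀ x, δ x = infDist x (frontier Ω))
    -- δ₀ and the boundary neighborhood Ωδ = {x ∈ Ω : δ(x) < δ₀}
    (δ₀ : ℝ) (hδ₀ : 0 < δ₀)
    (Ωδ : Set (EuclideanSpace ℝ (Fin n))) (hΩδ : Ωδ = {x ∈ Ω | δ x < δ₀})
    -- δ is C² on Ωδ
    (hδC2 : ContDiffOn ℝ 2 δ Ωδ)
    -- every x ∈ Ωδ has a unique nearest boundary point P x
    (P : EuclideanSpace ℝ (Fin n) → EuclideanSpace ℝ (Fin n))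
    (hP : ∀ x ∈ Ωδ, P x ∈ frontier Ω ∧ dist x (P x) = δ x ∧
      ∀ b ∈ frontier Ω, dist x b = δ x → b = P x)
    -- interior sphere condition of radius δ₀ at every boundary point
    (hsph : ∀ b ∈ frontier Ω, ∃ y, ball y δ₀ ⊆ Ω ∧ dist y b = δ₀)
    -- the inward unit normal field ν
    (ν : EuclideanSpace ℝ (Fin n) → EuclideanSpace ℝ (Fin n))
    (hν1 : ∀ b ∈ frontier Ω, ‖ν b‖ = 1 ∧
      ∀ s ∈ Ioo (0 : ℝ) δ₀, b + s • ν b ∈ Ω ∧ δ (b + s • ν b) = s)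
    (hν2 : ∀ x ∈ Ωδ, ν x = ν (P x) ∧ HasGradientAt δ (ν x) x)
    -- the solution u on [0,T], with spatial gradient G, spatial Hessian H and
    -- time derivative u'
    (T : ℝ) (hT : 0 < T)
    (u : EuclideanSpace ℝ (Fin n) → ℝ → ℝ)
    (G : EuclideanSpace ℝ (Fin n) → ℝ → EuclideanSpace ℝ (Fin n))
    (H : EuclideanSpace ℝ (Fin n) → ℝ → (EuclideanSpace ℝ (Fin n) →L[ℝ] EuclideanSpace ℝ (Fin n)))
    (u' : EuclideanSpace ℝ (Fin n) → ℝ → ℝ)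
    -- u is continuous on Ω̄ × [0,T] and vanishes on ∂Ω × [0,T]
    (hu_cont : ContinuousOn (fun q : EuclideanSpace ℝ (Fin n) × ℝ => u q.1 q.2) (closure Ω ×ˢ Icc 0 T))
    (hu_bd : ∀ b ∈ frontier Ω, ∀ t ∈ Icc (0 : ℝ) T, u b t = 0)
    -- u is continuously differentiable in x on Ω̄ × [0,T), with spatial gradient G
    (hG : ∀ t ∈ Ico (0 : ℝ) T, ∀ x ∈ closure Ω,
      HasGradientWithinAt (fun y => u y t) (G x t) (closure Ω) x)
    (hG_cont : ContinuousOn (fun q : EuclideanSpace ℝ (Fin n) × ℝ => G q.1 q.2) (closure Ω ×ˢ Ico 0 T))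
    -- on Ω × (0,T], u has spatial gradient G, spatial Hessian H and time derivative u',
    -- all continuous there
    (hG2 : ∀ t ∈ Ioc (0 : ℝ) T, ∀ x ∈ Ω, HasGradientAt (fun y => u y t) (G x t) x)
    (hH : ∀ t ∈ Ioc (0 : ℝ) T, ∀ x ∈ Ω, HasFDerivAt (fun y => G y t) (H x t) x)
    (hu' : ∀ t ∈ Ioc (0 : ℝ) T, ∀ x ∈ Ω, HasDerivAt (fun s => u x s) (u' x t) t)
    (hreg : ContinuousOn (fun q : EuclideanSpace ℝ (Fin n) × ℝ =>
      (u q.1 q.2, G q.1 q.2, H q.1 q.2, u' q.1 q.2)) (Ω ×ˢ Ioc 0 T))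
    -- the PDE uₜ - Δu = |∇u|^p on Ω × (0,T]
    (hPDE : ∀ t ∈ Ioc (0 : ℝ) T, ∀ x ∈ Ω,
      u' x t - ∑ i : Fin n, ⟪H x t (EuclideanSpace.single i (1 : ℝ)),
        EuclideanSpace.single i (1 : ℝ)⟫ = ‖G x t‖ ^ p)
    -- a priori bounds: |uₜ| ≤ M on Ω × [T/2,T] and the Bernstein estimate
    (M : ℝ) (hM : ∀ x ∈ Ω, ∀ t ∈ Icc (T / 2) T, |u' x t| ≤ M)
    (C₀ : ℝ) (hC₀ : ∀ x ∈ Ω, ∀ t ∈ Ico (0 : ℝ) T, ‖G x t‖ ≤ C₀ * ((δ x) ^ (-β) + 1))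
    -- a ∈ ∂Ω is a gradient blow-up point:
    -- limsup of |∇u(x,t)| as t → T⁻, x → a equals ∞
    (a : EuclideanSpace ℝ (Fin n)) (ha : a ∈ frontier Ω)
    (hGBU : ∀ K : ℝ, ∀ η > 0, ∃ x ∈ Ω, ∃ t ∈ Ioo (T - η) T,
      0 < t ∧ dist x a < η ∧ K ≤ ‖G x t‖)
    :
    ∀ ε > 0, ∀ᶠ r in nhdsWithin (0 : ℝ) (Ioi 0),
      dp - ε ≤ r ^ β * |⟪G (a + r • ν a) T, ν (a + r • ν a)⟫| := by
  obtain rfl : δ = boundaryDist Ω := funext hδ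
  have hexp : IsGBUExponent p β := hβ ▸ isGBUExponent_one_div hp
  obtain ⟨κ, hΩ⟩ := hΩc2.exists_isCollar hΩo hΩb ⟨a, ha⟩ hδ₀ hν1
  obtain ⟨C, hC, hCle⟩ := hΩ.exists_mul_rpow_neg_add_one_le hexp.pos.le C₀
  have hres : ∀ x ∈ Ω, ∀ t ∈ Icc (T / 2) T,
      |LinearMap.trace ℝ _ (H x t).toLinearMap + ‖G x t‖ ^ p| ≤ M := fun x hx t ht => by
    rw [trace_eq_sum_inner_single, ← hPDE t ⟨(half_pos hT).trans_le ht.1, ht.2⟩ x hx,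
      add_sub_cancel]
    exact hM x hx t ht
  have hu := isQuasiStationaryUpTo_of_solution hΩ ⟨half_pos hT, half_lt_self hT⟩ hu_cont hu_bd
    hG_cont hreg.snd.fst hG2 hH hres fun x hx t ht => (hC₀ x hx t ht).trans (hCle x hx)
  have hlim := hu.tendsto_rpow_smul_gradient hexp hΩ hC (isGBUPoint_of_forall_exists ha
    fun K η hη => (hGBU K η hη).imp fun x ⟨hx, t, ht, _, h⟩ => ⟨hx, t, ht, h⟩)
  intro ε hε
  filter_upwards [eventually_sub_le_rpow_mul_abs_inner (hν1 a ha).1 hlim hε,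
    Ioo_mem_nhdsGT hδ₀] with r hr hr0
  obtain ⟨hmem, hdist⟩ := (hν1 a ha).2 r hr0
  have hmem' : a + r • ν a ∈ Ωδ := hΩδ ▸ ⟨hmem, hdist.trans_lt hr0.2⟩
  rwa [(hν2 _ hmem').1, ← eq_of_forall_dist_eq_boundaryDist ha (hν1 a ha).1 hr0.1.le hdist
    (hP _ hmem').2.2, hdp]
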